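/- arXiv:1512.05966 — 4 statements merged into one kernel-verified Lean document; each statement's English description precedes it below -/
import Mathlib

section
/- Let B be a subset of the Cantor space 2^ω which is a countable union of Gδ sets and satisfies λ(B) = 0. Then there exists a martingale f with B = D(f). -/
open MeasureTheory Filter Topology
open scoped ENNReal

/-- The basic cylinder `N_s` determined by a finite binary sequence `s`:
the set of all `β ∈ 2^ω` extending `s`. -/
def cyl (s : List Bool) : Set (ℕ → Bool) :=
  {β | ∀ i : Fin s.length, β i = s.get i}

/-- The initial segment `β↾l` of `β ∈ 2^ω`, as a finite binary sequence. -/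
def seg (β : ℕ → Bool) (l : ℕ) : List Bool := List.ofFn (fun i : Fin l => β i)

/-- A martingale: a `[0,1]`-valued function on finite binary sequences with
`f(s) = (f(s⌢0) + f(s⌢1))/2`. -/
def IsMartingale (f : List Bool → ℝ) : Prop :=
  (∀ s, f s ∈ Set.Icc (0:ℝ) 1) ∧
  ∀ s, f s = (f (s ++ [false]) + f (s ++ [true])) / 2

/-- The oscillation `osc(f,β) = inf_N sup_{p,q ≥ N} |f(β↾p) − f(β↾q)|`. -/
noncomputable def osc (f : List Bool → ℝ) (β : ℕ → Bool) : ℝ :=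
  ⨅ N : ℕ, ⨆ p : {n : ℕ // N ≤ n}, ⨆ q : {n : ℕ // N ≤ n},
    |f (seg β p.1) - f (seg β q.1)|

/-- The set of divergence `D(f) = {β : osc(f,β) > 0}`. -/
def divSet (f : List Bool → ℝ) : Set (ℕ → Bool) := {β | 0 < osc f β}

/-- `M` has density 1 at `β`: `λ(M ∩ N_{β↾l}) / λ(N_{β↾l}) → 1`. -/
def densityOne (μ : Measure (ℕ → Bool)) (M : Set (ℕ → Bool)) (β : ℕ → Bool) : Prop :=
  Tendsto (fun l : ℕ => μ (M ∩ cyl (seg β l)) / μ (cyl (seg β l))) atTop (𝓝 1)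

/-- A set is `Σ⁰₃` iff it is a countable union of `Gδ` sets. -/
def IsSigma03 {X : Type*} [TopologicalSpace X] (S : Set X) : Prop :=
  ∃ g : ℕ → Set X, (∀ n, IsGδ (g n)) ∧ S = ⋃ n, g n

/-- A set is coanalytic (`Π¹₁`) iff its complement is analytic. -/
def IsCoanalytic {X : Type*} [TopologicalSpace X] (S : Set X) : Prop :=
  MeasureTheory.AnalyticSet Sᶜ

/-- The associated (partial) function of a martingale: `ψ(f)(β) = lim_l f(β↾l)`
(a junk value if the limit does not exist). -/
noncomputable def psi (f : List Bool → ℝ) (β : ℕ → Bool) : ℝ :=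
  limUnder atTop (fun l => f (seg β l))


namespace S03

lemma length_seg (β : ℕ → Bool) (l : ℕ) : (seg β l).length = l := by simp [seg]

lemma mem_cyl_seg {β γ : ℕ → Bool} {l : ℕ} : γ ∈ cyl (seg β l) ↔ ∀ i < l, γ i = β i := by
  constructor
  · intro h i hi
    have := h ⟨i, by simpa [seg] using hi⟩
    simpa [seg] using this
  · intro h i
    have hi : i.1 < l := by have := i.2; simpa [seg] using this
    have := h i.1 hi
    rw [this, List.get_eq_getElem]
    simp [seg]

lemma seg_mem (β : ℕ → Bool) (l : ℕ) : β ∈ cyl (seg β l) := mem_cyl_seg.2 fun _ _ => rfl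

lemma seg_eq_of_mem {β : ℕ → Bool} {s : List Bool} (h : β ∈ cyl s) : seg β s.length = s := by
  apply List.ext_getElem
  · simp [seg]
  · intro i h1 h2
    have := h ⟨i, h2⟩
    simpa [seg] using this

lemma seg_congr {β γ : ℕ → Bool} {l : ℕ} (h : γ ∈ cyl (seg β l)) {k : ℕ} (hk : k ≤ l) :
    seg γ k = seg β k := by
  rw [mem_cyl_seg] at h
  apply List.ext_getElem
  · simp [seg]
  · intro i h1 h2
    have hi : i < k := by simpa [seg] using h1
    simpa [seg] using h i (by omega)

lemma cyl_anti (β : ℕ → Bool) {k l : ℕ} (h : k ≤ l) : cyl (seg β l) ⊆ cyl (seg β k) := by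
  intro γ hγ
  rw [mem_cyl_seg] at hγ ⊢
  intro i hi
  exact hγ i (by omega)

lemma exists_seg (s : List Bool) : ∃ β, seg β s.length = s := by
  refine ⟨fun i => s.getD i false, ?_⟩
  apply List.ext_getElem
  · simp [seg]
  · intro i h1 h2
    simp [seg]

lemma isOpen_cyl (s : List Bool) : IsOpen (cyl s) := by
  have : cyl s = ⋂ i : Fin s.length, (fun β : ℕ → Bool => β i) ⁻¹' {s.get i} := by
    ext β; simp [cyl]
  rw [this]
  exact isOpen_iInter_of_finite fun i => (isOpen_discrete _).preimage (continuous_apply _)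

lemma isOpen_of {E : Set (ℕ → Bool)} (h : ∀ β ∈ E, ∃ n, cyl (seg β n) ⊆ E) : IsOpen E := by
  rw [isOpen_iff_mem_nhds]
  intro β hβ
  obtain ⟨n, hn⟩ := h β hβ
  exact Filter.mem_of_superset ((isOpen_cyl _).mem_nhds (seg_mem β n)) hn

lemma exists_cyl {E : Set (ℕ → Bool)} (hE : IsOpen E) {β : ℕ → Bool} (hβ : β ∈ E) :
    ∃ n, cyl (seg β n) ⊆ E := by
  rw [isOpen_pi_iff] at hE
  obtain ⟨I, u, h1, h2⟩ := hE β hβ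
  refine ⟨I.sup id + 1, fun γ hγ => h2 ?_⟩
  rw [mem_cyl_seg] at hγ
  intro i hi
  have : i ≤ I.sup id := Finset.le_sup (f := id) hi
  rw [hγ i (by omega)]
  exact (h1 i hi).2

lemma meas_of_open {E : Set (ℕ → Bool)} (h : IsOpen E) : MeasurableSet E := h.measurableSet

lemma cyl_split (s : List Bool) : cyl s = cyl (s ++ [false]) ∪ cyl (s ++ [true]) := by
  obtain ⟨β, hβ⟩ := exists_seg s
  have key : ∀ b, ∀ γ, γ ∈ cyl (s ++ [b]) ↔ γ ∈ cyl s ∧ γ s.length = b := by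
    intro b γ
    constructor
    · intro h
      constructor
      · intro i
        have := h ⟨i.1, by simp⟩
        simpa using this
      · have := h ⟨s.length, by simp⟩
        simpa using this
    · rintro ⟨h1, h2⟩ ⟨i, hi⟩
      simp at hi
      rcases Nat.lt_or_ge i s.length with h | h
      · have := h1 ⟨i, h⟩
        simpa [List.getElem_append, h] using this
      · have : i = s.length := by omega
        subst this
        simpa using h2
  ext γ
  simp only [Set.mem_union, key]
  cases γ s.length <;> simp

lemma cyl_disj (s : List Bool) : Disjoint (cyl (s ++ [false])) (cyl (s ++ [true])) := by
  rw [Set.disjoint_left]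
  intro γ h1 h2
  have a := h1 ⟨s.length, by simp⟩
  have b := h2 ⟨s.length, by simp⟩
  simp at a b
  rw [a] at b
  exact absurd b (by simp)

/-- The coin-flipping property. -/
def Coin (μ : Measure (ℕ → Bool)) : Prop :=
  ∀ s : List Bool, μ (cyl s) = (1/2 : ℝ≥0∞) ^ s.length

/-- relative measure -/
noncomputable def rel (μ : Measure (ℕ → Bool)) (A : Set (ℕ → Bool)) (s : List Bool) : ℝ :=
  μ.real (A ∩ cyl s) * 2 ^ s.length

lemma Coin.fin {μ : Measure (ℕ → Bool)} (hμ : Coin μ) : IsFiniteMeasure μ := by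
  constructor
  have : (Set.univ : Set (ℕ → Bool)) = cyl [] := by ext β; simp [cyl]
  rw [this, hμ]; simp

lemma Coin.real {μ : Measure (ℕ → Bool)} (hμ : Coin μ) (s : List Bool) :
    μ.real (cyl s) * 2 ^ s.length = 1 := by
  rw [Measure.real, hμ]
  simp

section
variable {μ : Measure (ℕ → Bool)}

lemma rel_nonneg (A : Set (ℕ → Bool)) (s : List Bool) : 0 ≤ rel μ A s := by
  unfold rel; positivity

lemma rel_mono (hμ : Coin μ) {A B : Set (ℕ → Bool)} {s : List Bool} (h : A ∩ cyl s ⊆ B) :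
    rel μ A s ≤ rel μ B s := by
  have := hμ.fin
  unfold rel
  exact mul_le_mul_of_nonneg_right
    (measureReal_mono (Set.subset_inter h Set.inter_subset_right)) (by positivity)

lemma rel_le_one (hμ : Coin μ) (A : Set (ℕ → Bool)) (s : List Bool) : rel μ A s ≤ 1 := by
  have := hμ.fin
  rw [← hμ.real s]
  unfold rel
  exact mul_le_mul_of_nonneg_right (measureReal_mono Set.inter_subset_right) (by positivity)

lemma rel_eq_one (hμ : Coin μ) {A : Set (ℕ → Bool)} {s : List Bool} (h : cyl s ⊆ A) :
    rel μ A s = 1 := by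
  rw [← hμ.real s, rel, Set.inter_eq_right.2 h]

lemma rel_mart (hμ : Coin μ) {A : Set (ℕ → Bool)} (_hA : MeasurableSet A) (s : List Bool) :
    rel μ A s = (rel μ A (s ++ [false]) + rel μ A (s ++ [true])) / 2 := by
  have := hμ.fin
  have : μ.real (A ∩ cyl s) = μ.real (A ∩ cyl (s ++ [false])) + μ.real (A ∩ cyl (s ++ [true])) := by
    rw [cyl_split, Set.inter_union_distrib_left, measureReal_union]
    · exact (cyl_disj s).mono Set.inter_subset_right Set.inter_subset_right
    · exact _hA.inter (isOpen_cyl _).measurableSet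
  unfold rel
  rw [this]
  simp [pow_succ]
  ring

/-- Maximal inequality. -/
lemma maximal (R : Set (ℕ → Bool)) (hR : MeasurableSet R) (c : ℝ≥0∞) :
    μ {β | ∃ l, μ (cyl (seg β l)) < c * μ (R ∩ cyl (seg β l))} ≤ c * μ R := by
  classical
  set P : List Bool → Prop := fun s => μ (cyl s) < c * μ (R ∩ cyl s) with hP
  let S : Set (List Bool) := {s | P s ∧ ∀ k < s.length, ¬ P (s.take k)}
  have htake : ∀ β : ℕ → Bool, ∀ k l, k ≤ l → (seg β l).take k = seg β k := by
    intro β k l h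
    apply List.ext_getElem
    · simp [seg, h]
    · intro i h1 h2
      simp [seg]
  have hsub : {β | ∃ l, P (seg β l)} ⊆ ⋃ s ∈ S, cyl s := by
    intro β hβ
    have hβ' : ∃ l, P (seg β l) := hβ
    simp only [Set.mem_iUnion]
    refine ⟨seg β (Nat.find hβ'), ⟨Nat.find_spec hβ', ?_⟩, seg_mem _ _⟩
    intro k hk
    rw [length_seg] at hk
    rw [htake _ _ _ hk.le]
    exact Nat.find_min hβ' hk
  have hd : S.PairwiseDisjoint cyl := by
    have key : ∀ s ∈ S, ∀ t ∈ S, ∀ β, β ∈ cyl s → β ∈ cyl t → ¬ s.length < t.length := by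
      intro s hs t ht β h1 h2 hlt
      apply ht.2 _ hlt
      rw [← seg_eq_of_mem h2, htake _ _ _ hlt.le, seg_eq_of_mem h1]
      exact hs.1
    intro s hs t ht hne
    rw [Function.onFun, Set.disjoint_left]
    intro β h1 h2
    have a := key s hs t ht β h1 h2
    have b := key t ht s hs β h2 h1
    apply hne
    rw [← seg_eq_of_mem h1, ← seg_eq_of_mem h2]
    congr 1; omega
  have hc : S.Countable := Set.to_countable _
  calc μ {β | ∃ l, P (seg β l)} ≤ μ (⋃ s ∈ S, cyl s) := measure_mono hsub
    _ = ∑' s : S, μ (cyl s) := measure_biUnion hc hd fun s _ => (isOpen_cyl s).measurableSet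
    _ ≤ ∑' s : S, c * μ (R ∩ cyl s) := ENNReal.tsum_le_tsum fun s => s.2.1.le
    _ = c * ∑' s : S, μ (R ∩ cyl s) := ENNReal.tsum_mul_left
    _ = c * μ (⋃ s ∈ S, R ∩ cyl s) := by
        rw [measure_biUnion hc]
        · intro s hs t ht hne
          exact (hd hs ht hne).mono Set.inter_subset_right Set.inter_subset_right
        · exact fun s _ => hR.inter (isOpen_cyl s).measurableSet
    _ ≤ c * μ R := by
        gcongr
        simp

/-- `A` has density zero off `C`. -/
def Dz (μ : Measure (ℕ → Bool)) (A C : Set (ℕ → Bool)) : Prop :=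
  ∀ β, β ∉ C → Tendsto (fun l => rel μ A (seg β l)) atTop (𝓝 0)

lemma rel_le_of (hμ : Coin μ) {R : Set (ℕ → Bool)} {s : List Bool} {j : ℕ}
    (h : ¬ μ (cyl s) < 2 ^ j * μ (R ∩ cyl s)) : rel μ R s ≤ (1/2) ^ j := by
  have := hμ.fin
  rw [not_lt] at h
  have h2 := ENNReal.toReal_mono (measure_ne_top μ _) h
  rw [ENNReal.toReal_mul] at h2
  simp only [ENNReal.toReal_pow, ENNReal.toReal_ofNat] at h2
  have h3 := hμ.real s
  unfold rel
  change 2 ^ j * μ.real (R ∩ cyl s) ≤ μ.real (cyl s) at h2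
  rw [one_div, inv_pow, ← one_div, le_div_iff₀ (by positivity), ← h3]
  have : (0:ℝ) < 2 ^ s.length := by positivity
  nlinarith

lemma fatten (hμ : Coin μ) {A : Set (ℕ → Bool)} (hA : IsOpen A) {ε : ℝ≥0∞} (hε : ε ≠ 0) :
    ∃ C, IsOpen C ∧ A ⊆ C ∧ μ (C \ A) ≤ ε ∧ Dz μ A C := by
  have := hμ.fin
  let K : ℕ → Set (ℕ → Bool) := fun n => {β | cyl (seg β n) ⊆ A}
  have hKo : ∀ n, IsOpen (K n) := by
    intro n
    apply isOpen_of
    intro β hβ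
    refine ⟨n, fun γ hγ => ?_⟩
    change cyl (seg γ n) ⊆ A
    rw [seg_congr hγ le_rfl]; exact hβ
  have hKm : Monotone K := fun k l h β hβ => (cyl_anti β h).trans hβ
  have hKA : (⋂ n, A \ K n) = ∅ := by
    rw [Set.eq_empty_iff_forall_notMem]
    intro β hβ
    rw [Set.mem_iInter] at hβ
    obtain ⟨n, hn⟩ := exists_cyl hA (hβ 0).1
    exact (hβ n).2 hn
  have ht : Tendsto (fun n => μ (A \ K n)) atTop (𝓝 0) := by
    have := tendsto_measure_iInter_atTop (μ := μ) (s := fun n => A \ K n)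
      (fun n => (hA.measurableSet.diff (hKo n).measurableSet).nullMeasurableSet)
      (fun a b h => Set.sdiff_subset_sdiff_right (hKm h)) ⟨0, measure_ne_top _ _⟩
    rwa [hKA, measure_empty] at this
  obtain ⟨ε', hε', hsum⟩ := ENNReal.exists_pos_sum_of_countable' hε ℕ
  have hex : ∀ j, ∃ n, 2 ^ j * μ (A \ K n) ≤ ε' j := by
    intro j
    have hpos : 0 < ε' j / 2 ^ j := ENNReal.div_pos (hε' j).ne' (by simp)
    obtain ⟨n, hn⟩ := (ht.eventually (gt_mem_nhds hpos)).exists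
    refine ⟨n, ?_⟩
    have := ENNReal.mul_le_of_le_div hn.le
    rwa [mul_comm]
  choose N hN using hex
  let C : ℕ → Set (ℕ → Bool) := fun j =>
    {β | ∃ l, μ (cyl (seg β l)) < 2 ^ j * μ ((A \ K (N j)) ∩ cyl (seg β l))}
  refine ⟨A ∪ ⋃ j, C j, ?_, Set.subset_union_left, ?_, ?_⟩
  · refine hA.union (isOpen_iUnion fun j => isOpen_of ?_)
    rintro β ⟨l, hl⟩
    refine ⟨l, fun γ hγ => ⟨l, ?_⟩⟩
    rw [seg_congr hγ le_rfl]; exact hl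
  · calc μ ((A ∪ ⋃ j, C j) \ A) ≤ μ (⋃ j, C j) := measure_mono (by
          rintro x ⟨h | h, h'⟩
          · exact absurd h h'
          · exact h)
      _ ≤ ∑' j, μ (C j) := measure_iUnion_le _
      _ ≤ ∑' j, ε' j := ENNReal.tsum_le_tsum fun j =>
          (maximal _ (hA.measurableSet.diff (hKo _).measurableSet) _).trans (hN j)
      _ ≤ ε := hsum.le
  · intro β hβ
    rw [Set.mem_union, not_or, Set.mem_iUnion, not_exists] at hβ
    rw [Metric.tendsto_atTop]
    intro δ hδ
    obtain ⟨j, hj⟩ := exists_pow_lt_of_lt_one hδ (by norm_num : (1/2:ℝ) < 1)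
    refine ⟨N j, fun l hl => ?_⟩
    rw [Real.dist_eq, sub_zero, abs_of_nonneg (rel_nonneg _ _)]
    refine lt_of_le_of_lt ?_ hj
    have h1 : ¬ μ (cyl (seg β l)) < 2 ^ j * μ ((A \ K (N j)) ∩ cyl (seg β l)) :=
      fun h => hβ.2 j ⟨l, h⟩
    refine le_trans (rel_mono hμ ?_) (rel_le_of hμ h1)
    rintro γ ⟨h2, h3⟩
    refine ⟨h2, fun h4 => hβ.1 ?_⟩
    change cyl (seg γ (N j)) ⊆ A at h4
    rw [seg_congr h3 hl] at h4
    exact h4 (seg_mem _ _)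

/-- points whose first cylinder inside `V` has length `n` -/
def lev (V : Set (ℕ → Bool)) (n : ℕ) : Set (ℕ → Bool) :=
  {β | cyl (seg β n) ⊆ V ∧ ∀ k < n, ¬ cyl (seg β k) ⊆ V}

lemma lev_congr {V : Set (ℕ → Bool)} {n : ℕ} {β γ : ℕ → Bool} (hβ : β ∈ lev V n)
    (h : γ ∈ cyl (seg β n)) : γ ∈ lev V n := by
  refine ⟨by rw [seg_congr h le_rfl]; exact hβ.1, fun k hk => ?_⟩
  rw [seg_congr h hk.le]; exact hβ.2 k hk

lemma isOpen_lev (V : Set (ℕ → Bool)) (n : ℕ) : IsOpen (lev V n) :=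
  isOpen_of fun _ hβ => ⟨n, fun _ h => lev_congr hβ h⟩

lemma lev_sub (V : Set (ℕ → Bool)) (n : ℕ) : lev V n ⊆ V := fun β h => h.1 (seg_mem β n)

lemma exists_lev {V : Set (ℕ → Bool)} (hV : IsOpen V) {β : ℕ → Bool} (h : β ∈ V) :
    ∃ n, β ∈ lev V n := by
  classical
  have := exists_cyl hV h
  exact ⟨Nat.find this, Nat.find_spec this, fun k hk => Nat.find_min this hk⟩

lemma lev_unique {V : Set (ℕ → Bool)} {β : ℕ → Bool} {n k : ℕ} (h : β ∈ lev V n)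
    (h' : β ∈ lev V k) : n = k := by
  by_contra hne
  rcases Nat.lt_or_gt_of_ne hne with hl | hl
  · exact h'.2 _ hl h.1
  · exact h.2 _ hl h'.1

lemma lev_off {V : Set (ℕ → Bool)} {β γ : ℕ → Bool} {n l : ℕ} (hβ : β ∉ V)
    (h : γ ∈ lev V n) (h' : γ ∈ cyl (seg β l)) : l < n := by
  by_contra hn
  have := h.1
  rw [seg_congr h' (by omega)] at this
  exact hβ (this (seg_mem _ _))

lemma geom8 (l : ℕ) : ∑' n : ℕ, (1/8 : ℝ≥0∞) ^ (n + l + 1) ≤ (1/8) ^ l := by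
  have : ∀ n : ℕ, (1/8 : ℝ≥0∞) ^ (n + l + 1) ≤ (1/8) ^ l * (1/2) ^ (n+1) := by
    intro n
    rw [show n + l + 1 = l + (n + 1) by ring, pow_add]
    exact mul_le_mul_right (pow_le_pow_left' (ENNReal.div_le_div_left (by norm_num) 1) _) _
  refine (ENNReal.tsum_le_tsum this).trans ?_
  rw [ENNReal.tsum_mul_left]
  have h2 : ∑' n : ℕ, (1/2 : ℝ≥0∞) ^ (n+1) = 1 := by
    rw [ENNReal.tsum_geometric_add_one]; simp [ENNReal.one_sub_inv_two, ENNReal.inv_mul_cancel]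
  rw [h2, mul_one]

lemma dz_tail (hμ : Coin μ) {A C V : Set (ℕ → Bool)} (hV : IsOpen V) (hCV : C ⊆ V)
    (hAV : Dz μ A V) (hm : ∀ n, μ ((C \ A) ∩ lev V n) ≤ (1/8) ^ (n+1)) : Dz μ C V := by
  have := hμ.fin
  intro β hβ
  have hb : ∀ l, rel μ C (seg β l) ≤ rel μ A (seg β l) + (1/4) ^ l := by
    intro l
    have h1 : μ ((C \ A) ∩ cyl (seg β l)) ≤ (1/8) ^ l := by
      refine le_trans ?_ (geom8 l)
      refine le_trans (measure_mono (t := ⋃ n, (C \ A) ∩ lev V (n + l)) ?_) ?_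
      · rintro γ ⟨h1, h2⟩
        obtain ⟨n, hn⟩ := exists_lev hV (hCV h1.1)
        have := lev_off hβ hn h2
        rw [Set.mem_iUnion]
        refine ⟨n - l, h1, ?_⟩
        rwa [Nat.sub_add_cancel this.le]
      · exact (measure_iUnion_le _).trans (ENNReal.tsum_le_tsum fun n => hm _)
    have h2 : μ.real ((C \ A) ∩ cyl (seg β l)) ≤ (1/8) ^ l := by
      have := ENNReal.toReal_mono (by simp) h1
      exact this.trans (by simp)
    have h3 : μ.real (C ∩ cyl (seg β l)) ≤
        μ.real (A ∩ cyl (seg β l)) + μ.real ((C \ A) ∩ cyl (seg β l)) := by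
      refine le_trans (measureReal_mono ?_) (measureReal_union_le _ _)
      rintro γ ⟨h1, h2⟩
      by_cases h : γ ∈ A
      · exact Or.inl ⟨h, h2⟩
      · exact Or.inr ⟨⟨h1, h⟩, h2⟩
    unfold rel
    rw [length_seg]
    have : (1/4:ℝ) ^ l = (1/8) ^ l * 2 ^ l := by rw [← mul_pow]; norm_num
    rw [this, ← add_mul]
    gcongr
    linarith
  refine squeeze_zero (fun l => rel_nonneg _ _) hb ?_
  simpa using (hAV β hβ).add
    (tendsto_pow_atTop_nhds_zero_of_lt_one (by norm_num) (by norm_num : (1/4:ℝ) < 1))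


/-- `A` is strongly inside `B`. -/
structure SI (μ : Measure (ℕ → Bool)) (A B : Set (ℕ → Bool)) : Prop where
  oA : IsOpen A
  oB : IsOpen B
  sub : A ⊆ B
  dz : Dz μ A B

lemma interp (hμ : Coin μ) {A V : Set (ℕ → Bool)} (h : SI μ A V) :
    ∃ C, SI μ A C ∧ SI μ C V := by
  have hex : ∀ n, ∃ C, IsOpen C ∧ A ∩ lev V n ⊆ C ∧ μ (C \ (A ∩ lev V n)) ≤ (1/8) ^ (n+1) ∧
      Dz μ (A ∩ lev V n) C := fun n =>
    fatten hμ (h.oA.inter (isOpen_lev V n)) (by simp)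
  choose C hCo hCs hCm hCd using hex
  have hsub : A ⊆ ⋃ n, C n ∩ lev V n := by
    intro β hβ
    obtain ⟨n, hn⟩ := exists_lev h.oB (h.sub hβ)
    exact Set.mem_iUnion.2 ⟨n, hCs n ⟨hβ, hn⟩, hn⟩
  have ho : IsOpen (⋃ n, C n ∩ lev V n) :=
    isOpen_iUnion fun n => (hCo n).inter (isOpen_lev V n)
  have hsV : (⋃ n, C n ∩ lev V n) ⊆ V := Set.iUnion_subset fun n x hx => lev_sub V n hx.2
  refine ⟨⋃ n, C n ∩ lev V n, ⟨h.oA, ho, hsub, ?_⟩, ⟨ho, h.oB, hsV, ?_⟩⟩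
  · intro β hβ
    by_cases hV : β ∈ V
    · obtain ⟨n, hn⟩ := exists_lev h.oB hV
      have hβn : β ∉ C n := fun h' => hβ (Set.mem_iUnion.2 ⟨n, h', hn⟩)
      refine squeeze_zero' (Eventually.of_forall fun l => rel_nonneg _ _) ?_ (hCd n β hβn)
      filter_upwards [eventually_ge_atTop n] with l hl
      exact rel_mono hμ fun γ hγ => ⟨hγ.1, lev_congr hn (cyl_anti β hl hγ.2)⟩
    · exact h.dz β hV
  · refine dz_tail hμ h.oB hsV h.dz fun n => le_trans (measure_mono ?_) (hCm n)
    rintro γ ⟨⟨h1, h2⟩, h3⟩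
    obtain ⟨k, hk, hk'⟩ := Set.mem_iUnion.1 h1
    rw [lev_unique h3 hk']
    exact ⟨hk, fun h4 => h2 h4.1⟩

lemma shrink (hμ : Coin μ) {G V O : Set (ℕ → Bool)} (hG : μ G = 0) (hV : IsOpen V) (hGV : G ⊆ V)
    (hO : IsOpen O) (hGO : G ⊆ O) :
    ∃ W, G ⊆ W ∧ W ⊆ O ∧ SI μ W V ∧ ∀ n, ∀ β ∈ lev V n, rel μ W (seg β n) ≤ 1/8 := by
  have := hμ.fin
  have hex : ∀ n : ℕ, ∃ U, G ⊆ U ∧ IsOpen U ∧ μ U ≤ (1/8) ^ (n+1) := by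
    intro n
    obtain ⟨U, h1, h2, h3⟩ := Set.exists_isOpen_lt_of_lt G ((1/8 : ℝ≥0∞) ^ (n+1))
      (by rw [hG]; exact ENNReal.pow_pos (by simp) _)
    exact ⟨U, h1, h2, h3.le⟩
  choose U hGU hUo hUm using hex
  have ho : IsOpen (O ∩ ⋃ n, U n ∩ lev V n) :=
    hO.inter (isOpen_iUnion fun n => (hUo n).inter (isOpen_lev V n))
  have hsV : (O ∩ ⋃ n, U n ∩ lev V n) ⊆ V := fun x hx => by
    obtain ⟨n, hn⟩ := Set.mem_iUnion.1 hx.2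
    exact lev_sub V n hn.2
  have hmem : ∀ n, (O ∩ ⋃ n, U n ∩ lev V n) ∩ lev V n ⊆ U n := by
    rintro n γ ⟨h1, h3⟩
    obtain ⟨k, hk, hk'⟩ := Set.mem_iUnion.1 h1.2
    rw [lev_unique h3 hk']
    exact hk
  refine ⟨O ∩ ⋃ n, U n ∩ lev V n, ?_, Set.inter_subset_left, ⟨ho, hV, hsV, ?_⟩, ?_⟩
  · intro β hβ
    obtain ⟨n, hn⟩ := exists_lev hV (hGV hβ)
    exact ⟨hGO hβ, Set.mem_iUnion.2 ⟨n, hGU n hβ, hn⟩⟩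
  · refine dz_tail hμ (A := ∅) hV hsV ?_ fun n => le_trans (measure_mono ?_) (hUm n)
    · intro β _
      simp [rel]
    · rintro γ ⟨⟨h1, _⟩, h3⟩
      exact hmem n ⟨h1, h3⟩
  · intro n β hβ
    have h1 : μ ((O ∩ ⋃ n, U n ∩ lev V n) ∩ cyl (seg β n)) ≤ (1/8) ^ (n+1) :=
      (measure_mono fun γ hγ => hmem n ⟨hγ.1, lev_congr hβ hγ.2⟩).trans (hUm n)
    have h2 : μ.real ((O ∩ ⋃ n, U n ∩ lev V n) ∩ cyl (seg β n)) ≤ (1/8) ^ (n+1) := by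
      have := ENNReal.toReal_mono (by simp) h1
      exact this.trans (by simp)
    unfold rel
    rw [length_seg]
    calc _ ≤ (1/8 : ℝ) ^ (n+1) * 2 ^ n := by gcongr
      _ = (1/8) * (1/4) ^ n := by
        rw [pow_succ, mul_comm _ (1/8 : ℝ), mul_assoc, ← mul_pow]; norm_num
      _ ≤ 1/8 * 1 := by gcongr; exact pow_le_one₀ (by norm_num) (by norm_num)
      _ = 1/8 := by norm_num

/-- the recursive approximations -/
noncomputable def apx (μ : Measure (ℕ → Bool)) (mid : Set (ℕ → Bool) → Set (ℕ → Bool) → Set (ℕ → Bool)) :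
    ℕ → Set (ℕ → Bool) → Set (ℕ → Bool) → List Bool → ℝ
  | 0, A, _, s => rel μ A s
  | n+1, A, B, s => (apx μ mid n A (mid A B) s + apx μ mid n (mid A B) B s) / 2

lemma rel_tendsto_one (hμ : Coin μ) {A : Set (ℕ → Bool)} (hA : IsOpen A) {β : ℕ → Bool}
    (h : β ∈ A) : ∀ᶠ l in atTop, rel μ A (seg β l) = 1 := by
  obtain ⟨n, hn⟩ := exists_cyl hA h
  filter_upwards [eventually_ge_atTop n] with l hl
  exact rel_eq_one hμ ((cyl_anti β hl).trans hn)

lemma urysohn (hμ : Coin μ) {A B : Set (ℕ → Bool)} (hAB : SI μ A B) :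
    ∃ h : List Bool → ℝ, (∀ s, h s = (h (s ++ [false]) + h (s ++ [true])) / 2) ∧
      (∀ s, rel μ A s ≤ h s ∧ h s ≤ rel μ B s) ∧
      (∀ β, CauchySeq fun l => h (seg β l)) ∧
      (∀ β, β ∉ B → Tendsto (fun l => h (seg β l)) atTop (𝓝 0)) := by
  have hex : ∀ A V : Set (ℕ → Bool), ∃ C, SI μ A V → SI μ A C ∧ SI μ C V := by
    intro A V
    by_cases h : SI μ A V
    · obtain ⟨C, hC⟩ := interp hμ h
      exact ⟨C, fun _ => hC⟩
    · exact ⟨A, fun h' => absurd h' h⟩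
  choose mid hmid using hex
  have hmart : ∀ n A B, SI μ A B → ∀ s, apx μ mid n A B s =
      (apx μ mid n A B (s ++ [false]) + apx μ mid n A B (s ++ [true])) / 2 := by
    intro n
    induction n with
    | zero => intro A B h s; exact rel_mart hμ h.oA.measurableSet s
    | succ n ih =>
      intro A B h s
      obtain ⟨h1, h2⟩ := hmid A B h
      simp only [apx]
      rw [ih _ _ h1 s, ih _ _ h2 s]; ring
  have hbd : ∀ n A B, SI μ A B → ∀ s, rel μ A s ≤ apx μ mid n A B s ∧
      apx μ mid n A B s ≤ rel μ B s := by
    intro n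
    induction n with
    | zero =>
      intro A B h s
      exact ⟨le_rfl, rel_mono hμ (Set.inter_subset_left.trans h.sub)⟩
    | succ n ih =>
      intro A B h s
      obtain ⟨h1, h2⟩ := hmid A B h
      simp only [apx]
      have a := ih _ _ h1 s
      have b := ih _ _ h2 s
      constructor <;> linarith
  have hinc : ∀ n A B, SI μ A B → ∀ s,
      0 ≤ apx μ mid (n+1) A B s - apx μ mid n A B s ∧
      apx μ mid (n+1) A B s - apx μ mid n A B s ≤ (1/2) ^ (n+1) * (rel μ B s - rel μ A s) := by
    intro n
    induction n with
    | zero =>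
      intro A B h s
      obtain ⟨h1, h2⟩ := hmid A B h
      have a := hbd 0 _ _ h1 s
      have b := hbd 0 _ _ h2 s
      simp only [apx] at a b ⊢
      constructor <;> linarith
    | succ n ih =>
      intro A B h s
      obtain ⟨h1, h2⟩ := hmid A B h
      have a := ih _ _ h1 s
      have b := ih _ _ h2 s
      have e1 : apx μ mid (n+1+1) A B s =
        (apx μ mid (n+1) A (mid A B) s + apx μ mid (n+1) (mid A B) B s) / 2 := rfl
      have e2 : apx μ mid (n+1) A B s =
        (apx μ mid n A (mid A B) s + apx μ mid n (mid A B) B s) / 2 := rfl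
      rw [e1, e2]
      rw [pow_succ]
      constructor <;> linarith
  have hoff : ∀ n A B, SI μ A B → ∀ β, β ∉ B →
      Tendsto (fun l => apx μ mid n A B (seg β l)) atTop (𝓝 0) := by
    intro n
    induction n with
    | zero => intro A B h β hβ; exact h.dz β hβ
    | succ n ih =>
      intro A B h β hβ
      obtain ⟨h1, h2⟩ := hmid A B h
      simp only [apx]
      simpa using ((ih _ _ h1 β (fun h => hβ (h2.sub h))).add (ih _ _ h2 β hβ)).div_const 2
  have hon : ∀ n A B, SI μ A B → ∀ β, β ∈ A →
      Tendsto (fun l => apx μ mid n A B (seg β l)) atTop (𝓝 1) := by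
    intro n A B h β hβ
    refine tendsto_const_nhds.congr' ?_
    filter_upwards [rel_tendsto_one hμ h.oA hβ] with l hl
    have := hbd n A B h (seg β l)
    have := rel_le_one hμ B (seg β l)
    linarith
  have hosc : ∀ n A B, SI μ A B → ∀ β, ∀ ε > 0, ∃ N, ∀ p ≥ N, ∀ q ≥ N,
      |apx μ mid n A B (seg β p) - apx μ mid n A B (seg β q)| ≤ (1/2) ^ n + ε := by
    intro n
    induction n with
    | zero =>
      intro A B h β ε hε
      refine ⟨0, fun p _ q _ => ?_⟩
      simp only [apx]
      have h1 := rel_le_one hμ A (seg β p)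
      have h2 := rel_le_one hμ A (seg β q)
      have h3 := rel_nonneg (μ := μ) A (seg β p)
      have h4 := rel_nonneg (μ := μ) A (seg β q)
      rw [abs_le]; constructor <;> linarith
    | succ n ih =>
      intro A B h β ε hε
      obtain ⟨h1, h2⟩ := hmid A B h
      have comb : ∀ u v : ℕ → ℝ, CauchySeq u →
          (∃ N, ∀ p ≥ N, ∀ q ≥ N, |v p - v q| ≤ (1/2) ^ n + ε) →
          ∃ N, ∀ p ≥ N, ∀ q ≥ N, |u p - u q| ≤ ε ∧ |v p - v q| ≤ (1/2) ^ n + ε := by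
        rintro u v hu ⟨N, hN⟩
        obtain ⟨M, hM⟩ := Metric.cauchySeq_iff.1 hu ε hε
        refine ⟨max N M, fun p hp q hq => ⟨?_, hN p (by omega) q (by omega)⟩⟩
        exact (hM p (by omega) q (by omega)).le
      simp only [apx]
      by_cases hC : β ∈ mid A B
      · obtain ⟨N, hN⟩ := comb _ _ (hon n _ _ h2 β hC).cauchySeq (ih _ _ h1 β ε hε)
        refine ⟨N, fun p hp q hq => ?_⟩
        obtain ⟨a, b⟩ := hN p hp q hq
        rw [abs_le] at a b ⊢
        rw [pow_succ]
        constructor <;> linarith [a.1, a.2, b.1, b.2]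
      · obtain ⟨N, hN⟩ := comb _ _ (hoff n _ _ h1 β hC).cauchySeq (ih _ _ h2 β ε hε)
        refine ⟨N, fun p hp q hq => ?_⟩
        obtain ⟨a, b⟩ := hN p hp q hq
        rw [abs_le] at a b ⊢
        rw [pow_succ]
        constructor <;> linarith [a.1, a.2, b.1, b.2]
  -- the limit
  have hmono : ∀ s, Monotone fun n => apx μ mid n A B s := fun s =>
    monotone_nat_of_le_succ fun n => by linarith [(hinc n A B hAB s).1]
  have hlim : ∀ s, Tendsto (fun n => apx μ mid n A B s) atTop (𝓝 (⨆ n, apx μ mid n A B s)) :=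
    fun s => tendsto_atTop_ciSup (hmono s) ⟨rel μ B s, by rintro _ ⟨n, rfl⟩; exact (hbd n A B hAB s).2⟩
  set h : List Bool → ℝ := fun s => ⨆ n, apx μ mid n A B s with hh
  have hclose0 : ∀ n k s, apx μ mid (n + k) A B s ≤ apx μ mid n A B s + (1/2) ^ n - (1/2) ^ (n+k) := by
    intro n k s
    induction k with
    | zero => simp
    | succ k ih =>
      have h1 := (hinc (n+k) A B hAB s).2
      have h2 := rel_le_one hμ B s
      have h3 := rel_nonneg (μ := μ) A s
      have h4 : (1/2:ℝ) ^ (n+k+1) * (rel μ B s - rel μ A s) ≤ (1/2) ^ (n+k+1) * 1 := by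
        gcongr; linarith
      rw [← add_assoc]
      have h5 : (1/2:ℝ) ^ (n+k+1) = (1/2) ^ (n+k) / 2 := by rw [pow_succ]; ring
      linarith
  have hclose : ∀ n s, apx μ mid n A B s ≤ h s ∧ h s ≤ apx μ mid n A B s + (1/2) ^ n := by
    intro n s
    refine ⟨(hmono s).ge_of_tendsto (hlim s) n, ?_⟩
    refine le_of_tendsto (hlim s) ?_
    filter_upwards [eventually_ge_atTop n] with m hm
    obtain ⟨k, rfl⟩ := Nat.exists_eq_add_of_le hm
    have := hclose0 n k s
    have : (0:ℝ) < (1/2) ^ (n+k) := by positivity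
    linarith
  have hpow : ∀ ε > (0:ℝ), ∃ n : ℕ, (1/2:ℝ) ^ n < ε := fun ε hε =>
    exists_pow_lt_of_lt_one hε (by norm_num)
  refine ⟨h, ?_, ?_, ?_, ?_⟩
  · intro s
    refine tendsto_nhds_unique (hlim s) ?_
    refine (((hlim (s ++ [false])).add (hlim (s ++ [true]))).div_const 2).congr fun n => ?_
    exact (hmart n A B hAB s).symm
  · intro s
    exact ⟨(hbd 0 A B hAB s).1.trans (hclose 0 s).1,
      le_of_tendsto' (hlim s) fun n => (hbd n A B hAB s).2⟩
  · intro β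
    rw [Metric.cauchySeq_iff]
    intro ε hε
    obtain ⟨n, hn⟩ := hpow (ε/4) (by positivity)
    obtain ⟨N, hN⟩ := hosc n A B hAB β (ε/4) (by positivity)
    refine ⟨N, fun p hp q hq => ?_⟩
    have a := hN p hp q hq
    have b := hclose n (seg β p)
    have c := hclose n (seg β q)
    rw [Real.dist_eq, abs_lt]
    rw [abs_le] at a
    constructor <;> linarith [a.1, a.2, b.1, b.2, c.1, c.2]
  · intro β hβ
    rw [Metric.tendsto_atTop]
    intro ε hε
    obtain ⟨n, hn⟩ := hpow (ε/2) (by positivity)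
    obtain ⟨N, hN⟩ := Metric.tendsto_atTop.1 (hoff n A B hAB β hβ) (ε/2) (by positivity)
    refine ⟨N, fun l hl => ?_⟩
    have a := hN l hl
    have b := hclose n (seg β l)
    rw [Real.dist_eq, sub_zero, abs_lt] at a ⊢
    constructor <;> linarith [a.1, a.2, b.1, b.2]

lemma single (hμ : Coin μ) {G : Set (ℕ → Bool)} (hG : IsGδ G) (hG0 : μ G = 0) :
    ∃ f : List Bool → ℝ, IsMartingale f ∧ (∀ β, β ∉ G → CauchySeq fun l => f (seg β l)) ∧
      ∀ β ∈ G, ∀ N, ∃ p ≥ N, ∃ q ≥ N, 1/2 ≤ f (seg β p) - f (seg β q) := by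
  obtain ⟨O, hOo, hGO⟩ := hG.eq_iInter_nat
  have hGO' : ∀ k, G ⊆ O k := fun k => by rw [hGO]; exact Set.iInter_subset _ k
  have hex : ∀ (k : ℕ) (V : {V : Set (ℕ → Bool) // IsOpen V ∧ G ⊆ V}),
      ∃ W : {V : Set (ℕ → Bool) // IsOpen V ∧ G ⊆ V}, W.1 ⊆ O k ∧ SI μ W.1 V.1 ∧
        ∀ n, ∀ β ∈ lev V.1 n, rel μ W.1 (seg β n) ≤ 1/8 := by
    rintro k ⟨V, hV, hGV⟩
    obtain ⟨W, h1, h2, h3, h4⟩ := shrink hμ hG0 hV hGV (hOo k) (hGO' k)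
    exact ⟨⟨W, h3.oA, h1⟩, h2, h3, h4⟩
  choose next hn1 hn2 hn3 using hex
  let T : ℕ → {V : Set (ℕ → Bool) // IsOpen V ∧ G ⊆ V} := fun k =>
    Nat.rec ⟨Set.univ, isOpen_univ, Set.subset_univ _⟩ (fun k V => next k V) k
  obtain ⟨V, hVo, hGV, hVO, hSI, hsm⟩ : ∃ V : ℕ → Set (ℕ → Bool), (∀ k, IsOpen (V k)) ∧
      (∀ k, G ⊆ V k) ∧ (∀ k, V (k+1) ⊆ O k) ∧ (∀ k, SI μ (V (k+1)) (V k)) ∧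
      ∀ k n, ∀ β ∈ lev (V k) n, rel μ (V (k+1)) (seg β n) ≤ 1/8 :=
    ⟨fun k => (T k).1, fun k => (T k).2.1, fun k => (T k).2.2, fun k => hn1 k (T k),
      fun k => hn2 k (T k), fun k => hn3 k (T k)⟩
  have hVa : Antitone V := antitone_nat_of_succ_le fun k => (hSI k).sub
  choose h hmart hbd hcau hoff using fun k => urysohn hμ (hSI (2*k))
  have hha : ∀ s, Antitone fun k => h k s := fun s => antitone_nat_of_succ_le fun k =>
    ((hbd (k+1) s).2.trans (rel_mono hμ (Set.inter_subset_left.trans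
      (hVa (by omega : 2*k+1 ≤ 2*(k+1)))))).trans (hbd k s).1
  have hh0 : ∀ k s, 0 ≤ h k s := fun k s => (rel_nonneg _ _).trans (hbd k s).1
  have hh1 : ∀ k s, h k s ≤ 1 := fun k s => (hbd k s).2.trans (rel_le_one hμ _ _)
  let d : ℕ → List Bool → ℝ := fun k s => h (2*k) s - h (2*k+1) s
  have hd0 : ∀ k s, 0 ≤ d k s := fun k s => sub_nonneg.2 (hha s (by omega))
  have hpart : ∀ K s n, ∑ i ∈ Finset.range n, d (i+K) s ≤ h (2*K) s - h (2*(n+K)) s := by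
    intro K s n
    induction n with
    | zero => simp
    | succ n ih =>
      rw [Finset.sum_range_succ]
      have : h (2*(n+1+K)) s ≤ h (2*(n+K)+1) s := hha s (by omega)
      simp only [d] at ih ⊢
      linarith
  have hpart' : ∀ K s n, ∑ i ∈ Finset.range n, d (i+K) s ≤ h (2*K) s := fun K s n =>
    (hpart K s n).trans (by linarith [hh0 (2*(n+K)) s])
  have hsum : ∀ s, Summable fun k => d k s := fun s =>
    summable_of_sum_range_le (fun k => hd0 k s) (fun n => by simpa using hpart' 0 s n)
  have htail : ∀ K s, ∑' i, d (i+K) s ≤ h (2*K) s := fun K s =>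
    Real.tsum_le_of_sum_range_le (fun i => hd0 _ s) (hpart' K s)
  have htail0 : ∀ K s, 0 ≤ ∑' i, d (i+K) s := fun K s => tsum_nonneg fun i => hd0 _ s
  have hdec : ∀ K s, ∑' k, d k s = ∑ i ∈ Finset.range K, d i s + ∑' i, d (i+K) s :=
    fun K s => ((hsum s).sum_add_tsum_nat_add K).symm
  refine ⟨fun s => ∑' k, d k s, ⟨fun s => ⟨tsum_nonneg fun k => hd0 k s, ?_⟩, fun s => ?_⟩, ?_, ?_⟩
  · simpa using (htail 0 s).trans (hh1 _ s)
  · rw [← (hsum _).tsum_add (hsum _), ← tsum_div_const]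
    refine tsum_congr fun k => ?_
    simp only [d]
    rw [hmart (2*k) s, hmart (2*k+1) s]; ring
  · intro β hβ
    have : ∃ k, β ∉ O k := by
      by_contra hc
      push Not at hc
      exact hβ (by rw [hGO]; exact Set.mem_iInter.2 hc)
    obtain ⟨k, hk⟩ := this
    have hk2 : β ∉ V (2*(2*(k+1))) := fun h' => hk (hVO k (hVa (by omega) h'))
    have h1 : ∀ n, ∃ L, Tendsto (fun l => ∑ i ∈ Finset.range n, d i (seg β l)) atTop (𝓝 L) := by
      intro n
      choose L hL using fun k => cauchySeq_tendsto_of_complete (hcau k β)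
      exact ⟨_, tendsto_finsetSum _ fun i _ => (hL (2*i)).sub (hL (2*i+1))⟩
    obtain ⟨L, hL⟩ := h1 (k+1)
    have h2 : Tendsto (fun l => ∑' i, d (i+(k+1)) (seg β l)) atTop (𝓝 0) :=
      squeeze_zero (fun l => htail0 _ _) (fun l => htail _ _) (hoff _ β hk2)
    have h3 := (hL.add h2).cauchySeq
    have h4 : (fun l => ∑' k, d k (seg β l)) = fun l => ∑ i ∈ Finset.range (k+1), d i (seg β l) +
        ∑' i, d (i+(k+1)) (seg β l) := funext fun l => hdec _ _
    rw [h4]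
    exact h3
  · intro β hβ N
    choose n hn using fun k => exists_lev (hVo k) (hGV k hβ)
    have hnm : StrictMono n := strictMono_nat_of_lt_succ fun k => by
      by_contra hc
      have h1 := hsm k (n k) β (hn k)
      rw [rel_eq_one hμ ((cyl_anti β (by omega)).trans (hn (k+1)).1)] at h1
      norm_num at h1
    have hA : ∀ k, ∀ i ≤ k, h i (seg β (n (2*k+1))) = 1 := by
      intro k i hi
      apply le_antisymm (hh1 _ _)
      refine le_trans ?_ (hha _ hi)
      refine le_trans ?_ (hbd k _).1
      rw [rel_eq_one hμ (hn (2*k+1)).1]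
    have hB : ∀ k, h (k+1) (seg β (n (2*k+1))) ≤ 1/8 := fun k =>
      (hbd (k+1) _).2.trans (hsm (2*k+1) _ β (hn _))
    refine ⟨n (2*(2*N)+1), ?_, n (2*(2*N+1)+1), ?_, ?_⟩
    · have := hnm.id_le (2*(2*N)+1); simp only [id] at this; omega
    · have := hnm.id_le (2*(2*N+1)+1); simp only [id] at this; omega
    · have h1 : 7/8 ≤ ∑' k, d k (seg β (n (2*(2*N)+1))) := by
        refine le_trans ?_ ((hsum _).le_tsum N fun i _ => hd0 i _)
        have a := hA (2*N) (2*N) le_rfl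
        have b := hB (2*N)
        simp only [d]; linarith
      have h2 : ∑' k, d k (seg β (n (2*(2*N+1)+1))) ≤ 1/8 := by
        rw [hdec (N+1)]
        have b := hB (2*N+1)
        have c := htail (N+1) (seg β (n (2*(2*N+1)+1)))
        have e : ∑ i ∈ Finset.range (N+1), d i (seg β (n (2*(2*N+1)+1))) = 0 := by
          apply Finset.sum_eq_zero
          intro i hi
          rw [Finset.mem_range] at hi
          simp only [d]
          rw [hA _ _ (by omega), hA _ _ (by omega), sub_self]
        rw [e, zero_add]
        exact c.trans b
      linarith

lemma osc_zero {f : List Bool → ℝ} {β : ℕ → Bool} (h : CauchySeq fun l => f (seg β l)) :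
    ¬ 0 < osc f β := by
  rw [not_lt]
  refine le_of_forall_pos_le_add fun ε hε => ?_
  obtain ⟨N, hN⟩ := Metric.cauchySeq_iff.1 h ε hε
  rw [zero_add]
  refine (ciInf_le ⟨0, ?_⟩ N).trans ?_
  · rintro _ ⟨M, rfl⟩
    exact Real.iSup_nonneg fun p => Real.iSup_nonneg fun q => abs_nonneg _
  · exact Real.iSup_le (fun p => Real.iSup_le (fun q => (hN p.1 p.2 q.1 q.2).le) hε.le) hε.le

lemma osc_pos {f : List Bool → ℝ} (hf : IsMartingale f) {β : ℕ → Bool} {c : ℝ} (hc : 0 < c)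
    (h : ∀ N, ∃ p ≥ N, ∃ q ≥ N, c ≤ f (seg β p) - f (seg β q)) : 0 < osc f β := by
  refine lt_of_lt_of_le hc (le_ciInf fun N => ?_)
  obtain ⟨p, hp, q, hq, hpq⟩ := h N
  have hb : ∀ s t, |f s - f t| ≤ 1 := fun s t => by
    have a := hf.1 s
    have b := hf.1 t
    rw [abs_le]; constructor <;> linarith [a.1, a.2, b.1, b.2]
  refine (hpq.trans (le_abs_self _)).trans ?_
  refine le_trans ?_ (le_ciSup (f := fun p : {n : ℕ // N ≤ n} => ⨆ q : {n : ℕ // N ≤ n},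
    |f (seg β p.1) - f (seg β q.1)|) ⟨1, ?_⟩ ⟨p, hp⟩)
  · refine le_ciSup (f := fun q : {n : ℕ // N ≤ n} => |f (seg β p) - f (seg β q.1)|)
      ⟨1, ?_⟩ ⟨q, hq⟩
    rintro _ ⟨r, rfl⟩
    exact hb _ _
  · rintro _ ⟨r, rfl⟩
    exact Real.iSup_le (fun _ => hb _ _) zero_le_one

lemma main (hμ : Coin μ) {B : Set (ℕ → Bool)} (hB : IsSigma03 B) (hB0 : μ B = 0) :
    ∃ f : List Bool → ℝ, IsMartingale f ∧ B = divSet f := by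
  classical
  obtain ⟨g, hg, rfl⟩ := hB
  choose f hf hfc hfd using fun n => single hμ (hg n)
    (measure_mono_null (Set.subset_iUnion g n) hB0)
  let t : ℕ → List Bool → ℝ := fun n s => (1/8) ^ (n+1) * f n s
  have hgeo : ∀ K, HasSum (fun i : ℕ => (1/8:ℝ) ^ (i+K+1)) ((1/8) ^ K * (1/7)) := by
    intro K
    have := (hasSum_geometric_of_lt_one (by norm_num : (0:ℝ) ≤ 1/8) (by norm_num)).mul_left
      ((1/8:ℝ) ^ (K+1))
    have e1 : (fun i : ℕ => (1/8:ℝ) ^ (i+K+1)) = fun i => (1/8) ^ (K+1) * (1/8) ^ i := by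
      funext i; rw [← pow_add]; congr 1; ring
    have e2 : (1/8:ℝ) ^ K * (1/7) = (1/8) ^ (K+1) * (1 - 1/8)⁻¹ := by
      rw [pow_succ, mul_assoc]; norm_num
    rw [e1, e2]
    exact this
  have ht0 : ∀ n s, 0 ≤ t n s := fun n s => mul_nonneg (by positivity) ((hf n).1 s).1
  have ht1 : ∀ n s, t n s ≤ (1/8) ^ (n+1) := fun n s =>
    mul_le_of_le_one_right (by positivity) ((hf n).1 s).2
  have hsum : ∀ s, Summable fun n => t n s := fun s =>
    Summable.of_nonneg_of_le (fun n => ht0 n s) (fun n => ht1 n s) (by simpa using (hgeo 0).summable)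
  have hT0 : ∀ K s, 0 ≤ ∑' i, t (i+K) s := fun K s => tsum_nonneg fun i => ht0 _ s
  have hT1 : ∀ K s, ∑' i, t (i+K) s ≤ (1/8) ^ K * (1/7) := by
    intro K s
    rw [← (hgeo K).tsum_eq]
    exact Summable.tsum_le_tsum (fun i => ht1 _ s) ((summable_nat_add_iff K).2 (hsum s))
      (hgeo K).summable
  have hdec : ∀ K s, ∑' k, t k s = ∑ i ∈ Finset.range K, t i s + ∑' i, t (i+K) s :=
    fun K s => ((hsum s).sum_add_tsum_nat_add K).symm
  have hC : ∀ K β, (∀ i < K, β ∉ g i) →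
      CauchySeq fun l => ∑ i ∈ Finset.range K, t i (seg β l) := by
    intro K β hβ
    have : ∀ i ∈ Finset.range K, ∃ L, Tendsto (fun l => t i (seg β l)) atTop (𝓝 L) := by
      intro i hi
      obtain ⟨L, hL⟩ := cauchySeq_tendsto_of_complete (hfc i β (hβ i (Finset.mem_range.1 hi)))
      exact ⟨_, hL.const_mul _⟩
    choose! L hL using this
    exact (tendsto_finsetSum _ hL).cauchySeq
  have hM : IsMartingale fun s => ∑' n, t n s := by
    refine ⟨fun s => ⟨tsum_nonneg fun n => ht0 n s, ?_⟩, fun s => ?_⟩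
    · have := hT1 0 s
      simp only [add_zero, pow_zero] at this
      linarith
    · dsimp only
      rw [← (hsum _).tsum_add (hsum _), ← tsum_div_const]
      refine tsum_congr fun k => ?_
      simp only [t]
      rw [(hf k).2 s]; ring
  refine ⟨fun s => ∑' n, t n s, hM, ?_⟩
  ext β
  constructor
  · intro hβ
    have hβ' := Set.mem_iUnion.1 hβ
    set n := Nat.find hβ' with hn
    have h1 : β ∈ g n := Nat.find_spec hβ'
    have h2 := hC n β fun i hi => Nat.find_min hβ' hi
    have hw : (0:ℝ) < (1/8) ^ (n+1) := by positivity
    refine osc_pos hM (c := (1/8) ^ (n+1) * (1/8)) (by positivity) fun N => ?_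
    obtain ⟨M, hMc⟩ := Metric.cauchySeq_iff.1 h2 ((1/8) ^ (n+1) * (1/8)) (by positivity)
    obtain ⟨p, hp, q, hq, hpq⟩ := hfd n β h1 (max N M)
    refine ⟨p, by omega, q, by omega, ?_⟩
    rw [hdec (n+1) (seg β p), hdec (n+1) (seg β q), Finset.sum_range_succ, Finset.sum_range_succ]
    have a := hMc p (by omega) q (by omega)
    rw [Real.dist_eq, abs_lt] at a
    have b1 := hT0 (n+1) (seg β p)
    have b2 := hT1 (n+1) (seg β q)
    have e : (1/8) ^ (n+1) * (1/2) ≤ t n (seg β p) - t n (seg β q) := by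
      simp only [t]; rw [← mul_sub]; exact mul_le_mul_of_nonneg_left hpq hw.le
    linarith [a.1]
  · intro hβ
    by_contra hc
    refine osc_zero ?_ hβ
    rw [Metric.cauchySeq_iff]
    intro ε hε
    obtain ⟨K, hK⟩ := exists_pow_lt_of_lt_one (half_pos hε) (by norm_num : (1/8:ℝ) < 1)
    obtain ⟨N, hN⟩ := Metric.cauchySeq_iff.1
      (hC K β fun i _ h => hc (Set.mem_iUnion.2 ⟨i, h⟩)) (ε/2) (by positivity)
    refine ⟨N, fun p hp q hq => ?_⟩
    have a := hN p hp q hq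
    rw [hdec K (seg β p), hdec K (seg β q)]
    have hw : (0:ℝ) < (1/8) ^ K := by positivity
    have b1 := hT0 K (seg β p)
    have b2 := hT1 K (seg β q)
    have b3 := hT0 K (seg β q)
    have b4 := hT1 K (seg β p)
    rw [Real.dist_eq, abs_lt] at a ⊢
    constructor <;> linarith [a.1, a.2]

end
end S03

/-- Every `Σ⁰₃` (countable union of Gδ) subset of `2^ω` of
λ-measure zero is the set of divergence of some martingale. -/
theorem sigma03_null_is_divergence_set
    (μ : Measure (ℕ → Bool))
    (hμ : ∀ s : List Bool, μ (cyl s) = (1/2 : ℝ≥0∞) ^ s.length)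
    (B : Set (ℕ → Bool)) (hB : IsSigma03 B) (hB0 : μ B = 0) :
    ∃ f : List Bool → ℝ, IsMartingale f ∧ B = divSet f := by
  exact S03.main hμ hB hB0
end

section
/- Let 𝒢 be a Gδ subset of 2^ω with λ(𝒢) = 0, and let U := {(f,β) ∈ 𝓜 × 𝒢 : β ∈ D(f)}. Then U is a Σ⁰₃ subset of 𝓜 × 𝒢 (a countable union of sets that are Gδ relative to 𝓜 × 𝒢), and the vertical sections {U_f : f ∈ 𝓜} are exactly the Σ⁰₃ subsets of 𝒢 (the countable unions of relatively Gδ subsets of 𝒢); that is, U is 𝓜-universal for the Σ⁰₃ subsets of 𝒢. -/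
open MeasureTheory Filter Topology
open scoped ENNReal

namespace DivU

lemma mem_cyl_seg (β γ : ℕ → Bool) (l : ℕ) : γ ∈ cyl (seg β l) ↔ γ ∈ PiNat.cylinder β l := by
  unfold cyl seg
  simp only [Set.mem_ofPred_eq, PiNat.cylinder]
  constructor
  · intro h i hi
    have := h ⟨i, by simpa using hi⟩
    simpa using this
  · intro h i
    have := h i (by simpa using i.2)
    simpa using this

lemma cyl_seg (β : ℕ → Bool) (l : ℕ) : cyl (seg β l) = PiNat.cylinder β l := by
  ext γ; exact mem_cyl_seg β γ l

@[simp] lemma seg_length (β : ℕ → Bool) (l : ℕ) : (seg β l).length = l := by simp [seg]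

lemma mem_cyl_iff (s : List Bool) (γ : ℕ → Bool) : γ ∈ cyl s ↔ seg γ s.length = s := by
  unfold cyl seg
  simp only [Set.mem_ofPred_eq]
  constructor
  · intro h
    apply List.ext_get
    · simp
    · intro i h1 h2
      simpa using h ⟨i, h2⟩
  · intro h i
    have := congrArg (fun t : List Bool => t[(i : ℕ)]?) h
    simpa using this

lemma seg_congr {β γ : ℕ → Bool} {l : ℕ} (h : γ ∈ PiNat.cylinder β l) : seg γ l = seg β l := by
  unfold seg
  congr 1
  funext i
  exact h i i.2

lemma seg_take (β : ℕ → Bool) {l m : ℕ} (h : l ≤ m) : (seg β m).take l = seg β l := by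
  apply List.ext_get
  · simp [h]
  · intro i h1 h2
    simp [seg]

lemma exists_seg (s : List Bool) : ∃ β, seg β s.length = s := by
  refine ⟨fun i => s.getD i false, ?_⟩
  rw [← mem_cyl_iff]
  intro i
  simp

lemma open_exists_cyl {U : Set (ℕ → Bool)} (hU : IsOpen U) {β : ℕ → Bool} (hβ : β ∈ U) :
    ∃ n, PiNat.cylinder β n ⊆ U := by
  obtain ⟨t, ht, hβt, htU⟩ :=
    (PiNat.isTopologicalBasis_cylinders (fun _ : ℕ => Bool)).exists_subset_of_mem_open hβ hU
  obtain ⟨x, n, rfl⟩ := ht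
  refine ⟨n, ?_⟩
  rw [PiNat.mem_cylinder_iff_eq.1 hβt]
  exact htU

lemma open_eventually_cyl {U : Set (ℕ → Bool)} (hU : IsOpen U) {β : ℕ → Bool} (hβ : β ∈ U) :
    ∀ᶠ n in atTop, PiNat.cylinder β n ⊆ U := by
  obtain ⟨n, hn⟩ := open_exists_cyl hU hβ
  filter_upwards [eventually_ge_atTop n] with m hm
  exact (PiNat.cylinder_anti β hm).trans hn

lemma isOpen_cyl (β : ℕ → Bool) (l : ℕ) : IsOpen (PiNat.cylinder β l) :=
  PiNat.isOpen_cylinder _ β l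

lemma meas_cyl (β : ℕ → Bool) (l : ℕ) : MeasurableSet (PiNat.cylinder β l) :=
  (isOpen_cyl β l).measurableSet

lemma meas_cyl' (s : List Bool) : MeasurableSet (cyl s) := by
  obtain ⟨β, hβ⟩ := exists_seg s
  rw [← hβ, cyl_seg]
  exact meas_cyl _ _

/-- relative density of `A` in the cylinder -/
noncomputable def dens (μ : Measure (ℕ → Bool)) (A : Set (ℕ → Bool)) (β : ℕ → Bool) (l : ℕ) :
    ℝ≥0∞ := 2 ^ l * μ (A ∩ PiNat.cylinder β l)

lemma dens_mono (μ : Measure (ℕ → Bool)) {A B : Set (ℕ → Bool)} (h : A ⊆ B) (β : ℕ → Bool)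
    (l : ℕ) : dens μ A β l ≤ dens μ B β l := by
  unfold dens; gcongr

lemma mu_cyl {μ : Measure (ℕ → Bool)}
    (hμ : ∀ s : List Bool, μ (cyl s) = (1/2 : ℝ≥0∞) ^ s.length) (β : ℕ → Bool) (l : ℕ) :
    μ (PiNat.cylinder β l) = (1/2 : ℝ≥0∞) ^ l := by
  rw [← cyl_seg, hμ, seg_length]

lemma isProb {μ : Measure (ℕ → Bool)}
    (hμ : ∀ s : List Bool, μ (cyl s) = (1/2 : ℝ≥0∞) ^ s.length) : IsProbabilityMeasure μ := by
  constructor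
  have := mu_cyl hμ (fun _ => false) 0
  simpa using this

lemma two_pow_mul (l : ℕ) : (2 : ℝ≥0∞) ^ l * (1/2) ^ l = 1 := by
  rw [← mul_pow, one_div, ENNReal.mul_inv_cancel (by simp) (by simp), one_pow]

/-- maximal inequality -/
lemma maximal {μ : Measure (ℕ → Bool)}
    (hμ : ∀ s : List Bool, μ (cyl s) = (1/2 : ℝ≥0∞) ^ s.length)
    {A : Set (ℕ → Bool)} (hA : MeasurableSet A) (c : ℝ≥0∞) :
    c * μ {β | ∃ l, c ≤ dens μ A β l} ≤ μ A := by
  classical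
  let Q : List Bool → Prop := fun s => c ≤ 2 ^ s.length * μ (A ∩ cyl s)
  let M : Set (List Bool) := {s | Q s ∧ ∀ l < s.length, ¬ Q (s.take l)}
  have hQ : ∀ β l, c ≤ dens μ A β l ↔ Q (seg β l) := by
    intro β l
    simp only [Q, dens, seg_length, cyl_seg]
  have hsub : {β | ∃ l, c ≤ dens μ A β l} ⊆ ⋃ s ∈ M, cyl s := by
    rintro β ⟨l, hl⟩
    have hex : ∃ l, Q (seg β l) := ⟨l, (hQ β l).1 hl⟩
    simp only [Set.mem_iUnion]
    refine ⟨seg β (Nat.find hex), ⟨Nat.find_spec hex, ?_⟩, ?_⟩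
    · intro k hk
      rw [seg_length] at hk
      rw [seg_take β hk.le]
      exact Nat.find_min hex hk
    · rw [mem_cyl_iff, seg_length]
  have hdisj : M.PairwiseDisjoint cyl := by
    intro s hs t ht hst
    rw [Function.onFun, Set.disjoint_left]
    intro γ h1 h2
    rw [mem_cyl_iff] at h1 h2
    rcases lt_trichotomy s.length t.length with h | h | h
    · apply ht.2 _ h
      rw [← h2, seg_take γ h.le, h1]
      exact hs.1
    · apply hst
      rw [← h1, ← h2, h]
    · apply hs.2 _ h
      rw [← h1, seg_take γ h.le, h2]
      exact ht.1
  calc c * μ {β | ∃ l, c ≤ dens μ A β l} ≤ c * μ (⋃ s ∈ M, cyl s) := by gcongr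
    _ ≤ c * ∑' s : M, μ (cyl s) := by
        gcongr
        exact measure_biUnion_le μ M.to_countable _
    _ = ∑' s : M, c * μ (cyl s) := by rw [ENNReal.tsum_mul_left]
    _ ≤ ∑' s : M, μ (A ∩ cyl s) := by
        refine ENNReal.tsum_le_tsum fun s => ?_
        have h := s.2.1
        calc c * μ (cyl s) ≤ (2 ^ s.1.length * μ (A ∩ cyl s)) * μ (cyl s) := by
              gcongr
          _ = μ (A ∩ cyl s) := by
              rw [hμ, mul_right_comm, two_pow_mul, one_mul]
    _ = μ (⋃ s ∈ M, A ∩ cyl s) := by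
        rw [measure_biUnion M.to_countable]
        · intro s hs t ht hst
          exact (hdisj hs ht hst).mono Set.inter_subset_right Set.inter_subset_right
        · intro s _
          exact hA.inter (meas_cyl' s)
    _ ≤ μ A := by
        apply measure_mono
        simp

/-- Lebesgue density -/
lemma lebesgue {μ : Measure (ℕ → Bool)}
    (hμ : ∀ s : List Bool, μ (cyl s) = (1/2 : ℝ≥0∞) ^ s.length)
    {V : Set (ℕ → Bool)} (hV : MeasurableSet V) :
    μ {β | β ∉ V ∧ ¬ Tendsto (dens μ V β) atTop (𝓝 0)} = 0 := by
  have := isProb hμ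
  have hsub : {β | β ∉ V ∧ ¬ Tendsto (dens μ V β) atTop (𝓝 0)} ⊆
      ⋃ k : ℕ, {β | β ∉ V ∧ ∃ᶠ l in atTop, ((k:ℝ≥0∞) + 1)⁻¹ ≤ dens μ V β l} := by
    rintro β ⟨hβ, hn⟩
    simp only [Set.mem_iUnion]
    by_contra hcon
    push Not at hcon
    apply hn
    rw [ENNReal.tendsto_nhds_zero]
    intro ε hε
    obtain ⟨n, hn⟩ := ENNReal.exists_inv_nat_lt hε.ne'
    have h1 := hcon n
    simp only [Set.mem_ofPred_eq, not_and, Filter.not_frequently, not_le] at h1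
    filter_upwards [h1 hβ] with l hl
    refine hl.le.trans (le_trans ?_ hn.le)
    gcongr
    exact le_self_add
  refine measure_mono_null hsub (measure_iUnion_null fun k => ?_)
  set c : ℝ≥0∞ := ((k:ℝ≥0∞) + 1)⁻¹ with hc
  have hc0 : c ≠ 0 := by simp [hc]
  have hct : c ≠ ⊤ := by simp [hc]
  have key : ∀ ε : ℝ≥0∞, 0 < ε →
      c * μ {β | β ∉ V ∧ ∃ᶠ l in atTop, c ≤ dens μ V β l} ≤ ε := by
    intro ε hε
    obtain ⟨K, hKV, hK, hlt⟩ := hV.exists_isClosed_sdiff_lt (measure_ne_top μ V) hε.ne'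
    refine le_trans ?_ hlt.le
    refine le_trans ?_ (maximal hμ (hV.diff hK.measurableSet) c)
    gcongr
    rintro ⟨hβ, hfr⟩
    have hev := open_eventually_cyl hK.isOpen_compl (β := β) (fun h => hβ (hKV h))
    obtain ⟨l, hl, hl2⟩ := (hfr.and_eventually hev).exists
    refine ⟨l, hl.trans ?_⟩
    unfold dens
    gcongr 2 ^ l * μ ?_
    rintro γ ⟨h1, h2⟩
    exact ⟨⟨h1, hl2 h2⟩, h2⟩
  have h0 : c * μ {β | β ∉ V ∧ ∃ᶠ l in atTop, c ≤ dens μ V β l} = 0 := by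
    by_contra hne
    have := key _ (ENNReal.half_pos hne)
    have hfin : c * μ {β | β ∉ V ∧ ∃ᶠ l in atTop, c ≤ dens μ V β l} ≠ ⊤ :=
      ENNReal.mul_ne_top hct (measure_ne_top _ _)
    exact absurd this (not_le.2 (ENNReal.half_lt_self hne hfin))
  exact (mul_eq_zero.1 h0).resolve_left hc0

lemma eps_sum (l : ℕ) :
    (2:ℝ≥0∞) ^ l * ∑' m : ℕ, ((1/4:ℝ≥0∞) ^ (m + l) * (1/16)) ≤ (1/2) ^ l * (1/8) := by
  have h1 : ∑' m : ℕ, ((1/4:ℝ≥0∞) ^ (m + l) * (1/16)) ≤ (1/4) ^ l * (1/8) := by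
    calc ∑' m : ℕ, ((1/4:ℝ≥0∞) ^ (m + l) * (1/16))
        ≤ ∑' m : ℕ, ((1/2:ℝ≥0∞) ^ m * ((1/4) ^ l * (1/16))) := by
          refine ENNReal.tsum_le_tsum fun m => ?_
          rw [pow_add, mul_assoc]
          gcongr
          norm_num
      _ = 2 * ((1/4) ^ l * (1/16)) := by
          rw [ENNReal.tsum_mul_right]
          congr 1
          simp
      _ = (1/4) ^ l * (1/8) := by
          rw [mul_left_comm]
          congr 1
          rw [← ENNReal.toReal_eq_toReal_iff' (by finiteness) (by finiteness)]
          simp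
          norm_num
  calc (2:ℝ≥0∞) ^ l * ∑' m : ℕ, ((1/4:ℝ≥0∞) ^ (m + l) * (1/16))
      ≤ 2 ^ l * ((1/4) ^ l * (1/8)) := by gcongr
    _ = (1/2) ^ l * (1/8) := by
      rw [← mul_assoc, ← mul_pow]
      congr 2
      rw [← ENNReal.toReal_eq_toReal_iff' (by finiteness) (by finiteness)]
      simp
      norm_num

lemma isOpen_level (U : Set (ℕ → Bool)) (n : ℕ) : IsOpen {γ | PiNat.cylinder γ n ⊆ U} := by
  rw [isOpen_iff_mem_nhds]
  intro γ hγ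
  filter_upwards [(isOpen_cyl γ n).mem_nhds (PiNat.self_mem_cylinder γ n)] with δ hδ
  have := PiNat.mem_cylinder_iff_eq.1 hδ
  show PiNat.cylinder δ n ⊆ U
  rw [this]
  exact hγ

lemma interp {μ : Measure (ℕ → Bool)}
    (hμ : ∀ s : List Bool, μ (cyl s) = (1/2 : ℝ≥0∞) ^ s.length)
    {U V : Set (ℕ → Bool)} (hU : IsOpen U) (hV : MeasurableSet V) (hVU : V ⊆ U)
    (hR : ∀ β ∉ U, Tendsto (dens μ V β) atTop (𝓝 0)) :
    ∃ W, IsOpen W ∧ V ⊆ W ∧ W ⊆ U ∧ (∀ β ∉ W, Tendsto (dens μ V β) atTop (𝓝 0)) ∧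
      ∀ β l, (∀ n < l, ¬ PiNat.cylinder β n ⊆ U) →
        dens μ W β l ≤ dens μ V β l + (1/2) ^ l * (1/8) := by
  have := isProb hμ
  set Z := {β | β ∉ V ∧ ¬ Tendsto (dens μ V β) atTop (𝓝 0)} with hZ
  have hZ0 : μ (toMeasurable μ Z) = 0 := by
    rw [measure_toMeasurable]; exact lebesgue hμ hV
  set B := V ∪ toMeasurable μ Z with hB
  have hBm : MeasurableSet B := hV.union (measurableSet_toMeasurable _ _)
  have hex : ∀ n : ℕ, ∃ O, B ⊆ O ∧ IsOpen O ∧ μ (O \ B) < (1/4:ℝ≥0∞) ^ n * (1/16) := by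
    intro n
    obtain ⟨O, h1, h2, -, h3⟩ := hBm.exists_isOpen_sdiff_lt (μ := μ) (measure_ne_top μ B)
      (ε := (1/4:ℝ≥0∞) ^ n * (1/16)) (by simp)
    exact ⟨O, h1, h2, h3⟩
  choose O hBO hO hOm using hex
  have hmemU : ∀ β ∈ U, β ∈ B → β ∈ ⋃ n, O n ∩ {γ | PiNat.cylinder γ n ⊆ U} := by
    intro β hβ hβB
    obtain ⟨n, hn⟩ := open_exists_cyl hU hβ
    exact Set.mem_iUnion.2 ⟨n, hBO n hβB, hn⟩
  refine ⟨⋃ n, O n ∩ {γ | PiNat.cylinder γ n ⊆ U}, ?_, ?_, ?_, ?_, ?_⟩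
  · exact isOpen_iUnion fun n => (hO n).inter (isOpen_level U n)
  · intro β hβ
    exact hmemU β (hVU hβ) (Or.inl hβ)
  · intro β hβ
    obtain ⟨n, -, hn⟩ := Set.mem_iUnion.1 hβ
    exact hn (PiNat.self_mem_cylinder β n)
  · intro β hβ
    by_contra hcon
    by_cases hβU : β ∈ U
    · by_cases hβV : β ∈ V
      · exact hβ (hmemU β hβU (Or.inl hβV))
      · exact hβ (hmemU β hβU (Or.inr (subset_toMeasurable _ _ ⟨hβV, hcon⟩)))
    · exact hcon (hR β hβU)
  · intro β l hl
    have hsub : (⋃ n, O n ∩ {γ | PiNat.cylinder γ n ⊆ U}) ∩ PiNat.cylinder β l ⊆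
        ((V ∩ PiNat.cylinder β l) ∪ toMeasurable μ Z) ∪ ⋃ m, (O (m + l) \ B) := by
      rintro γ ⟨hγ, hγl⟩
      obtain ⟨n, hn1, hn2⟩ := Set.mem_iUnion.1 hγ
      by_cases hγB : γ ∈ B
      · left
        rcases hγB with h | h
        · exact Or.inl ⟨h, hγl⟩
        · exact Or.inr h
      · right
        have hln : l ≤ n := by
          by_contra hlt
          push Not at hlt
          apply hl n hlt
          have : γ ∈ PiNat.cylinder β n := PiNat.cylinder_anti β hlt.le hγl
          rw [← PiNat.mem_cylinder_iff_eq.1 this]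
          exact hn2
        refine Set.mem_iUnion.2 ⟨n - l, ?_⟩
        rw [Nat.sub_add_cancel hln]
        exact ⟨hn1, hγB⟩
    have hle : μ ((⋃ n, O n ∩ {γ | PiNat.cylinder γ n ⊆ U}) ∩ PiNat.cylinder β l) ≤
        μ (V ∩ PiNat.cylinder β l) + ∑' m : ℕ, ((1/4:ℝ≥0∞) ^ (m + l) * (1/16)) := by
      refine (measure_mono hsub).trans ((measure_union_le _ _).trans ?_)
      refine add_le_add ?_ ?_
      · refine (measure_union_le _ _).trans ?_
        rw [hZ0, add_zero]
      · refine (measure_iUnion_le (μ := μ) _).trans ?_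
        exact ENNReal.tsum_le_tsum fun m => (hOm (m + l)).le
    unfold dens
    calc _ ≤ 2 ^ l * (μ (V ∩ PiNat.cylinder β l) +
            ∑' m : ℕ, ((1/4:ℝ≥0∞) ^ (m + l) * (1/16))) := by gcongr
      _ ≤ _ := by
        rw [mul_add]
        exact add_le_add le_rfl (eps_sum l)

/-- the strong inclusion relation -/
def Rel (μ : Measure (ℕ → Bool)) (U V : Set (ℕ → Bool)) : Prop :=
  IsOpen U ∧ IsOpen V ∧ V ⊆ U ∧ ∀ β ∉ U, Tendsto (dens μ V β) atTop (𝓝 0)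

lemma tendsto_aux : Tendsto (fun l : ℕ => (1/2:ℝ≥0∞) ^ l * (1/8)) atTop (𝓝 0) := by
  have h := ENNReal.tendsto_pow_atTop_nhds_zero_of_lt_one (r := 1/2) (by
    rw [one_div]; exact ENNReal.one_half_lt_one)
  have := ENNReal.Tendsto.mul_const (b := (1/8:ℝ≥0∞)) h (Or.inr (by finiteness))
  simpa using this

lemma tendsto_of_le {μ : Measure (ℕ → Bool)} {U V W : Set (ℕ → Bool)}
    (h : ∀ β l, (∀ n < l, ¬ PiNat.cylinder β n ⊆ U) →
        dens μ W β l ≤ dens μ V β l + (1/2) ^ l * (1/8)) {β : ℕ → Bool} (hβ : β ∉ U)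
    (hV : Tendsto (dens μ V β) atTop (𝓝 0)) : Tendsto (dens μ W β) atTop (𝓝 0) := by
  have h0 : Tendsto (fun l => dens μ V β l + (1/2:ℝ≥0∞) ^ l * (1/8)) atTop (𝓝 0) := by
    simpa using hV.add tendsto_aux
  refine tendsto_of_tendsto_of_tendsto_of_le_of_le tendsto_const_nhds h0 (fun _ => zero_le) ?_
  intro l
  exact h β l fun n _ hn => hβ (hn (PiNat.self_mem_cylinder β n))

lemma rel_interp {μ : Measure (ℕ → Bool)}
    (hμ : ∀ s : List Bool, μ (cyl s) = (1/2 : ℝ≥0∞) ^ s.length)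
    {U V : Set (ℕ → Bool)} (h : Rel μ U V) : ∃ W, Rel μ U W ∧ Rel μ W V := by
  obtain ⟨hU, hV, hVU, hR⟩ := h
  obtain ⟨W, hW, h1, h2, h3, h4⟩ := interp hμ hU hV.measurableSet hVU hR
  exact ⟨W, ⟨hU, hW, h2, fun β hβ => tendsto_of_le h4 hβ (hR β hβ)⟩, hW, hV, h1, h3⟩

/-- base chain -/
lemma base_chain {μ : Measure (ℕ → Bool)}
    (hμ : ∀ s : List Bool, μ (cyl s) = (1/2 : ℝ≥0∞) ^ s.length)
    {H : Set (ℕ → Bool)} (hH : IsGδ H) (hH0 : μ H = 0) :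
    ∃ U : ℕ → Set (ℕ → Bool), U 0 = Set.univ ∧ (∀ m, Rel μ (U m) (U (m + 1))) ∧
      (∀ β, β ∈ H ↔ ∀ m, β ∈ U m) ∧
      ∀ m β l, (∀ n < l, ¬ PiNat.cylinder β n ⊆ U m) → dens μ (U (m + 1)) β l ≤ 1/8 := by
  obtain ⟨O, hO, rfl⟩ := isGδ_iff_eq_iInter_nat.1 hH
  set H := ⋂ n, O n with hHdef
  have hd0 : ∀ β l, dens μ H β l = 0 := by
    intro β l
    unfold dens
    rw [measure_mono_null Set.inter_subset_left hH0, mul_zero]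
  have step : ∀ (m : ℕ) (U : {U : Set (ℕ → Bool) // IsOpen U ∧ H ⊆ U}),
      ∃ W : {U : Set (ℕ → Bool) // IsOpen U ∧ H ⊆ U}, W.1 ⊆ U.1 ∧ W.1 ⊆ O m ∧
        ∀ β l, (∀ n < l, ¬ PiNat.cylinder β n ⊆ U.1) → dens μ W.1 β l ≤
          dens μ H β l + (1/2) ^ l * (1/8) := by
    rintro m ⟨U, hU, hHU⟩
    obtain ⟨W, hW, h1, h2, h3, h4⟩ := interp hμ hU hH.measurableSet hHU (fun β _ => by
      simp only [funext (hd0 β)]; exact tendsto_const_nhds)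
    refine ⟨⟨W ∩ O m, hW.inter (hO m), Set.subset_inter h1 (Set.iInter_subset _ _)⟩,
      Set.inter_subset_left.trans h2, Set.inter_subset_right, ?_⟩
    intro β l hl
    exact (dens_mono μ Set.inter_subset_left β l).trans (h4 β l hl)
  choose nxt hn1 hn2 hn3 using step
  let u : ℕ → {U : Set (ℕ → Bool) // IsOpen U ∧ H ⊆ U} := fun n =>
    Nat.rec ⟨Set.univ, isOpen_univ, Set.subset_univ _⟩ (fun m U => nxt m U) n
  have hu : ∀ m, u (m + 1) = nxt m (u m) := fun m => rfl
  refine ⟨fun m => (u m).1, rfl, ?_, ?_, ?_⟩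
  · intro m
    refine ⟨(u m).2.1, (u (m+1)).2.1, ?_, ?_⟩
    · exact hn1 m (u m)
    · intro β hβ
      have := hn3 m (u m)
      rw [← hu] at this
      refine tendsto_of_le this hβ ?_
      simp only [funext (hd0 β)]; exact tendsto_const_nhds
  · intro β
    constructor
    · intro hβ m
      exact (u m).2.2 hβ
    · intro h
      refine Set.mem_iInter.2 fun m => ?_
      exact hn2 m (u m) (h (m + 1))
  · intro m β l hl
    have := hn3 m (u m) β l hl
    rw [← hu, hd0, zero_add] at this
    refine this.trans ?_
    calc (1/2:ℝ≥0∞) ^ l * (1/8) ≤ 1 * (1/8) := by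
          gcongr
          apply pow_le_one' 
          simp
      _ = 1/8 := one_mul _

/-- dyadic refinement of a chain -/
lemma refine_chain {α : Type*} (R : α → α → Prop) (hR : ∀ a b, R a b → ∃ c, R a c ∧ R c b)
    (u : ℕ → α) (hu : ∀ i, R (u i) (u (i + 1))) :
    ∃ c : ℕ → ℕ → α, c 0 = u ∧ (∀ n i, c (n + 1) (2 * i) = c n i) ∧
      ∀ n i, R (c n i) (c n (i + 1)) := by
  have step : ∀ v : {v : ℕ → α // ∀ i, R (v i) (v (i + 1))},
      ∃ w : {v : ℕ → α // ∀ i, R (v i) (v (i + 1))}, ∀ i, w.1 (2 * i) = v.1 i := by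
    rintro ⟨v, hv⟩
    choose mid h1 h2 using fun i => hR _ _ (hv i)
    refine ⟨⟨fun k => if k % 2 = 0 then v (k / 2) else mid (k / 2), ?_⟩, ?_⟩
    · intro i
      rcases Nat.even_or_odd' i with ⟨j, rfl | rfl⟩
      · have e1 : (2 * j) % 2 = 0 := by omega
        have e2 : (2 * j + 1) % 2 ≠ 0 := by omega
        have e3 : (2 * j) / 2 = j := by omega
        have e4 : (2 * j + 1) / 2 = j := by omega
        simp only [e1, e2, e3, e4, if_true, if_false]
        exact h1 j
      · have e1 : (2 * j + 1 + 1) % 2 = 0 := by omega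
        have e2 : (2 * j + 1) % 2 ≠ 0 := by omega
        have e3 : (2 * j + 1 + 1) / 2 = j + 1 := by omega
        have e4 : (2 * j + 1) / 2 = j := by omega
        simp only [e1, e2, e3, e4, if_true, if_false]
        exact h2 j
    · intro i
      simp
  choose nxt hn using step
  let w : ℕ → {v : ℕ → α // ∀ i, R (v i) (v (i + 1))} := fun n =>
    Nat.rec ⟨u, hu⟩ (fun _ v => nxt v) n
  exact ⟨fun n => (w n).1, rfl, fun n i => hn (w n) i, fun n => (w n).2⟩

/-- the martingale of averages -/
noncomputable def avg (μ : Measure (ℕ → Bool)) (φ : (ℕ → Bool) → ℝ) (s : List Bool) : ℝ :=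
  2 ^ s.length * ∫ x in cyl s, φ x ∂μ

lemma mu_real {μ : Measure (ℕ → Bool)}
    (hμ : ∀ s : List Bool, μ (cyl s) = (1/2 : ℝ≥0∞) ^ s.length) (s : List Bool) :
    μ.real (cyl s) = (1/2) ^ s.length := by
  rw [Measure.real, hμ]; simp

lemma two_pow_mul' (l : ℕ) : (2 : ℝ) ^ l * (1/2) ^ l = 1 := by
  rw [← mul_pow]; norm_num

lemma integrable_of_bdd {μ : Measure (ℕ → Bool)} [IsProbabilityMeasure μ]
    {φ : (ℕ → Bool) → ℝ} (hφ : Measurable φ) (hb : ∀ x, φ x ∈ Set.Icc (0:ℝ) 1) :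
    Integrable φ μ := by
  refine Integrable.of_bound hφ.aestronglyMeasurable 1 (ae_of_all _ fun x => ?_)
  rw [Real.norm_eq_abs, abs_of_nonneg (hb x).1]
  exact (hb x).2

lemma avg_close {μ : Measure (ℕ → Bool)}
    (hμ : ∀ s : List Bool, μ (cyl s) = (1/2 : ℝ≥0∞) ^ s.length)
    {φ : (ℕ → Bool) → ℝ} (hφ : Measurable φ) (hb : ∀ x, φ x ∈ Set.Icc (0:ℝ) 1)
    {T : Set (ℕ → Bool)} (hT : MeasurableSet T) {v ε : ℝ} (hv : v ∈ Set.Icc (0:ℝ) 1)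
    (hε : 0 ≤ ε) (β : ℕ → Bool) (l : ℕ)
    (h : ∀ γ ∈ PiNat.cylinder β l, γ ∉ T → |φ γ - v| ≤ ε) :
    |avg μ φ (seg β l) - v| ≤ ε + (dens μ T β l).toReal := by
  have := isProb hμ
  have hIntg := integrable_of_bdd (μ := μ) hφ hb
  set C := PiNat.cylinder β l with hC
  have hCm : MeasurableSet C := meas_cyl β l
  have hCr : μ.real C = (1/2) ^ l := by
    rw [hC, ← cyl_seg, mu_real hμ, seg_length]
  have e1 : avg μ φ (seg β l) - v = 2 ^ l * ∫ x in C, (φ x - v) ∂μ := by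
    unfold avg
    rw [cyl_seg, seg_length, integral_sub hIntg.integrableOn (integrable_const _), mul_sub,
      setIntegral_const, hCr, smul_eq_mul, ← mul_assoc, two_pow_mul', one_mul]
  have hindi : Integrable (T.indicator (fun _ => (1:ℝ))) (μ.restrict C) :=
    (integrable_const (1:ℝ)).indicator hT
  have e2 : ‖∫ x in C, (φ x - v) ∂μ‖ ≤ ∫ x in C, (ε + T.indicator (fun _ => (1:ℝ)) x) ∂μ := by
    apply norm_integral_le_of_norm_le ((integrable_const _).add hindi)
    rw [ae_restrict_iff' hCm]
    refine ae_of_all _ fun x hx => ?_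
    rw [Real.norm_eq_abs]
    by_cases hxT : x ∈ T
    · have e : T.indicator (fun _ => (1:ℝ)) x = 1 := Set.indicator_of_mem hxT _
      show _ ≤ ε + T.indicator (fun _ => (1:ℝ)) x
      rw [e, abs_le]
      have := hb x
      constructor <;> linarith [this.1, this.2, hv.1, hv.2]
    · have e : T.indicator (fun _ => (1:ℝ)) x = 0 := Set.indicator_of_notMem hxT _
      show _ ≤ ε + T.indicator (fun _ => (1:ℝ)) x
      rw [e, add_zero]
      exact h x hx hxT
  have e3 : ∫ x in C, (ε + T.indicator (fun _ => (1:ℝ)) x) ∂μ =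
      ε * (1/2) ^ l + μ.real (T ∩ C) := by
    rw [integral_add (integrable_const _) hindi, setIntegral_const, hCr, smul_eq_mul, mul_comm,
      integral_indicator hT, Measure.restrict_restrict hT, setIntegral_const, smul_eq_mul, mul_one]
  rw [e1, abs_mul, abs_of_nonneg (by positivity : (0:ℝ) ≤ 2 ^ l)]
  rw [Real.norm_eq_abs, e3] at e2
  calc (2:ℝ) ^ l * |∫ x in C, (φ x - v) ∂μ| ≤ 2 ^ l * (ε * (1/2) ^ l + μ.real (T ∩ C)) := by
        gcongr
    _ = ε * (2 ^ l * (1/2) ^ l) + 2 ^ l * μ.real (T ∩ C) := by ring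
    _ = ε + (dens μ T β l).toReal := by
        rw [two_pow_mul', mul_one, dens, ENNReal.toReal_mul, Measure.real]
        simp [hC]

lemma cyl_snoc (s : List Bool) (b : Bool) (β : ℕ → Bool) :
    β ∈ cyl (s ++ [b]) ↔ β ∈ cyl s ∧ β s.length = b := by
  rw [mem_cyl_iff, mem_cyl_iff]
  have : seg β (s ++ [b]).length = seg β s.length ++ [β s.length] := by
    rw [List.length_append, List.length_singleton]
    unfold seg
    rw [List.ofFn_succ_last]
    simp
  rw [this]
  constructor
  · intro h
    have := List.append_inj h (by simp)
    exact ⟨this.1, by simpa using this.2⟩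
  · rintro ⟨h1, h2⟩
    rw [h1, h2]

lemma avg_martingale {μ : Measure (ℕ → Bool)}
    (hμ : ∀ s : List Bool, μ (cyl s) = (1/2 : ℝ≥0∞) ^ s.length)
    {φ : (ℕ → Bool) → ℝ} (hφ : Measurable φ) (hb : ∀ x, φ x ∈ Set.Icc (0:ℝ) 1) :
    IsMartingale (avg μ φ) := by
  have := isProb hμ
  have hIntg := integrable_of_bdd (μ := μ) hφ hb
  constructor
  · intro s
    constructor
    · unfold avg
      have : 0 ≤ ∫ x in cyl s, φ x ∂μ := integral_nonneg fun x => (hb x).1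
      positivity
    · unfold avg
      have : ∫ x in cyl s, φ x ∂μ ≤ ∫ x in cyl s, (1:ℝ) ∂μ :=
        integral_mono hIntg.integrableOn (integrable_const _) fun x => (hb x).2
      rw [setIntegral_const, mu_real hμ, smul_eq_mul, mul_one] at this
      calc _ ≤ (2:ℝ) ^ s.length * (1/2) ^ s.length := by gcongr
        _ = 1 := two_pow_mul' _
  · intro s
    have hun : cyl s = cyl (s ++ [false]) ∪ cyl (s ++ [true]) := by
      ext β
      rw [Set.mem_union, cyl_snoc, cyl_snoc]
      cases β s.length <;> simp
    have hdis : Disjoint (cyl (s ++ [false])) (cyl (s ++ [true])) := by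
      rw [Set.disjoint_left]
      intro β h1 h2
      rw [cyl_snoc] at h1 h2
      rw [h1.2] at h2
      simp at h2
    unfold avg
    conv_lhs => rw [hun]
    rw [setIntegral_union hdis (meas_cyl' _) hIntg.integrableOn hIntg.integrableOn]
    simp only [List.length_append, List.length_singleton, pow_succ]
    ring

/-- the wave set -/
def waveSet : Set ℝ := {y | ∃ k : ℕ, (4 * k : ℝ) ≤ y ∧ y ≤ 4 * k + 1}

/-- a Lipschitz wave -/
noncomputable def wave (x : ℝ) : ℝ := min 1 (Metric.infDist x waveSet)

lemma wave_nonempty : waveSet.Nonempty := ⟨0, 0, by simp⟩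

lemma wave_mem (x : ℝ) : wave x ∈ Set.Icc (0:ℝ) 1 :=
  ⟨le_min zero_le_one Metric.infDist_nonneg, min_le_left _ _⟩

lemma wave_lip (x y : ℝ) : |wave x - wave y| ≤ |x - y| := by
  unfold wave
  refine (abs_min_sub_min_le_max _ _ _ _).trans ?_
  simp only [sub_self, abs_zero]
  refine max_le (abs_nonneg _) ?_
  have := (Metric.lipschitz_infDist_pt waveSet).dist_le_mul x y
  simpa [Real.dist_eq] using this

lemma wave_cont : Continuous wave :=
  continuous_const.min (Metric.continuous_infDist_pt _)

lemma wave_zero (k : ℕ) {x : ℝ} (h1 : (4 * k : ℝ) ≤ x) (h2 : x ≤ 4 * k + 1) : wave x = 0 := by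
  have : Metric.infDist x waveSet = 0 := Metric.infDist_zero_of_mem ⟨k, h1, h2⟩
  simp [wave, this]

lemma wave_one (k : ℕ) {x : ℝ} (h1 : (4 * k + 2 : ℝ) ≤ x) (h2 : x ≤ 4 * k + 3) : wave x = 1 := by
  unfold wave
  apply min_eq_left
  rw [Metric.le_infDist wave_nonempty]
  rintro y ⟨j, hj1, hj2⟩
  rw [Real.dist_eq]
  rcases le_or_gt j k with h | h
  · have : (j:ℝ) ≤ k := by exact_mod_cast h
    rw [le_abs]; left; linarith
  · have : (k:ℝ) + 1 ≤ j := by exact_mod_cast h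
    rw [le_abs]; right; linarith

/-- the height function of a dyadic chain -/
noncomputable def height (c : ℕ → ℕ → Set (ℕ → Bool)) (β : ℕ → Bool) : ℝ≥0∞ :=
  ⨆ n : ℕ, ⨆ i : ℕ, (c n i).indicator (fun _ => (i:ℝ≥0∞) / 2 ^ n) β

lemma height_meas (c : ℕ → ℕ → Set (ℕ → Bool)) (hc : ∀ n i, MeasurableSet (c n i)) :
    Measurable (height c) := by
  unfold height
  exact Measurable.iSup fun n => Measurable.iSup fun i => measurable_const.indicator (hc n i)

lemma le_height {c : ℕ → ℕ → Set (ℕ → Bool)} {β : ℕ → Bool} {n i : ℕ} (h : β ∈ c n i) :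
    (i:ℝ≥0∞) / 2 ^ n ≤ height c β := by
  unfold height
  refine le_iSup₂_of_le n i ?_
  rw [Set.indicator_of_mem h]

lemma chain_scale {c : ℕ → ℕ → Set (ℕ → Bool)} (h2 : ∀ n i, c (n + 1) (2 * i) = c n i)
    (n i d : ℕ) : c (n + d) (2 ^ d * i) = c n i := by
  induction d with
  | zero => simp
  | succ d ih =>
    rw [← ih, ← h2 (n + d), ← mul_assoc, ← pow_succ', add_assoc]

lemma height_le {c : ℕ → ℕ → Set (ℕ → Bool)} (h2 : ∀ n i, c (n + 1) (2 * i) = c n i)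
    (ha : ∀ n, Antitone (c n)) {β : ℕ → Bool} {n j : ℕ} (h : β ∉ c n j) :
    height c β ≤ (j:ℝ≥0∞) / 2 ^ n := by
  unfold height
  refine iSup₂_le fun m i => ?_
  by_cases hm : β ∈ c m i
  · rw [Set.indicator_of_mem hm]
    rw [← chain_scale h2 m i n] at hm
    rw [← chain_scale h2 n j m, add_comm n m] at h
    have hlt : 2 ^ n * i ≤ 2 ^ m * j := by
      by_contra hcon
      push Not at hcon
      exact h (ha _ hcon.le hm)
    have hlt' : (2:ℝ≥0∞) ^ n * i ≤ 2 ^ m * j := by exact_mod_cast hlt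
    rw [ENNReal.div_le_iff (by simp) (by finiteness), ← ENNReal.mul_div_right_comm,
      ENNReal.le_div_iff_mul_le (by simp) (by simp)]
    rw [mul_comm, mul_comm (j:ℝ≥0∞)]
    exact hlt'
  · rw [Set.indicator_of_notMem hm]
    exact zero_le

lemma single {μ : Measure (ℕ → Bool)}
    (hμ : ∀ s : List Bool, μ (cyl s) = (1/2 : ℝ≥0∞) ^ s.length)
    {H : Set (ℕ → Bool)} (hH : IsGδ H) (hH0 : μ H = 0) :
    ∃ g : List Bool → ℝ, IsMartingale g ∧
      (∀ β ∉ H, ∃ L, Tendsto (fun l => g (seg β l)) atTop (𝓝 L)) ∧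
      ∀ β ∈ H, ∀ N, (∃ p ≥ N, g (seg β p) ≤ 1/8) ∧ ∃ q ≥ N, 7/8 ≤ g (seg β q) := by
  have := isProb hμ
  obtain ⟨U, hU0, hUR, hHU, hUd⟩ := base_chain hμ hH hH0
  obtain ⟨c, hc0, hc2, hcR⟩ := refine_chain (Rel μ) (fun a b h => rel_interp hμ h) U hUR
  have hop : ∀ n i, IsOpen (c n i) := fun n i => (hcR n i).1
  have hanti : ∀ n, Antitone (c n) := fun n =>
    antitone_nat_of_succ_le fun i => (hcR n i).2.2.1
  have hcU : ∀ n m, c n (2 ^ n * m) = U m := by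
    intro n m
    have := chain_scale hc2 0 m n
    rw [zero_add] at this
    rw [this, hc0]
  set φ : (ℕ → Bool) → ℝ := fun β => wave (height c β).toReal with hφdef
  have hφ : Measurable φ :=
    wave_cont.measurable.comp (height_meas c fun n i => (hop n i).measurableSet).ennreal_toReal
  have hb : ∀ x, φ x ∈ Set.Icc (0:ℝ) 1 := fun x => wave_mem _
  -- real bounds on the height
  have hbd : ∀ n i j γ, γ ∈ c n i → γ ∉ c n j →
      (i:ℝ) / 2 ^ n ≤ (height c γ).toReal ∧ (height c γ).toReal ≤ (j:ℝ) / 2 ^ n := by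
    intro n i j γ h1 h2
    have l1 := le_height h1
    have l2 := height_le hc2 hanti h2
    have hj : ((j:ℝ≥0∞) / 2 ^ n) ≠ ⊤ := by
      apply ENNReal.div_ne_top <;> simp
    have hne : height c γ ≠ ⊤ := ne_top_of_le_ne_top hj l2
    constructor
    · have := ENNReal.toReal_mono hne l1
      simpa using this
    · have := ENNReal.toReal_mono hj l2
      simpa using this
  refine ⟨avg μ φ, avg_martingale hμ hφ hb, ?_, ?_⟩
  · intro β hβ
    refine ⟨φ β, ?_⟩
    rw [Metric.tendsto_atTop']
    intro ε hε
    rw [hHU] at hβ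
    push Not at hβ
    obtain ⟨m, hm⟩ := hβ
    obtain ⟨n, hn⟩ := exists_pow_lt_of_lt_one (show 0 < ε / 4 by positivity)
      (show (1/2:ℝ) < 1 by norm_num)
    have hex : ∃ j, β ∉ c n j := ⟨2 ^ n * m, by rw [hcU]; exact hm⟩
    classical
    obtain ⟨i, hi1, hi2⟩ : ∃ i, β ∈ c n i ∧ β ∉ c n (i + 1) := by
      have hpos : Nat.find hex ≠ 0 := by
        intro h0
        have := Nat.find_spec hex
        rw [h0] at this
        apply this
        have h := hcU n 0
        rw [mul_zero, hU0] at h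
        rw [h]
        trivial
      refine ⟨Nat.find hex - 1, ?_, ?_⟩
      · have := Nat.find_min hex (m := Nat.find hex - 1) (by omega)
        simpa using this
      · rw [Nat.sub_add_cancel (by omega)]
        exact Nat.find_spec hex
    have hβ2 : β ∉ c n (i + 2) := fun h => hi2 (hanti n (by omega) h)
    have hden := (hcR n (i + 1)).2.2.2 β hi2
    have hden' : Tendsto (fun l => (dens μ (c n (i + 2)) β l).toReal) atTop (𝓝 0) := by
      have := (ENNReal.tendsto_toReal (a := 0) (by simp)).comp hden
      rw [ENNReal.toReal_zero] at this
      exact this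
    have hev1 := hden'.eventually (gt_mem_nhds (show 0 < ε / 2 by positivity))
    have hev2 := open_eventually_cyl (hop n i) hi1
    obtain ⟨N, hN⟩ := ((hev1.and hev2).exists_forall_of_atTop)
    refine ⟨N, fun l hl => ?_⟩
    obtain ⟨h1, h2⟩ := hN l hl.le
    have key := avg_close hμ hφ hb (hop n (i + 2)).measurableSet (hb β)
      (ε := 2 * (1/2) ^ n) (by positivity) β l (by
        intro γ hγ hγT
        refine (wave_lip _ _).trans ?_
        obtain ⟨a1, a2⟩ := hbd n i (i + 2) γ (h2 hγ) hγT
        obtain ⟨b1, b2⟩ := hbd n i (i + 2) β hi1 hβ2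
        have e : ((i + 2 : ℕ) : ℝ) / 2 ^ n = (i:ℝ) / 2 ^ n + 2 * (1/2) ^ n := by
          push_cast
          rw [one_div, inv_pow]
          ring
        rw [e] at a2 b2
        rw [abs_le]
        constructor <;> linarith)
    rw [Real.dist_eq]
    linarith
  · intro β hβ
    have hβU : ∀ m, β ∈ U m := (hHU β).1 hβ
    have hex : ∀ m, ∃ l, PiNat.cylinder β l ⊆ U m := fun m =>
      open_exists_cyl (hUR m).1 (hβU m)
    classical
    let e : ℕ → ℕ := fun m => Nat.find (hex m)
    have he1 : ∀ m, PiNat.cylinder β (e m) ⊆ U m := fun m => Nat.find_spec (hex m)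
    have he2 : ∀ m, dens μ (U (m + 1)) β (e m) ≤ 1/8 := fun m =>
      hUd m β (e m) fun n hn => Nat.find_min (hex m) hn
    have hmono : StrictMono e := by
      refine strictMono_nat_of_lt_succ fun m => ?_
      have hle : e m ≤ e (m + 1) :=
        Nat.find_min' (hex m) ((he1 (m + 1)).trans (hUR m).2.2.1)
      refine lt_of_le_of_ne hle fun heq => ?_
      have h1 := he1 (m + 1)
      rw [← heq] at h1
      have h2 := he2 m
      unfold dens at h2
      rw [Set.inter_eq_self_of_subset_right h1, mu_cyl hμ, two_pow_mul] at h2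
      have := ENNReal.toReal_mono (by finiteness) h2
      norm_num at this
    have hclose : ∀ (m : ℕ) (v : ℝ), v ∈ Set.Icc (0:ℝ) 1 →
        (∀ x : ℝ, (m:ℝ) ≤ x → x ≤ m + 1 → wave x = v) →
        |avg μ φ (seg β (e m)) - v| ≤ 1/8 := by
      intro m v hv hw
      have key := avg_close hμ hφ hb (hUR m).2.1.measurableSet hv (ε := 0) le_rfl β (e m) (by
        intro γ hγ hγT
        have hγm := he1 m hγ
        have hU' : ∀ k, U k = c 0 k := fun k => by rw [hc0]
        rw [hU'] at hγm hγT
        obtain ⟨a1, a2⟩ := hbd 0 m (m + 1) γ hγm hγT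
        simp only [pow_zero, div_one, Nat.cast_add, Nat.cast_one] at a1 a2
        simp only [hφdef, hw _ a1 a2, sub_self, abs_zero, le_refl])
      have h3 := ENNReal.toReal_mono (by finiteness) (he2 m)
      have h4 : ((1/8 : ℝ≥0∞)).toReal = 1/8 := by simp
      rw [h4] at h3
      linarith
    intro N
    constructor
    · refine ⟨e (4 * N), le_trans (by omega) hmono.le_apply, ?_⟩
      have := hclose (4 * N) 0 (by simp) (fun x h1 h2 => by
        push_cast at h1 h2
        exact wave_zero N h1 h2)
      rw [abs_le] at this
      linarith [this.2]
    · refine ⟨e (4 * N + 2), le_trans (by omega) hmono.le_apply, ?_⟩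
      have := hclose (4 * N + 2) 1 (by simp) (fun x h1 h2 => by
        push_cast at h1 h2
        exact wave_one N h1 (by linarith))
      rw [abs_le] at this
      linarith [this.1]

lemma mem_divSet_iff {f : List Bool → ℝ} (hf : ∀ s, f s ∈ Set.Icc (0:ℝ) 1) (β : ℕ → Bool) :
    β ∈ divSet f ↔ ∃ k : ℕ, ∀ N : ℕ, ∃ p q : ℕ, N ≤ p ∧ N ≤ q ∧
      1 / ((k:ℝ) + 1) < |f (seg β p) - f (seg β q)| := by
  have hle : ∀ p q, |f (seg β p) - f (seg β q)| ≤ 1 := by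
    intro p q
    rw [abs_le]
    have h1 := hf (seg β p)
    have h2 := hf (seg β q)
    constructor <;> linarith [h1.1, h1.2, h2.1, h2.2]
  have hin : ∀ (N p : ℕ), BddAbove (Set.range fun q : {n : ℕ // N ≤ n} =>
      |f (seg β p) - f (seg β q.1)|) := by
    rintro N p
    refine ⟨1, ?_⟩
    rintro _ ⟨q, rfl⟩
    exact hle _ _
  have hne : ∀ N : ℕ, Nonempty {n : ℕ // N ≤ n} := fun N => ⟨⟨N, le_rfl⟩⟩
  have hout : ∀ (N : ℕ), BddAbove (Set.range fun p : {n : ℕ // N ≤ n} =>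
      ⨆ q : {n : ℕ // N ≤ n}, |f (seg β p.1) - f (seg β q.1)|) := by
    intro N
    refine ⟨1, ?_⟩
    rintro _ ⟨p, rfl⟩
    have := hne N
    exact ciSup_le fun q => hle _ _
  have hbelow : BddBelow (Set.range fun N : ℕ => ⨆ p : {n : ℕ // N ≤ n},
      ⨆ q : {n : ℕ // N ≤ n}, |f (seg β p.1) - f (seg β q.1)|) := by
    refine ⟨0, ?_⟩
    rintro _ ⟨N, rfl⟩
    exact Real.iSup_nonneg fun p => Real.iSup_nonneg fun q => abs_nonneg _
  show 0 < osc f β ↔ _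
  constructor
  · intro h
    obtain ⟨k, hk⟩ := exists_nat_one_div_lt h
    refine ⟨k, fun N => ?_⟩
    have h1 := hk.trans_le (ciInf_le hbelow N)
    have := hne N
    obtain ⟨p, hp⟩ := exists_lt_of_lt_ciSup h1
    obtain ⟨q, hq⟩ := exists_lt_of_lt_ciSup hp
    exact ⟨p, q, p.2, q.2, hq⟩
  · rintro ⟨k, hk⟩
    refine lt_of_lt_of_le (show (0:ℝ) < 1 / ((k:ℝ) + 1) by positivity) (le_ciInf fun N => ?_)
    obtain ⟨p, q, hp, hq, hlt⟩ := hk N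
    exact le_ciSup_of_le (hout N) ⟨p, hp⟩ (le_ciSup_of_le (hin N p) ⟨q, hq⟩ hlt.le)

lemma notMem_divSet {f : List Bool → ℝ} (hf : ∀ s, f s ∈ Set.Icc (0:ℝ) 1) {β : ℕ → Bool} {L : ℝ}
    (h : Tendsto (fun l => f (seg β l)) atTop (𝓝 L)) : β ∉ divSet f := by
  rw [mem_divSet_iff hf]
  rintro ⟨k, hk⟩
  obtain ⟨N, hN⟩ := Metric.cauchySeq_iff.1 h.cauchySeq (1 / ((k:ℝ) + 1)) (by positivity)
  obtain ⟨p, q, hp, hq, hlt⟩ := hk N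
  have := hN p hp q hq
  rw [Real.dist_eq] at this
  exact lt_asymm this hlt

lemma w_summable : Summable fun n : ℕ => (1/8:ℝ) ^ (n + 1) := by
  have := (summable_geometric_of_lt_one (r := (1/8:ℝ)) (by norm_num) (by norm_num)).mul_right (1/8)
  simpa [pow_succ] using this

lemma w_tsum : ∑' n : ℕ, (1/8:ℝ) ^ (n + 1) = 1/7 := by
  simp only [pow_succ]
  rw [tsum_mul_right, tsum_geometric_of_lt_one (by norm_num) (by norm_num)]
  norm_num

lemma combine {H : ℕ → Set (ℕ → Bool)} (g : ℕ → List Bool → ℝ)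
    (hg : ∀ n, IsMartingale (g n))
    (h1 : ∀ n, ∀ β ∉ H n, ∃ L, Tendsto (fun l => g n (seg β l)) atTop (𝓝 L))
    (h2 : ∀ n, ∀ β ∈ H n, ∀ N, (∃ p ≥ N, g n (seg β p) ≤ 1/8) ∧ ∃ q ≥ N, 7/8 ≤ g n (seg β q)) :
    ∃ f, IsMartingale f ∧ divSet f = ⋃ n, H n := by
  have hb0 : ∀ n s, 0 ≤ g n s := fun n s => ((hg n).1 s).1
  have hb1 : ∀ n s, g n s ≤ 1 := fun n s => ((hg n).1 s).2
  have hle : ∀ n s, (1/8:ℝ) ^ (n + 1) * g n s ≤ (1/8:ℝ) ^ (n + 1) := fun n s =>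
    mul_le_of_le_one_right (by positivity) (hb1 n s)
  have hnn : ∀ n s, 0 ≤ (1/8:ℝ) ^ (n + 1) * g n s := fun n s =>
    mul_nonneg (by positivity) (hb0 n s)
  have hsum : ∀ s, Summable fun n => (1/8:ℝ) ^ (n + 1) * g n s := fun s =>
    Summable.of_nonneg_of_le (fun n => hnn n s) (fun n => hle n s) w_summable
  set f : List Bool → ℝ := fun s => ∑' n, (1/8:ℝ) ^ (n + 1) * g n s with hfdef
  have hfI : ∀ s, f s ∈ Set.Icc (0:ℝ) 1 := by
    intro s
    refine ⟨tsum_nonneg fun n => hnn n s, ?_⟩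
    have := (hsum s).tsum_le_tsum (fun n => hle n s) w_summable
    rw [w_tsum] at this
    exact this.trans (by norm_num)
  refine ⟨f, ⟨hfI, ?_⟩, ?_⟩
  · intro s
    simp only [hfdef]
    rw [← (hsum _).tsum_add (hsum _), ← tsum_div_const]
    congr 1
    funext n
    rw [(hg n).2 s]
    ring
  · ext β
    constructor
    · intro hβ
      by_contra hcon
      simp only [Set.mem_iUnion, not_exists] at hcon
      choose L hL using fun n => h1 n β (hcon n)
      refine notMem_divSet hfI (L := ∑' n, (1/8:ℝ) ^ (n + 1) * L n) ?_ hβ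
      refine tendsto_tsum_of_dominated_convergence w_summable
        (fun n => (hL n).const_mul _) (Eventually.of_forall fun l n => ?_)
      rw [Real.norm_eq_abs, abs_of_nonneg (hnn n _)]
      exact hle n _
    · intro hβ
      classical
      have hex : ∃ n, β ∈ H n := Set.mem_iUnion.1 hβ
      obtain ⟨n, hn, hmin⟩ : ∃ n, β ∈ H n ∧ ∀ j < n, β ∉ H j :=
        ⟨Nat.find hex, Nat.find_spec hex, fun j hj => Nat.find_min hex hj⟩
      have hhead : ∃ L, Tendsto (fun l => ∑ j ∈ Finset.range n,
          (1/8:ℝ) ^ (j + 1) * g j (seg β l)) atTop (𝓝 L) := by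
        have : ∀ j, ∃ L, j < n → Tendsto (fun l => g j (seg β l)) atTop (𝓝 L) := by
          intro j
          by_cases hj : j < n
          · obtain ⟨L, hL⟩ := h1 j β (hmin j hj)
            exact ⟨L, fun _ => hL⟩
          · exact ⟨0, fun h => absurd h hj⟩
        choose L hL using this
        exact ⟨_, tendsto_finsetSum _ fun j hj =>
          (hL j (Finset.mem_range.1 hj)).const_mul _⟩
      obtain ⟨L, hL⟩ := hhead
      set w : ℝ := (1/8:ℝ) ^ (n + 1) with hw
      have hwpos : 0 < w := by positivity
      set head : ℕ → ℝ := fun l => ∑ j ∈ Finset.range n, (1/8:ℝ) ^ (j + 1) * g j (seg β l)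
        with hheadd
      have hdecomp : ∀ l, head l + w * g n (seg β l) ≤ f (seg β l) ∧
          f (seg β l) ≤ head l + w * g n (seg β l) + w / 7 := by
        intro l
        have e := (hsum (seg β l)).sum_add_tsum_nat_add (n + 1)
        rw [Finset.sum_range_succ] at e
        have hs' := (summable_nat_add_iff (n + 1)).2 (hsum (seg β l))
        have t0 : 0 ≤ ∑' i, (1/8:ℝ) ^ (i + (n + 1) + 1) * g (i + (n + 1)) (seg β l) :=
          tsum_nonneg fun i => hnn _ _
        have t1 : ∑' i, (1/8:ℝ) ^ (i + (n + 1) + 1) * g (i + (n + 1)) (seg β l) ≤ w / 7 := by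
          have hs2 : Summable fun i : ℕ => w * (1/8:ℝ) ^ (i + 1) := w_summable.mul_left w
          calc _ ≤ ∑' i : ℕ, w * (1/8:ℝ) ^ (i + 1) := by
                refine hs'.tsum_le_tsum (fun i => ?_) hs2
                refine (hle _ _).trans (le_of_eq ?_)
                rw [hw, ← pow_add]
                congr 1
                omega
            _ = w / 7 := by
                rw [tsum_mul_left, w_tsum]; ring
        simp only [hfdef, hheadd]
        constructor <;> linarith
      obtain ⟨N0, hN0⟩ := Metric.cauchySeq_iff.1 hL.cauchySeq (w / 10) (by positivity)
      rw [mem_divSet_iff hfI]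
      obtain ⟨k, hk⟩ := exists_nat_one_div_lt (show 0 < w / 2 by positivity)
      refine ⟨k, fun N => ?_⟩
      obtain ⟨⟨p, hp, hp'⟩, q, hq, hq'⟩ := h2 n β hn (max N N0)
      refine ⟨q, p, (le_max_left _ _).trans hq, (le_max_left _ _).trans hp, hk.trans ?_⟩
      have hd := hN0 q ((le_max_right _ _).trans hq) p ((le_max_right _ _).trans hp)
      rw [Real.dist_eq, abs_lt] at hd
      have a1 := (hdecomp q).1
      have a2 := (hdecomp p).2
      have b1 : w * (7/8) ≤ w * g n (seg β q) := by gcongr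
      have b2 : w * g n (seg β p) ≤ w * (1/8) := by gcongr
      have hd1 := hd.1
      refine lt_of_lt_of_le ?_ (le_abs_self _)
      linarith

lemma cont_eval (l : ℕ) (G : Set (ℕ → Bool)) :
    Continuous fun p : {f : List Bool → ℝ // IsMartingale f} × ↥G =>
      p.1.1 (seg (p.2 : ℕ → Bool) l) := by
  rw [continuous_iff_continuousAt]
  rintro ⟨f0, β0⟩
  have hc : Continuous fun p : {f : List Bool → ℝ // IsMartingale f} × ↥G =>
      p.1.1 (seg (β0 : ℕ → Bool) l) :=
    (continuous_apply _).comp (continuous_subtype_val.comp continuous_fst)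
  refine hc.continuousAt.congr ?_
  have hopen : IsOpen {p : {f : List Bool → ℝ // IsMartingale f} × ↥G |
      (p.2 : ℕ → Bool) ∈ PiNat.cylinder (β0 : ℕ → Bool) l} :=
    (isOpen_cyl (β0 : ℕ → Bool) l).preimage (continuous_subtype_val.comp continuous_snd)
  filter_upwards [hopen.mem_nhds (PiNat.self_mem_cylinder (β0 : ℕ → Bool) l)] with p hp
  rw [seg_congr hp]

lemma part_one (G : Set (ℕ → Bool)) :
    IsSigma03 {p : {f : List Bool → ℝ // IsMartingale f} × ↥G |
        (p.2 : ℕ → Bool) ∈ divSet p.1.1} := by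
  refine ⟨fun k => ⋂ N : ℕ, ⋃ p : ℕ, ⋃ q : ℕ, ⋃ (_ : N ≤ p), ⋃ (_ : N ≤ q),
    {x | 1 / ((k:ℝ) + 1) < |x.1.1 (seg (x.2 : ℕ → Bool) p) - x.1.1 (seg (x.2 : ℕ → Bool) q)|},
    fun k => ?_, ?_⟩
  · refine IsGδ.iInter_of_isOpen fun N => ?_
    refine isOpen_iUnion fun p => isOpen_iUnion fun q => isOpen_iUnion fun _ =>
      isOpen_iUnion fun _ => ?_
    exact isOpen_lt continuous_const ((cont_eval p G).sub (cont_eval q G)).abs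
  · ext x
    have := mem_divSet_iff x.1.2.1 (x.2 : ℕ → Bool)
    refine this.trans ?_
    simp only [Set.mem_iUnion, Set.mem_iInter, exists_prop]
    rfl

lemma sigma_preimage {X Y : Type*} [TopologicalSpace X] [TopologicalSpace Y] {S : Set Y}
    (h : IsSigma03 S) {φ : X → Y} (hφ : Continuous φ) : IsSigma03 (φ ⁻¹' S) := by
  obtain ⟨g, hg, rfl⟩ := h
  exact ⟨fun n => φ ⁻¹' g n, fun n => (hg n).preimage hφ, Set.preimage_iUnion⟩

lemma gdelta_lift {G : Set (ℕ → Bool)} (hG : IsGδ G) {S : Set ↥G} (hS : IsGδ S) :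
    IsGδ (Subtype.val '' S) := by
  obtain ⟨O, hO, rfl⟩ := isGδ_iff_eq_iInter_nat.1 hS
  choose V hV hVO using fun n => isOpen_induced_iff.1 (hO n)
  have : Subtype.val '' (⋂ n, O n) = G ∩ ⋂ n, V n := by
    ext β
    constructor
    · rintro ⟨x, hx, rfl⟩
      refine ⟨x.2, Set.mem_iInter.2 fun n => ?_⟩
      have := Set.mem_iInter.1 hx n
      rw [← hVO n] at this
      exact this
    · rintro ⟨hβ, hx⟩
      refine ⟨⟨β, hβ⟩, Set.mem_iInter.2 fun n => ?_, rfl⟩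
      rw [← hVO n]
      exact Set.mem_iInter.1 hx n
  rw [this]
  exact hG.inter (IsGδ.iInter_of_isOpen hV)

end DivU

/-- For a Gδ set `𝒢 ⊆ 2^ω` of λ-measure zero, the set
`U = {(f,β) ∈ 𝓜 × 𝒢 : β ∈ D(f)}` is `Σ⁰₃` and its vertical sections are
exactly the `Σ⁰₃` subsets of `𝒢`, i.e. `U` is `𝓜`-universal for them. -/
theorem divergence_universal_sigma03
    (μ : Measure (ℕ → Bool))
    (hμ : ∀ s : List Bool, μ (cyl s) = (1/2 : ℝ≥0∞) ^ s.length)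
    (G : Set (ℕ → Bool)) (hG : IsGδ G) (hG0 : μ G = 0) :
    IsSigma03 {p : {f : List Bool → ℝ // IsMartingale f} × ↥G |
        (p.2 : ℕ → Bool) ∈ divSet p.1.1} ∧
    (∀ f : {f : List Bool → ℝ // IsMartingale f},
        IsSigma03 {β : ↥G | (β : ℕ → Bool) ∈ divSet f.1}) ∧
    (∀ S : Set ↥G, IsSigma03 S →
        ∃ f : {f : List Bool → ℝ // IsMartingale f},
          {β : ↥G | (β : ℕ → Bool) ∈ divSet f.1} = S) := by
  refine ⟨DivU.part_one G, fun f => ?_, ?_⟩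
  · exact DivU.sigma_preimage (DivU.part_one G)
      (φ := fun β : ↥G => (f, β)) (Continuous.prodMk continuous_const continuous_id)
  · rintro S ⟨s, hs, rfl⟩
    have hnull : ∀ n, μ (Subtype.val '' s n) = 0 := fun n =>
      measure_mono_null (by rintro _ ⟨x, -, rfl⟩; exact x.2) hG0
    choose g hg h1 h2 using fun n => DivU.single hμ (DivU.gdelta_lift hG (hs n)) (hnull n)
    obtain ⟨f, hf, hfd⟩ := DivU.combine g hg h1 h2
    refine ⟨⟨f, hf⟩, ?_⟩
    ext β
    show (β : ℕ → Bool) ∈ divSet f ↔ _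
    rw [hfd]
    simp only [Set.mem_iUnion]
    refine exists_congr fun n => ?_
    constructor
    · rintro ⟨x, hx, hxe⟩
      rw [← Subtype.ext hxe]
      exact hx
    · intro h
      exact ⟨β, h, rfl⟩
end

section
/- Let G be a Gδ subset of 2^ω with λ(G) = 0. Then there is a martingale f such that G = D(f) and, for every β ∈ 2^ω, osc(f,β) ∈ {0} ∪ [1/2, 1]. -/
open MeasureTheory Filter Topology
open scoped ENNReal

/-- Recursion along finite binary sequences, extending on the right. -/
def pathAux {α : Type} (start : α) (step : List Bool → α → Bool → α) : List Bool → α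
  | [] => start
  | b :: r => step r.reverse (pathAux start step r) b

/-- Recursion along finite binary sequences, extending on the right. -/
def pathRec {α : Type} (start : α) (step : List Bool → α → Bool → α) (s : List Bool) : α :=
  pathAux start step s.reverse

theorem pathRec_nil {α : Type} (start : α) (step : List Bool → α → Bool → α) :
    pathRec start step [] = start := by simp [pathRec, pathAux]

theorem pathRec_snoc {α : Type} (start : α) (step : List Bool → α → Bool → α)
    (s : List Bool) (b : Bool) :
    pathRec start step (s ++ [b]) = step s (pathRec start step s) b := by
  simp [pathRec, pathAux]

/-- The averaging property alone. -/
def Avg (f : List Bool → ℝ) : Prop :=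
  ∀ s, f s = (f (s ++ [false]) + f (s ++ [true])) / 2

theorem seg_zero (β : ℕ → Bool) : seg β 0 = [] := by simp [seg]

theorem seg_succ (β : ℕ → Bool) (l : ℕ) : seg β (l + 1) = seg β l ++ [β l] := by
  simp only [seg]
  rw [List.ofFn_succ']
  simp [List.concat_eq_append]

theorem seg_length (β : ℕ → Bool) (l : ℕ) : (seg β l).length = l := by simp [seg]

theorem mem_cyl_seg (β γ : ℕ → Bool) (l : ℕ) : γ ∈ cyl (seg β l) ↔ ∀ i < l, γ i = β i := by
  constructor
  · intro h i hi
    have := h ⟨i, by simpa [seg] using hi⟩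
    simpa [seg] using this
  · intro h i
    have hi : i.1 < l := by simpa [seg] using i.2
    rw [List.get_eq_getElem]
    simpa [seg] using h i.1 hi

theorem self_mem_cyl_seg (β : ℕ → Bool) (l : ℕ) : β ∈ cyl (seg β l) :=
  (mem_cyl_seg β β l).2 fun _ _ => rfl

theorem cyl_seg_anti (β : ℕ → Bool) {k l : ℕ} (h : k ≤ l) : cyl (seg β l) ⊆ cyl (seg β k) := by
  intro γ hγ
  rw [mem_cyl_seg] at *
  exact fun i hi => hγ i (by omega)

theorem exists_cyl_subset {U : Set (ℕ → Bool)} (hU : IsOpen U) {β : ℕ → Bool} (hβ : β ∈ U) :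
    ∃ l, cyl (seg β l) ⊆ U := by
  obtain ⟨I, u, hu, hs⟩ := isOpen_pi_iff.1 hU β hβ
  refine ⟨I.sup id + 1, fun γ hγ => hs ?_⟩
  rw [mem_cyl_seg] at hγ
  intro i hi
  have : i ≤ I.sup id := Finset.le_sup (f := id) hi
  rw [hγ i (by omega)]
  exact (hu i hi).2

theorem isClopen_cyl (s : List Bool) : IsClopen (cyl s) := by
  have : cyl s = ⋂ i : Fin s.length, (fun β : ℕ → Bool => β i) ⁻¹' {s.get i} := by
    ext β; simp [cyl]
  rw [this]
  exact isClopen_iInter_of_finite fun i =>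
    (isClopen_discrete {s.get i}).preimage (continuous_apply _)

theorem cyl_nil : cyl [] = Set.univ := by
  ext β; simp [cyl]

theorem mem_cyl_snoc (s : List Bool) (b : Bool) (β : ℕ → Bool) :
    β ∈ cyl (s ++ [b]) ↔ β ∈ cyl s ∧ β s.length = b := by
  constructor
  · intro h
    constructor
    · intro i
      have := h ⟨i.1, by simp⟩
      simpa [List.getElem_append_left] using this
    · have := h ⟨s.length, by simp⟩
      simpa using this
  · rintro ⟨h1, h2⟩ i
    have hi : i.1 < s.length + 1 := by simpa using i.2
    rcases Nat.lt_succ_iff_lt_or_eq.1 hi with h | h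
    · have := h1 ⟨i.1, h⟩
      simpa [List.getElem_append_left, h] using this
    · simp [h, h2]

/-- conditional measure of `U` in cylinders -/
noncomputable def condMeas (μ : Measure (ℕ → Bool)) (U : Set (ℕ → Bool)) (s : List Bool) : ℝ :=
  2 ^ s.length * μ.real (U ∩ cyl s)

theorem avg_condMeas (μ : Measure (ℕ → Bool)) [IsFiniteMeasure μ] (U : Set (ℕ → Bool)) :
    Avg (condMeas μ U) := by
  intro s
  have e : U ∩ cyl s ∩ cyl (s ++ [true]) = U ∩ cyl (s ++ [true]) := by
    ext β; simp only [Set.mem_inter_iff, mem_cyl_snoc]; tauto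
  have e2 : (U ∩ cyl s) \ cyl (s ++ [true]) = U ∩ cyl (s ++ [false]) := by
    ext β; simp only [Set.mem_inter_iff, Set.mem_sdiff, mem_cyl_snoc]
    cases β s.length <;> simp
  have := measureReal_inter_add_sdiff (μ := μ) (s := U ∩ cyl s)
    (isClopen_cyl (s ++ [true])).isOpen.measurableSet
  rw [e, e2] at this
  simp only [condMeas, ← this, List.length_append, List.length_singleton, pow_succ]
  ring

theorem condMeas_nonneg (μ : Measure (ℕ → Bool)) (U : Set (ℕ → Bool)) (s : List Bool) :
    0 ≤ condMeas μ U s := by unfold condMeas; positivity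

theorem condMeas_nil (μ : Measure (ℕ → Bool)) (U : Set (ℕ → Bool)) :
    condMeas μ U [] = μ.real U := by simp [condMeas, cyl_nil]

theorem condMeas_one (μ : Measure (ℕ → Bool))
    (hμ : ∀ s : List Bool, μ (cyl s) = (1/2 : ℝ≥0∞) ^ s.length)
    (U : Set (ℕ → Bool)) (s : List Bool) (h : cyl s ⊆ U) : condMeas μ U s = 1 := by
  rw [condMeas, Set.inter_eq_right.2 h, Measure.real, hμ]
  simp

theorem condMeas_zero (μ : Measure (ℕ → Bool))
    (U : Set (ℕ → Bool)) (s : List Bool) (h : cyl s ⊆ Uᶜ) : condMeas μ U s = 0 := by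
  have : U ∩ cyl s = ∅ := by
    ext β; simp; intro h1 h2; exact h h2 h1
  simp [condMeas, this]

theorem condMeas_ev (μ : Measure (ℕ → Bool))
    (hμ : ∀ s : List Bool, μ (cyl s) = (1/2 : ℝ≥0∞) ^ s.length)
    (U : Set (ℕ → Bool)) (hU : IsClopen U) (β : ℕ → Bool) :
    ∃ N, ∀ l ≥ N, condMeas μ U (seg β l) = condMeas μ U (seg β N) := by
  by_cases h : β ∈ U
  · obtain ⟨N, hN⟩ := exists_cyl_subset hU.isOpen h
    refine ⟨N, fun l hl => ?_⟩
    rw [condMeas_one μ hμ U _ hN, condMeas_one μ hμ U _ ((cyl_seg_anti β hl).trans hN)]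
  · obtain ⟨N, hN⟩ := exists_cyl_subset hU.compl.isOpen h
    refine ⟨N, fun l hl => ?_⟩
    rw [condMeas_zero μ U _ hN, condMeas_zero μ U _ ((cyl_seg_anti β hl).trans hN)]

/-- A nonnegative averaging function at most doubles. -/
theorem Avg.le_two_mul {f : List Bool → ℝ} (hf : Avg f) (h0 : ∀ s, 0 ≤ f s) (s : List Bool)
    (b : Bool) : f (s ++ [b]) ≤ 2 * f s := by
  have := hf s
  have h1 := h0 (s ++ [false])
  have h2 := h0 (s ++ [true])
  cases b <;> linarith

theorem Avg.le_pow {f : List Bool → ℝ} (hf : Avg f) (h0 : ∀ s, 0 ≤ f s) (s : List Bool) :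
    f s ≤ 2 ^ s.length * f [] := by
  induction s using List.reverseRecOn with
  | nil => simp
  | append_singleton s b ih =>
    have := hf.le_two_mul h0 s b
    simp only [List.length_append, List.length_singleton, pow_succ]
    linarith

/-- Drawdown-bounded transform of a nonnegative martingale. -/
theorem drawdown (c : ℝ) (hc : 0 < c) (M : List Bool → ℝ) (hM : Avg M) (h0 : ∀ s, 0 ≤ M s)
    (x : ℝ) (hx : x = Real.exp (-(1 / c))) (hMx : M [] ≤ x) :
    ∃ y : List Bool → ℝ, Avg y ∧ (∀ s, 0 ≤ y s) ∧ y [] = c * (M [] / x) ∧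
      (∀ β p q, p ≤ q → y (seg β p) - c ≤ y (seg β q)) ∧
      (∀ s b, y (s ++ [b]) ≤ y s + 2 * c) ∧
      (∀ s, M s = 1 → 1 ≤ y s) ∧
      (∀ β, (∃ N, ∀ l ≥ N, M (seg β l) = M (seg β N)) →
        ∃ N, ∀ l ≥ N, y (seg β l) = y (seg β N)) := by
  have hxpos : 0 < x := hx ▸ Real.exp_pos _
  let A : List Bool → ℝ := pathRec x (fun s a b => max a (M (s ++ [b])))
  have A0 : A [] = x := pathRec_nil _ _
  have AS : ∀ s b, A (s ++ [b]) = max (A s) (M (s ++ [b])) := fun s b => pathRec_snoc _ _ _ _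
  let Y : List Bool → ℝ := pathRec (M [] / x) (fun s a b => a + (M (s ++ [b]) - M s) / A s)
  have Y0 : Y [] = M [] / x := pathRec_nil _ _
  have YS : ∀ s b, Y (s ++ [b]) = Y s + (M (s ++ [b]) - M s) / A s :=
    fun s b => pathRec_snoc _ _ _ _
  clear_value A Y
  have hAx : ∀ s, x ≤ A s := by
    intro s
    induction s using List.reverseRecOn with
    | nil => rw [A0]
    | append_singleton s b ih => rw [AS]; exact le_max_of_le_left ih
  have hApos : ∀ s, 0 < A s := fun s => hxpos.trans_le (hAx s)
  have hMA : ∀ s, M s ≤ A s := by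
    intro s
    induction s using List.reverseRecOn with
    | nil => rw [A0]; exact hMx
    | append_singleton s b ih => rw [AS]; exact le_max_right _ _
  have hZ : ∀ s b, Y s - M s / A s + (Real.log (A (s ++ [b])) - Real.log (A s)) ≤
      Y (s ++ [b]) - M (s ++ [b]) / A (s ++ [b]) := by
    intro s b
    have hp := hApos s
    have hp' := hApos (s ++ [b])
    rw [YS]
    rcases le_total (M (s ++ [b])) (A s) with h | h
    · rw [AS, max_eq_left h]
      rw [sub_div]; linarith
    · have e : A (s ++ [b]) = M (s ++ [b]) := by rw [AS, max_eq_right h]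
      rw [← Real.log_div hp'.ne' hp.ne', e, div_self (by rw [← e]; exact hp'.ne'), sub_div]
      have := Real.log_le_sub_one_of_pos (x := M (s ++ [b]) / A s) (by rw [← e]; positivity)
      linarith
  have hlogmono : ∀ s b, Real.log (A s) ≤ Real.log (A (s ++ [b])) := by
    intro s b
    apply Real.log_le_log (hApos s)
    rw [AS]; exact le_max_left _ _
  have hZlog : ∀ s, Real.log (A s) - Real.log x ≤ Y s - M s / A s := by
    intro s
    induction s using List.reverseRecOn with
    | nil => rw [A0, Y0]; simp
    | append_singleton s b ih => have := hZ s b; linarith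
  have hZ0 : ∀ s, 0 ≤ Y s - M s / A s := fun s => by
    have := Real.log_le_log hxpos (hAx s)
    have := hZlog s
    linarith
  have hr0 : ∀ s, 0 ≤ M s / A s := fun s => div_nonneg (h0 s) (hApos s).le
  have hr1 : ∀ s, M s / A s ≤ 1 := fun s => (div_le_one (hApos s)).2 (hMA s)
  refine ⟨fun s => c * Y s, ?_, ?_, ?_, ?_, ?_, ?_, ?_⟩
  · intro s
    simp only [YS]
    have := hM s
    have e : (M (s ++ [false]) - M s) / A s + (M (s ++ [true]) - M s) / A s = 0 := by
      rw [← add_div, div_eq_zero_iff]; left; linarith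
    linear_combination (-c / 2) * e
  · intro s
    have := hZ0 s; have := hr0 s
    exact mul_nonneg hc.le (by linarith)
  · simp only [Y0]
  · intro β p q hpq
    have : Y (seg β p) - M (seg β p) / A (seg β p) ≤ Y (seg β q) - M (seg β q) / A (seg β q) := by
      induction q, hpq using Nat.le_induction with
      | base => exact le_rfl
      | succ q hq ih =>
        rw [seg_succ]
        have := hZ (seg β q) (β q)
        have := hlogmono (seg β q) (β q)
        linarith
    have h1 := hr1 (seg β p)
    have h2 := hr0 (seg β q)
    nlinarith
  · intro s b
    have h1 : (M (s ++ [b]) - M s) / A s ≤ 2 := by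
      rw [div_le_iff₀ (hApos s)]
      have := hM.le_two_mul h0 s b
      have := hMA s
      have := h0 s
      linarith
    simp only [YS]
    nlinarith
  · intro s hs
    have h1 := hZlog s
    have h2 : 0 ≤ Real.log (A s) := Real.log_nonneg (hs ▸ hMA s)
    have h3 := hr0 s
    have h4 : Real.log x = -(1 / c) := by rw [hx, Real.log_exp]
    have h5 : 1 / c ≤ Y s := by linarith
    rw [div_le_iff₀ hc] at h5
    linarith
  · rintro β ⟨N, hN⟩
    refine ⟨N, fun l hl => ?_⟩
    have : Y (seg β l) = Y (seg β N) := by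
      induction l, hl using Nat.le_induction with
      | base => rfl
      | succ l hl ih =>
        rw [seg_succ, YS, ← seg_succ, hN (l + 1) (by omega), hN l hl, ih]; simp
    simp only [this]

theorem clopen_cover (μ : Measure (ℕ → Bool)) [IsFiniteMeasure μ] (G : Set (ℕ → Bool))
    (hG : μ G = 0) (e : ℕ → ℝ) (he : ∀ k, 0 < e k) :
    ∃ U : ℕ → Set (ℕ → Bool), (∀ k, IsClopen (U k)) ∧ (∀ k, μ.real (U k) ≤ e k) ∧
      G ⊆ ⋃ k, U k := by
  obtain ⟨U, hGU, hUo, hU⟩ := Set.exists_isOpen_lt_of_lt G (μ := μ) (ENNReal.ofReal (e 0))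
    (by rw [hG]; simpa using he 0)
  obtain ⟨g, hg⟩ := exists_surjective_nat (List Bool)
  let D : ℕ → Set (ℕ → Bool) := fun i => {x | x ∈ cyl (g i) ∧ cyl (g i) ⊆ U}
  have hD : ∀ i, IsClopen (D i) := by
    intro i
    by_cases h : cyl (g i) ⊆ U
    · have : D i = cyl (g i) := by ext x; simp [D, h]
      rw [this]; exact isClopen_cyl _
    · have : D i = ∅ := by ext x; simp [D, h]
      rw [this]; exact isClopen_empty
  have hDU : ∀ i, D i ⊆ U := fun i x hx => hx.2 hx.1
  have hUD : U ⊆ ⋃ i, D i := by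
    intro x hx
    obtain ⟨l, hl⟩ := exists_cyl_subset hUo hx
    obtain ⟨i, hi⟩ := hg (seg x l)
    exact Set.mem_iUnion.2 ⟨i, by rw [hi]; exact self_mem_cyl_seg _ _, by rw [hi]; exact hl⟩
  let C : ℕ → Set (ℕ → Bool) := fun j => ⋃ i ∈ Finset.range j, D i
  have hC : ∀ j, IsClopen (C j) := fun j => (Finset.range j).finite_toSet.isClopen_biUnion
    (fun i _ => hD i)
  have hCmono : Monotone C := by
    intro a b hab
    exact Set.biUnion_subset_biUnion_left (by
      intro i hi; have : i < a := by simpa using hi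
      show i ∈ Finset.range b
      simp; omega)
  have hlim : Tendsto (fun j => μ (U \ C j)) atTop (𝓝 0) := by
    have h1 := tendsto_measure_iInter_atTop (μ := μ) (s := fun j => U \ C j)
      (fun j => (hUo.measurableSet.diff (hC j).isOpen.measurableSet).nullMeasurableSet)
      (fun a b hab => Set.sdiff_subset_sdiff_right (hCmono hab)) ⟨0, measure_ne_top _ _⟩
    have h2 : ⋂ j, U \ C j = ∅ := by
      ext x
      simp only [Set.mem_iInter, Set.mem_sdiff, Set.mem_empty_iff_false, iff_false]
      intro h
      obtain ⟨i, hi⟩ := Set.mem_iUnion.1 (hUD (h 0).1)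
      exact (h (i + 1)).2 (Set.mem_biUnion (x := i) (by simp) hi)
    rwa [h2, measure_empty] at h1
  have hj : ∀ k, ∃ j, k ≤ j ∧ μ (U \ C j) < ENNReal.ofReal (e (k + 1)) := by
    intro k
    have := (hlim.eventually_lt_const (u := ENNReal.ofReal (e (k + 1))) (by simpa using he _)).and
      (eventually_ge_atTop k)
    obtain ⟨j, h1, h2⟩ := this.exists
    exact ⟨j, h2, h1⟩
  choose j hjk hj using hj
  have key : ∀ (A : Set (ℕ → Bool)) (r : ℝ), 0 < r → μ A < ENNReal.ofReal r → μ.real A ≤ r :=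
    fun A r hr h => ENNReal.toReal_le_of_le_ofReal hr.le h.le
  have hCU : ∀ j, C j ⊆ U := fun j => Set.iUnion₂_subset fun i _ => hDU i
  refine ⟨fun k => Nat.casesOn k (C (j 0)) (fun k => C (j (k + 1)) \ C (j k)), ?_, ?_, ?_⟩
  · rintro (_ | k)
    · exact hC _
    · exact (hC _).diff (hC _)
  · rintro (_ | k)
    · exact key _ _ (he _) ((measure_mono (hCU _)).trans_lt hU)
    · exact key _ _ (he _) ((measure_mono (Set.sdiff_subset_sdiff_left (hCU _))).trans_lt (hj k))
  · intro x hx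
    obtain ⟨i, hi⟩ := Set.mem_iUnion.1 (hUD (hGU hx))
    have hex : ∃ k, x ∈ C (j k) :=
      ⟨i + 1, Set.mem_biUnion (x := i) (by have := hjk (i+1); simp; omega) hi⟩
    classical
    have h1 := Nat.find_spec hex
    have h2 := fun m => Nat.find_min hex (m := m)
    generalize Nat.find hex = k at h1 h2
    refine Set.mem_iUnion.2 ⟨k, ?_⟩
    cases k with
    | zero => exact h1
    | succ k => exact ⟨h1, h2 k (by omega)⟩

theorem tendsto_of_almost_mono (a : ℕ → ℝ) (h0 : ∀ l, 0 ≤ a l) (h1 : ∀ l, a l ≤ 1)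
    (h : ∀ δ > 0, ∃ N, ∀ p q, N ≤ p → p ≤ q → a p - δ ≤ a q) : ∃ x, Tendsto a atTop (𝓝 x) := by
  let b : ℕ → ℝ := fun p => ⨅ i : ℕ, a (p + i)
  have bdd : ∀ p, BddBelow (Set.range fun i => a (p + i)) := fun p =>
    ⟨0, by rintro _ ⟨i, rfl⟩; exact h0 _⟩
  have hba : ∀ p, b p ≤ a p := fun p => ciInf_le (bdd p) 0
  have hmono : Monotone b := by
    refine monotone_nat_of_le_succ fun p => le_ciInf fun i => ?_
    have := ciInf_le (bdd p) (i + 1)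
    rwa [show p + (i + 1) = p + 1 + i by ring] at this
  have hb : Tendsto b atTop (𝓝 (⨆ i, b i)) := tendsto_atTop_ciSup hmono
    ⟨1, by rintro _ ⟨i, rfl⟩; exact (hba i).trans (h1 i)⟩
  refine ⟨⨆ i, b i, ?_⟩
  have hd : Tendsto (fun l => a l - b l) atTop (𝓝 0) := by
    rw [Metric.tendsto_atTop]
    intro ε hε
    obtain ⟨N, hN⟩ := h (ε / 2) (by positivity)
    refine ⟨N, fun n hn => ?_⟩
    have : a n - ε / 2 ≤ b n := le_ciInf fun i => hN n (n + i) hn (by omega)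
    have := hba n
    rw [Real.dist_eq, sub_zero, abs_of_nonneg (by linarith)]
    linarith
  have := hd.add hb
  simpa using this

/-- Every null set is captured by a small, everywhere convergent martingale. -/
theorem capture (μ : Measure (ℕ → Bool))
    (hμ : ∀ s : List Bool, μ (cyl s) = (1/2 : ℝ≥0∞) ^ s.length)
    (G : Set (ℕ → Bool)) (hG0 : μ G = 0) (ε : ℝ) (hε : 0 < ε) :
    ∃ m : List Bool → ℝ, Avg m ∧ (∀ s, 0 ≤ m s) ∧ (∀ s, m s ≤ 1 + 1 / 16) ∧ m [] ≤ ε ∧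
      (∀ β, ∃ x, Tendsto (fun l => m (seg β l)) atTop (𝓝 x)) ∧
      (∀ β ∈ G, ∃ N, ∀ l ≥ N, 1 ≤ m (seg β l)) := by
  have : IsFiniteMeasure μ := ⟨by rw [← cyl_nil, hμ]; simp⟩
  -- reduce to `ε ≤ 1`
  wlog hε1 : ε ≤ 1 generalizing ε
  · obtain ⟨m, h1, h2, h3, h4, h5⟩ := this 1 one_pos le_rfl
    exact ⟨m, h1, h2, h3, by linarith, h5⟩
  let c : ℕ → ℝ := fun k => (1 / 64) * (1 / 2) ^ k
  have hc : ∀ k, 0 < c k := fun k => by positivity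
  have hc1 : ∀ k, c k ≤ 1 := fun k => by
    have : ((1:ℝ) / 2) ^ k ≤ 1 := pow_le_one₀ (by norm_num) (by norm_num)
    simp only [c]; linarith
  have hcsum : HasSum c (1 / 32) := by
    have := hasSum_geometric_two.mul_left (1 / 64 : ℝ)
    norm_num at this ⊢
    simpa [c] using this
  let x : ℕ → ℝ := fun k => Real.exp (-(1 / c k))
  have hx : ∀ k, 0 < x k := fun k => Real.exp_pos _
  let e : ℕ → ℝ := fun k => x k * (ε / 2 * (1 / 2) ^ k)
  have hε2 : ∀ k : ℕ, ε / 2 * (1 / 2) ^ k ≤ 1 := fun k => by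
    have h : ((1:ℝ) / 2) ^ k ≤ 1 := pow_le_one₀ (by norm_num) (by norm_num)
    have h' : (0:ℝ) < ((1:ℝ) / 2) ^ k := by positivity
    nlinarith
  obtain ⟨U, hUc, hUe, hGU⟩ := clopen_cover μ G hG0 e (fun k => by have := hx k; positivity)
  have hM0 : ∀ k, condMeas μ (U k) [] ≤ x k := fun k => by
    rw [condMeas_nil]
    exact (hUe k).trans (mul_le_of_le_one_right (hx k).le (hε2 k))
  choose y yavg y0 ynil ydd yjump yone yev using fun k =>
    drawdown (c k) (hc k) (condMeas μ (U k)) (avg_condMeas μ (U k)) (condMeas_nonneg μ (U k))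
      (x k) rfl (hM0 k)
  have ynil' : ∀ k, y k [] ≤ ε / 2 * (1 / 2) ^ k := fun k => by
    rw [ynil, condMeas_nil]
    have h1 : μ.real (U k) / x k ≤ ε / 2 * (1 / 2) ^ k := by
      rw [div_le_iff₀ (hx k), mul_comm]; exact hUe k
    have h2 : 0 ≤ μ.real (U k) / x k := by have := hx k; positivity
    have := hc1 k; have := hc k
    nlinarith
  have hgs : HasSum (fun k : ℕ => ε / 2 * (1 / 2) ^ k) ε := by
    have := hasSum_geometric_two.mul_left (ε / 2)
    rwa [div_mul_cancel₀ _ two_ne_zero] at this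
  have hsum : ∀ s, Summable fun k => y k s := by
    intro s
    refine Summable.of_nonneg_of_le (fun k => y0 k s) (fun k => ?_)
      (hgs.summable.mul_left (2 ^ s.length))
    exact ((yavg k).le_pow (y0 k) s).trans (by gcongr; exact ynil' k)
  let S : List Bool → ℝ := fun s => ∑' k, y k s
  have Savg : Avg S := by
    intro s
    simp only [S]
    rw [← (hsum _).tsum_add (hsum _), ← tsum_div_const]
    exact tsum_congr fun k => yavg k s
  have S0 : ∀ s, 0 ≤ S s := fun s => tsum_nonneg fun k => y0 k s
  have Snil : S [] ≤ ε := hgs.tsum_eq ▸ (hsum _).tsum_le_tsum ynil' hgs.summable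
  have Sjump : ∀ s b, S (s ++ [b]) ≤ S s + 1 / 16 := by
    intro s b
    have h2 : HasSum (fun k => y k s + 2 * c k) (S s + 1 / 16) := by
      have := (hsum s).hasSum.add (hcsum.mul_left 2)
      norm_num at this ⊢
      exact this
    rw [← h2.tsum_eq]
    exact (hsum _).tsum_le_tsum (fun k => yjump k s b) h2.summable
  have Sone : ∀ β ∈ G, ∃ l, 1 ≤ S (seg β l) := by
    intro β hβ
    obtain ⟨k, hk⟩ := Set.mem_iUnion.1 (hGU hβ)
    obtain ⟨l, hl⟩ := exists_cyl_subset (hUc k).isOpen hk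
    refine ⟨l, (yone k _ (condMeas_one μ hμ _ _ hl)).trans ?_⟩
    exact (hsum _).le_tsum k fun i _ => y0 i _
  have Sdd : ∀ β, ∀ δ > 0, ∃ N, ∀ p q, N ≤ p → p ≤ q → S (seg β p) - δ ≤ S (seg β q) := by
    intro β δ hδ
    obtain ⟨K, hK⟩ := ((tendsto_sum_nat_add c).eventually_lt_const hδ).exists
    choose n hn using fun k => yev k β (condMeas_ev μ hμ (U k) (hUc k) β)
    refine ⟨(Finset.range K).sup n, fun p q hp hpq => ?_⟩
    simp only [S]
    rw [← (hsum (seg β p)).sum_add_tsum_nat_add K, ← (hsum (seg β q)).sum_add_tsum_nat_add K]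
    have e1 : ∑ k ∈ Finset.range K, y k (seg β p) = ∑ k ∈ Finset.range K, y k (seg β q) := by
      refine Finset.sum_congr rfl fun k hk => ?_
      have : n k ≤ (Finset.range K).sup n := Finset.le_sup hk
      rw [hn k p (by omega), hn k q (by omega)]
    have e2 : ∑' k, y (k + K) (seg β p) ≤ ∑' k, (y (k + K) (seg β q) + c (k + K)) := by
      refine Summable.tsum_le_tsum (fun k => ?_) ((summable_nat_add_iff K).2 (hsum (seg β p)))
        (((summable_nat_add_iff K).2 (hsum (seg β q))).add
          ((summable_nat_add_iff K).2 hcsum.summable))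
      have := ydd (k + K) β p q hpq
      linarith
    rw [((summable_nat_add_iff K).2 (hsum (seg β q))).tsum_add
          ((summable_nat_add_iff K).2 hcsum.summable)] at e2
    linarith
  clear_value S
  -- freeze the process above one
  let m : List Bool → ℝ := pathRec (S []) (fun s a b => if 1 ≤ a then a else S (s ++ [b]))
  have m0 : m [] = S [] := pathRec_nil _ _
  have mS : ∀ s b, m (s ++ [b]) = if 1 ≤ m s then m s else S (s ++ [b]) :=
    fun s b => pathRec_snoc _ _ _ _
  clear_value m
  have minv : ∀ s, (m s < 1 → m s = S s) ∧ 0 ≤ m s ∧ m s ≤ 1 + 1 / 16 := by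
    intro s
    induction s using List.reverseRecOn with
    | nil => rw [m0]; exact ⟨fun _ => rfl, S0 _, by linarith⟩
    | append_singleton s b ih =>
      rw [mS]
      split_ifs with h
      · exact ⟨fun h' => absurd h (by linarith), ih.2⟩
      · have := ih.1 (by linarith)
        have := Sjump s b
        exact ⟨fun _ => rfl, S0 _, by linarith⟩
  have hfrozen : ∀ β N, 1 ≤ m (seg β N) → ∀ l ≥ N, m (seg β l) = m (seg β N) := by
    intro β N h l hl
    induction l, hl using Nat.le_induction with
    | base => rfl
    | succ l hl ih => rw [seg_succ, mS, ih, if_pos h]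
  refine ⟨m, ?_, fun s => (minv s).2.1, fun s => (minv s).2.2, m0 ▸ Snil, ?_, ?_⟩
  · intro s
    rw [mS, mS]
    split_ifs with h
    · ring
    · rw [(minv s).1 (by linarith)]; exact Savg s
  · intro β
    by_cases h : ∃ N, 1 ≤ m (seg β N)
    · obtain ⟨N, hN⟩ := h
      refine ⟨m (seg β N), tendsto_const_nhds.congr' ?_⟩
      filter_upwards [eventually_ge_atTop N] with l hl
      exact (hfrozen β N hN l hl).symm
    · push Not at h
      have e : ∀ l, m (seg β l) = S (seg β l) := fun l => (minv _).1 (h l)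
      refine tendsto_of_almost_mono _ (fun l => (minv _).2.1) (fun l => (h l).le) ?_
      simp only [e]
      exact Sdd β
  · intro β hβ
    by_contra hcon
    have h : ∀ N, m (seg β N) < 1 := by
      intro N
      by_contra hN
      push Not at hN
      exact hcon ⟨N, fun l hl => by rw [hfrozen β N hN l hl]; exact hN⟩
    obtain ⟨l, hl⟩ := Sone β hβ
    rw [← (minv _).1 (h l)] at hl
    linarith [h l]

theorem osc_inner_le {f : List Bool → ℝ} {β : ℕ → Bool} {N : ℕ} {r : ℝ}
    (h : ∀ p q, N ≤ p → N ≤ q → |f (seg β p) - f (seg β q)| ≤ r) :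
    ⨆ p : {n : ℕ // N ≤ n}, ⨆ q : {n : ℕ // N ≤ n}, |f (seg β p.1) - f (seg β q.1)| ≤ r := by
  have : Nonempty {n : ℕ // N ≤ n} := ⟨⟨N, le_rfl⟩⟩
  exact ciSup_le fun p => ciSup_le fun q => h p.1 q.1 p.2 q.2

theorem osc_inner_nonneg (f : List Bool → ℝ) (β : ℕ → Bool) (N : ℕ) :
    0 ≤ ⨆ p : {n : ℕ // N ≤ n}, ⨆ q : {n : ℕ // N ≤ n}, |f (seg β p.1) - f (seg β q.1)| :=
  Real.iSup_nonneg fun _ => Real.iSup_nonneg fun _ => abs_nonneg _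

theorem osc_le {f : List Bool → ℝ} {β : ℕ → Bool} (N : ℕ) {r : ℝ}
    (h : ∀ p q, N ≤ p → N ≤ q → |f (seg β p) - f (seg β q)| ≤ r) : osc f β ≤ r :=
  (ciInf_le ⟨0, by rintro _ ⟨N, rfl⟩; exact osc_inner_nonneg f β N⟩ N).trans (osc_inner_le h)

theorem mart_abs_le {f : List Bool → ℝ} (hf : IsMartingale f) (s t : List Bool) :
    |f s - f t| ≤ 1 := by
  have h1 := hf.1 s
  have h2 := hf.1 t
  rw [abs_le]
  exact ⟨by linarith [h1.1, h2.2], by linarith [h1.2, h2.1]⟩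

theorem osc_le_one {f : List Bool → ℝ} (hf : IsMartingale f) (β : ℕ → Bool) : osc f β ≤ 1 :=
  osc_le 0 fun _ _ _ _ => mart_abs_le hf _ _

theorem osc_eq_zero {f : List Bool → ℝ} (_hf : IsMartingale f) {β : ℕ → Bool} {x : ℝ}
    (h : Tendsto (fun l => f (seg β l)) atTop (𝓝 x)) : osc f β = 0 := by
  apply le_antisymm
  · refine le_of_forall_pos_le_add fun ε hε => ?_
    obtain ⟨N, hN⟩ := Metric.cauchySeq_iff.1 h.cauchySeq ε hε
    rw [zero_add]
    refine osc_le N fun p q hp hq => ?_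
    have := hN p hp q hq
    rw [Real.dist_eq] at this
    exact this.le
  · exact Real.iInf_nonneg fun N => osc_inner_nonneg f β N

theorem le_osc {f : List Bool → ℝ} (hf : IsMartingale f) {β : ℕ → Bool} {r : ℝ}
    (h : ∀ N, ∃ p ≥ N, ∃ q ≥ N, r ≤ |f (seg β p) - f (seg β q)|) : r ≤ osc f β := by
  refine le_ciInf fun N => ?_
  obtain ⟨p, hp, q, hq, hr⟩ := h N
  have : Nonempty {n : ℕ // N ≤ n} := ⟨⟨N, le_rfl⟩⟩
  refine hr.trans ?_
  have b1 : ∀ p : {n : ℕ // N ≤ n}, BddAbove (Set.range fun q : {n : ℕ // N ≤ n} =>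
      |f (seg β p.1) - f (seg β q.1)|) := fun p =>
    ⟨1, by rintro _ ⟨q, rfl⟩; exact mart_abs_le hf _ _⟩
  have b2 : BddAbove (Set.range fun p : {n : ℕ // N ≤ n} => ⨆ q : {n : ℕ // N ≤ n},
      |f (seg β p.1) - f (seg β q.1)|) :=
    ⟨1, by rintro _ ⟨p, rfl⟩; exact ciSup_le fun q => mart_abs_le hf _ _⟩
  exact (le_ciSup (b1 ⟨p, hp⟩) ⟨q, hq⟩).trans (le_ciSup b2 ⟨p, hp⟩)

/-- main lemma: for every Gδ set `G ⊆ 2^ω` of λ-measure zero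
there is a martingale `f` with `G = D(f)` and `osc(f,β) ∈ {0} ∪ [1/2,1]` for
every `β`. -/
theorem gdelta_null_divergence_with_large_osc
    (μ : Measure (ℕ → Bool))
    (hμ : ∀ s : List Bool, μ (cyl s) = (1/2 : ℝ≥0∞) ^ s.length)
    (G : Set (ℕ → Bool)) (hG : IsGδ G) (hG0 : μ G = 0) :
    ∃ f : List Bool → ℝ, IsMartingale f ∧ G = divSet f ∧
      ∀ β : ℕ → Bool, osc f β ∈ ({0} : Set ℝ) ∪ Set.Icc (1/2 : ℝ) 1 := by
  classical
  obtain ⟨O, hO, hGO⟩ := isGδ_iff_eq_iInter_nat.1 hG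
  have hcap : ∀ t : List Bool, ∃ m : List Bool → ℝ, Avg m ∧ (∀ s, 0 ≤ m s) ∧
      (∀ s, m s ≤ 1 + 1 / 16) ∧ m t ≤ 1 / 8 ∧
      (∀ β, ∃ x, Tendsto (fun l => m (seg β l)) atTop (𝓝 x)) ∧
      (∀ β ∈ G, ∃ N, ∀ l ≥ N, 1 ≤ m (seg β l)) := by
    intro t
    obtain ⟨m, h1, h2, h3, h4, h5⟩ := capture μ hμ G hG0 (1 / 8 / 2 ^ t.length) (by positivity)
    refine ⟨m, h1, h2, h3, (h1.le_pow h2 t).trans ?_, h5⟩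
    rw [le_div_iff₀ (by positivity)] at h4
    linarith
  choose m mavg m0 m1 mt mlim mG using hcap
  -- phase slope, phase value, switching condition
  let κ : List Bool → ℝ → ℝ := fun t a => (1 - a) / (1 - m t t)
  let v : ℕ × List Bool × ℝ → List Bool → ℝ :=
    fun σ s => σ.2.2 + κ σ.2.1 σ.2.2 * (m σ.2.1 s - m σ.2.1 σ.2.1)
  let flip : ℕ → ℝ → ℝ := fun n x => if Even n then x else 1 - x
  let sw : ℕ × List Bool × ℝ → List Bool → Prop := fun σ s => 1 ≤ m σ.2.1 s ∧ cyl s ⊆ O σ.1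
  let st : List Bool → ℕ × List Bool × ℝ := pathRec (0, [], 0) (fun s σ b =>
    if sw σ (s ++ [b]) then (σ.1 + 1, s ++ [b], 1 - v σ (s ++ [b])) else σ)
  have st0 : st [] = (0, [], 0) := pathRec_nil _ _
  have stS : ∀ s b, st (s ++ [b]) = if sw (st s) (s ++ [b]) then
      ((st s).1 + 1, s ++ [b], 1 - v (st s) (s ++ [b])) else st s := fun s b =>
    pathRec_snoc _ _ _ _
  clear_value st
  have hκ : ∀ t a, -(1 / 8) ≤ a → a ≤ 0 → 0 ≤ κ t a ∧ κ t a ≤ 9 / 7 ∧ κ t a * (1 - m t t) = 1 - a := by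
    intro t a h1 h2
    have h3 := mt t
    have h4 := m0 t t
    refine ⟨div_nonneg (by linarith) (by linarith), ?_, div_mul_cancel₀ _ (by linarith)⟩
    rw [div_le_iff₀ (by linarith)]
    linarith
  have hv : ∀ σ : ℕ × List Bool × ℝ, -(1 / 8) ≤ σ.2.2 → σ.2.2 ≤ 0 → ∀ s,
      -(1 / 2) ≤ v σ s ∧ v σ s ≤ 1 + 1 / 8 ∧ (1 ≤ m σ.2.1 s → 1 ≤ v σ s) := by
    intro σ h1 h2 s
    obtain ⟨k0, k1, k2⟩ := hκ σ.2.1 σ.2.2 h1 h2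
    have h3 := mt σ.2.1
    have h4 := m0 σ.2.1 s
    have h5 := m1 σ.2.1 s
    have h6 := m0 σ.2.1 σ.2.1
    simp only [v]
    refine ⟨by nlinarith, by nlinarith, fun h => by nlinarith⟩
  have hst : ∀ s, -(1 / 8) ≤ (st s).2.2 ∧ (st s).2.2 ≤ 0 := by
    intro s
    induction s using List.reverseRecOn with
    | nil => rw [st0]; norm_num
    | append_singleton s b ih =>
      rw [stS]
      split_ifs with h
      · have := hv (st s) ih.1 ih.2 (s ++ [b])
        exact ⟨by linarith [this.2.1], by linarith [this.2.2 h.1]⟩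
      · exact ih
  let f : List Bool → ℝ := fun s => flip (st s).1 (v (st s) s)
  have hfS : ∀ s b, f (s ++ [b]) = flip (st s).1 (v (st s) (s ++ [b])) := by
    intro s b
    simp only [f]
    rw [stS]
    split_ifs with h
    · simp only [flip, Nat.even_add_one, v]
      split_ifs <;> simp
    · rfl
  have favg : Avg f := by
    intro s
    rw [hfS, hfS]
    have := mavg (st s).2.1 s
    simp only [f, flip, v]
    split_ifs
    · rw [this]; ring
    · rw [this]; ring
  have hfr : ∀ s, -(1 / 2) ≤ f s ∧ f s ≤ 3 / 2 := by
    intro s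
    have := hv (st s) (hst s).1 (hst s).2 s
    simp only [f, flip]
    split_ifs
    · exact ⟨this.1, by linarith [this.2.1]⟩
    · exact ⟨by linarith [this.2.1], by linarith [this.1]⟩
  -- dichotomy along a path
  have hstep : ∀ β l, (st (seg β l)).1 ≤ (st (seg β (l + 1))).1 ∧
      (st (seg β (l + 1))).1 ≤ (st (seg β l)).1 + 1 := by
    intro β l
    rw [seg_succ, stS]
    split_ifs <;> simp
  have hmono : ∀ β, Monotone fun l => (st (seg β l)).1 := fun β =>
    monotone_nat_of_le_succ fun l => (hstep β l).1
  -- bounded case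
  have hB : ∀ β, (∃ n, ∀ l, (st (seg β l)).1 ≤ n) →
      β ∉ G ∧ ∃ x, Tendsto (fun l => f (seg β l)) atTop (𝓝 x) := by
    rintro β ⟨n, hn⟩
    obtain ⟨N, hN⟩ : ∃ N, ∀ l ≥ N, (st (seg β l)).1 = (st (seg β N)).1 := by
      obtain ⟨N, hN⟩ := WellFoundedGT.monotone_chain_condition (α := Fin (n + 1))
        ⟨fun l => ⟨(st (seg β l)).1, Nat.lt_succ_of_le (hn l)⟩, fun a b h => hmono β h⟩
      exact ⟨N, fun l hl => (congrArg Fin.val (hN l hl)).symm⟩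
    have hns : ∀ l ≥ N, ¬ sw (st (seg β l)) (seg β (l + 1)) := by
      intro l hl h
      have h1 := hN (l + 1) (by omega)
      have h2 := hN l hl
      rw [seg_succ] at h
      rw [seg_succ, stS, if_pos h] at h1
      simp at h1
      omega
    have hconst : ∀ l ≥ N, st (seg β l) = st (seg β N) := by
      intro l hl
      induction l, hl using Nat.le_induction with
      | base => rfl
      | succ l hl ih =>
        have := hns l hl
        rw [seg_succ] at this ⊢
        rw [stS, if_neg this, ih]
    constructor
    · intro hβ
      obtain ⟨N1, hN1⟩ := mG (st (seg β N)).2.1 β hβ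
      have hβO : β ∈ O (st (seg β N)).1 := by
        rw [hGO] at hβ; exact Set.mem_iInter.1 hβ _
      obtain ⟨N2, hN2⟩ := exists_cyl_subset (hO _) hβO
      refine hns (N + N1 + N2) (by omega) ?_
      rw [hconst _ (by omega)]
      exact ⟨hN1 _ (by omega), (cyl_seg_anti β (by omega)).trans hN2⟩
    · obtain ⟨x, hx⟩ := mlim (st (seg β N)).2.1 β
      have h1 : Tendsto (fun l => v (st (seg β N)) (seg β l)) atTop
          (𝓝 ((st (seg β N)).2.2 + κ (st (seg β N)).2.1 (st (seg β N)).2.2 *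
            (x - m (st (seg β N)).2.1 (st (seg β N)).2.1))) :=
        ((hx.sub_const _).const_mul _).const_add _
      have h2 : ∃ x, Tendsto (fun l => flip (st (seg β N)).1 (v (st (seg β N)) (seg β l)))
          atTop (𝓝 x) := by
        simp only [flip]
        split_ifs
        · exact ⟨_, h1⟩
        · exact ⟨_, h1.const_sub 1⟩
      obtain ⟨x, hx⟩ := h2
      refine ⟨x, hx.congr' ?_⟩
      filter_upwards [eventually_ge_atTop N] with l hl
      simp only [f, hconst l hl]
  -- unbounded case
  have hU : ∀ β, (¬ ∃ n, ∀ l, (st (seg β l)).1 ≤ n) → ∀ n, ∃ l, (st (seg β l)).1 = n ∧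
      sw (st (seg β l)) (seg β (l + 1)) := by
    intro β h n
    push Not at h
    have hex := h n
    have h1 := Nat.find_spec hex
    have h2 := fun k => Nat.find_min hex (m := k)
    generalize Nat.find hex = k at h1 h2
    cases k with
    | zero => rw [seg_zero, st0] at h1; simp at h1
    | succ l =>
      have h3 := h2 l (by omega)
      have h4 := hstep β l
      refine ⟨l, by omega, ?_⟩
      by_contra hc
      rw [seg_succ] at hc
      rw [seg_succ, stS, if_neg hc] at h1
      exact h3 h1
  have hUG : ∀ β, (¬ ∃ n, ∀ l, (st (seg β l)).1 ≤ n) → β ∈ G := by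
    intro β h
    rw [hGO]
    refine Set.mem_iInter.2 fun n => ?_
    obtain ⟨l, hl, hs⟩ := hU β h n
    rw [← hl]
    exact hs.2 (self_mem_cyl_seg _ _)
  have hlarge : ∀ β, (¬ ∃ n, ∀ l, (st (seg β l)).1 ≤ n) → ∀ N, ∃ p ≥ N, ∃ q ≥ N,
      1 ≤ f (seg β p) ∧ f (seg β q) ≤ 0 := by
    intro β h N
    have hle : ∀ n, ∃ l ≥ N, (st (seg β l)).1 = (st (seg β N)).1 + n ∧
        sw (st (seg β l)) (seg β (l + 1)) := by
      intro n
      -- reach the required phase after stage `N`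
      obtain ⟨l, hl, hs⟩ := hU β h ((st (seg β N)).1 + n)
      by_cases hlN : N ≤ l
      · exact ⟨l, hlN, hl, hs⟩
      · exfalso
        have h1 : (st (seg β (l + 1))).1 ≤ (st (seg β N)).1 := hmono β (by omega)
        have h2 : (st (seg β (l + 1))).1 = (st (seg β l)).1 + 1 := by
          rw [seg_succ] at hs ⊢
          rw [stS, if_pos hs]
        omega
    have hval : ∀ l, sw (st (seg β l)) (seg β (l + 1)) →
        1 ≤ v (st (seg β l)) (seg β (l + 1)) := fun l hs =>
      (hv _ (hst _).1 (hst _).2 _).2.2 hs.1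
    obtain ⟨p, hp, hp1, hp2⟩ := hle (st (seg β N)).1
    obtain ⟨q, hq, hq1, hq2⟩ := hle ((st (seg β N)).1 + 1)
    refine ⟨p + 1, by omega, q + 1, by omega, ?_, ?_⟩
    · have := hval p hp2
      rw [seg_succ] at this ⊢
      rw [hfS, hp1]
      simpa [flip] using this
    · have := hval q hq2
      rw [seg_succ] at this ⊢
      rw [hfS, hq1]
      have ho : ¬ Even ((st (seg β N)).1 + ((st (seg β N)).1 + 1)) := by
        rw [Nat.not_even_iff_odd]; exact ⟨(st (seg β N)).1, by ring⟩
      simp only [flip, if_neg ho]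
      linarith
  let F : List Bool → ℝ := fun s => (f s + 1 / 2) / 2
  have hF : IsMartingale F := by
    refine ⟨fun s => ?_, fun s => ?_⟩
    · have := hfr s
      exact ⟨by simp only [F]; linarith, by simp only [F]; linarith⟩
    · simp only [F]
      linarith [favg s]
  have hosc : ∀ β, (β ∉ G ∧ osc F β = 0) ∨ (β ∈ G ∧ 1 / 2 ≤ osc F β ∧ osc F β ≤ 1) := by
    intro β
    by_cases h : ∃ n, ∀ l, (st (seg β l)).1 ≤ n
    · left
      obtain ⟨h1, x, hx⟩ := hB β h
      exact ⟨h1, osc_eq_zero hF ((hx.add_const (1 / 2)).div_const 2)⟩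
    · right
      refine ⟨hUG β h, le_osc hF fun N => ?_, osc_le_one hF β⟩
      obtain ⟨p, hp, q, hq, h1, h2⟩ := hlarge β h N
      refine ⟨p, hp, q, hq, ?_⟩
      refine le_trans ?_ (le_abs_self _)
      simp only [F]
      linarith
  refine ⟨F, hF, ?_, fun β => ?_⟩
  · ext β
    simp only [divSet, Set.mem_ofPred_eq]
    rcases hosc β with ⟨h1, h2⟩ | ⟨h1, h2, h3⟩
    · simp [h1, h2]
    · simp only [h1, true_iff]; linarith
  · rcases hosc β with ⟨h1, h2⟩ | ⟨h1, h2, h3⟩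
    · left; simp [h2]
    · right; exact ⟨h2, h3⟩
end

section
/- The set 𝓢 of sequences of everywhere converging martingales having a subsequence whose associated functions converge pointwise to zero, 𝓢 := {(f_k)_{k∈ℕ} ∈ 𝓟^ℕ : there exists γ ∈ ω^ω such that for every β ∈ 2^ω, lim_{i→∞} ψ(f_{γ(i)})(β) = 0}, is Σ¹₂-complete: 𝓢 is a Σ¹₂ subset of ([0,1]^{2^{<ω}})^ℕ (i.e., 𝓢 is the projection of a coanalytic subset of ([0,1]^{2^{<ω}})^ℕ × ω^ω), and for every subset Q of 2^ω which is the projection to 2^ω of a coanalytic subset of 2^ω × ω^ω, there is a continuous map g : 2^ω → 𝓜^ℕ with Q = g⁻¹(𝓢). -/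
open MeasureTheory Filter Topology
open scoped ENNReal

/-- The compact space `𝓜` of martingales, as a subspace of `[0,1]^{2^{<ω}}`. -/
abbrev Mart := {f : List Bool → ℝ // IsMartingale f}

/-- The set `𝓟` of everywhere converging martingales. -/
def Pconv : Set Mart := {f | ∀ β : ℕ → Bool, osc f.1 β = 0}

/-- `𝓢`: sequences of everywhere converging martingales with a subsequence
whose associated functions converge pointwise to zero. -/
def Ssub : Set (ℕ → Mart) :=
  {F | (∀ k, F k ∈ Pconv) ∧
    ∃ γ : ℕ → ℕ, ∀ β : ℕ → Bool,
      Tendsto (fun i => psi (F (γ i)).1 β) atTop (𝓝 (0:ℝ))}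


lemma seg_cont (l : ℕ) : Continuous (fun p : (List Bool → ℝ) × (ℕ → Bool) => p.1 (seg p.2 l)) := by
  have h : Continuous (fun q : (Fin l → Bool) × (List Bool → ℝ) => q.2 (List.ofFn q.1)) := by
    rw [continuous_prod_of_discrete_left]
    intro a
    exact continuous_apply (List.ofFn a)
  have h2 : Continuous (fun p : (List Bool → ℝ) × (ℕ → Bool) => ((fun i : Fin l => p.2 i), p.1)) := by
    fun_prop
  exact h.comp h2

lemma osc_meas : Measurable (fun p : (List Bool → ℝ) × (ℕ → Bool) => osc p.1 p.2) := by
  unfold osc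
  refine Measurable.iInf fun N => Measurable.iSup fun p => Measurable.iSup fun q => ?_
  exact ((seg_cont p.1).measurable.sub (seg_cont q.1).measurable).abs

lemma psi_meas : Measurable (fun p : (List Bool → ℝ) × (ℕ → Bool) => psi p.1 p.2) := by
  unfold psi
  exact (StronglyMeasurable.limUnder (fun l => (seg_cont l).measurable.stronglyMeasurable)).measurable

lemma mart_closed : IsClosed {f : List Bool → ℝ | IsMartingale f} := by
  have : {f : List Bool → ℝ | IsMartingale f} =
    (⋂ s, {f : List Bool → ℝ | f s ∈ Set.Icc (0:ℝ) 1}) ∩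
    ⋂ s, {f : List Bool → ℝ | f s = (f (s ++ [false]) + f (s ++ [true])) / 2} := by
    ext f; simp [IsMartingale]
  rw [this]
  refine IsClosed.inter (isClosed_iInter fun s => ?_) (isClosed_iInter fun s => ?_)
  · exact isClosed_Icc.preimage (continuous_apply s)
  · exact isClosed_eq (by fun_prop) (by fun_prop)

instance : PolishSpace Mart := mart_closed.polishSpace



instance : PolishSpace Bool :=
  (IsClosedEmbedding.of_continuous_injective_isClosedMap (f := Bool.toNat)
    continuous_of_discreteTopology (by decide) (fun _ _ => isClosed_discrete _)).polishSpace

lemma part1 : ∃ D : Set ((ℕ → Mart) × (ℕ → ℕ)), IsCoanalytic D ∧ Ssub = Prod.fst '' D := by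
  refine ⟨{p | ∀ β : ℕ → Bool, (∀ k, osc (p.1 k).1 β = 0) ∧
    Tendsto (fun i => psi (p.1 (p.2 i)).1 β) atTop (𝓝 (0:ℝ))}, ?_, ?_⟩
  · unfold IsCoanalytic
    have hm : MeasurableSet {q : ((ℕ → Mart) × (ℕ → ℕ)) × (ℕ → Bool) |
        (∀ k, osc (q.1.1 k).1 q.2 = 0) ∧
        Tendsto (fun i => psi (q.1.1 (q.1.2 i)).1 q.2) atTop (𝓝 (0:ℝ))} := by
      rw [Set.ofPred_and]
      apply MeasurableSet.inter
      · rw [Set.ofPred_forall]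
        refine MeasurableSet.iInter fun k => ?_
        have hc : Continuous (fun q : ((ℕ → Mart) × (ℕ → ℕ)) × (ℕ → Bool) =>
          ((q.1.1 k).1, q.2)) := by fun_prop
        exact (osc_meas.comp hc.measurable) (measurableSet_singleton 0)
      · refine measurableSet_tendsto (𝓝 (0:ℝ)) fun i => ?_
        have h1 : Continuous (fun q : ℕ × (ℕ → Mart) => q.2 q.1) := by
          rw [continuous_prod_of_discrete_left]
          intro a
          fun_prop
        have h2 : Continuous (fun q : ((ℕ → Mart) × (ℕ → ℕ)) × (ℕ → Bool) =>
          (q.1.2 i, q.1.1)) := by fun_prop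
        have h3 := h1.comp h2
        have hc : Continuous (fun q : ((ℕ → Mart) × (ℕ → ℕ)) × (ℕ → Bool) =>
          ((q.1.1 (q.1.2 i)).1, q.2)) :=
          (continuous_subtype_val.comp h3).prodMk continuous_snd
        exact psi_meas.comp hc.measurable
    have := hm.compl.analyticSet.image_of_continuous continuous_fst
    convert this using 1
    ext p
    simp only [Set.mem_compl_iff, Set.mem_ofPred_eq, Set.mem_image, Prod.exists, not_forall]
    constructor
    · rintro ⟨β, h⟩
      exact ⟨p.1, p.2, β, h, rfl⟩
    · rintro ⟨a, b, β, h, rfl⟩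
      exact ⟨β, h⟩
  · ext F
    simp only [Ssub, Pconv, Set.mem_ofPred_eq, Set.mem_image, Prod.exists]
    constructor
    · rintro ⟨h, γ, h2⟩
      exact ⟨F, γ, fun β => ⟨fun k => h k β, h2 β⟩, rfl⟩
    · rintro ⟨F', γ, h, rfl⟩
      exact ⟨fun k β => (h β).1 k, γ, fun β => (h β).2⟩

/-- Agreement of two sequences on the first `n` coordinates. -/
def agree (n : ℕ) (x y : ℕ → Bool) : Prop := ∀ i < n, x i = y i

lemma agree.symm {n : ℕ} {x y : ℕ → Bool} (h : agree n x y) : agree n y x :=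
  fun i hi => (h i hi).symm

lemma agree.trans {n : ℕ} {x y z : ℕ → Bool} (h : agree n x y) (h' : agree n y z) : agree n x z :=
  fun i hi => (h i hi).trans (h' i hi)

lemma agree.mono {n m : ℕ} {x y : ℕ → Bool} (h : agree n x y) (hm : m ≤ n) : agree m x y :=
  fun i hi => h i (hi.trans_le hm)

lemma count_agree {n : ℕ} {x y : ℕ → Bool} (h : agree n x y) :
    Nat.count (fun i => x i = true) n = Nat.count (fun i => y i = true) n := by
  rw [Nat.count_eq_card_filter_range, Nat.count_eq_card_filter_range]
  congr 1
  apply Finset.filter_congr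
  intro i hi
  rw [h i (Finset.mem_range.1 hi)]

lemma nth_agree {x y : ℕ → Bool} {i : ℕ} (hx : {i | x i = true}.Infinite)
    (h : agree (Nat.nth (fun i => x i = true) i + 1) x y) :
    Nat.nth (fun i => y i = true) i = Nat.nth (fun i => x i = true) i := by
  have h1 : x (Nat.nth (fun i => x i = true) i) = true :=
    Nat.nth_mem_of_infinite (p := fun i => x i = true) hx i
  have h2 : y (Nat.nth (fun i => x i = true) i) = true := by
    rw [← h _ (Nat.lt_succ_self _)]; exact h1
  have h3 := Nat.nth_count (p := fun i => y i = true) h2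
  rw [← count_agree (h.mono (Nat.le_succ _)),
    Nat.count_nth_of_infinite (p := fun i => x i = true) hx] at h3
  exact h3

open Classical in
/-- Indicator sequence of the range of `σ`. -/
noncomputable def rg (σ : ℕ → ℕ) : ℕ → Bool := fun n => decide (n ∈ Set.range σ)

lemma rg_iff {σ : ℕ → ℕ} {n : ℕ} : rg σ n = true ↔ n ∈ Set.range σ := by simp [rg]

lemma count_rg {σ : ℕ → ℕ} (hσ : StrictMono σ) (i : ℕ) :
    Nat.count (fun n => rg σ n = true) (σ i) = i := by
  rw [Nat.count_eq_card_filter_range]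
  have : (Finset.range (σ i)).filter (fun n => rg σ n = true) = (Finset.range i).image σ := by
    ext n
    simp only [Finset.mem_filter, Finset.mem_range, rg_iff, Finset.mem_image, Set.mem_range]
    constructor
    · rintro ⟨h, j, rfl⟩
      exact ⟨j, hσ.lt_iff_lt.1 h, rfl⟩
    · rintro ⟨j, h, rfl⟩
      exact ⟨hσ h, j, rfl⟩
  rw [this, Finset.card_image_of_injective _ hσ.injective, Finset.card_range]

lemma nth_rg {σ : ℕ → ℕ} (hσ : StrictMono σ) (i : ℕ) :
    Nat.nth (fun n => rg σ n = true) i = σ i := by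
  have := Nat.nth_count (p := fun n => rg σ n = true) (n := σ i) (rg_iff.2 ⟨i, rfl⟩)
  rwa [count_rg hσ] at this

lemma analytic_R (A : Set ((ℕ → Bool) × (ℕ → Bool))) (hA : AnalyticSet A) :
    ∃ R : ℕ → (ℕ → Bool) → (ℕ → Bool) → (ℕ → Bool) → Prop,
      (∀ n α δ E α' δ' E', agree (n+1) α α' → agree (n+1) δ δ' → agree (n+1) E E' →
        R n α δ E → R n α' δ' E') ∧
      ∀ α δ, (α, δ) ∈ A ↔ ∃ E, ∃ᶠ n in atTop, R n α δ E := by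
  rw [AnalyticSet] at hA
  rcases hA with rfl | ⟨f, hf, rfl⟩
  · exact ⟨fun _ _ _ _ => False, by simp, by simp⟩
  let h : (ℕ → Bool) → ℕ → ℕ := fun E i => (Nat.unpair (Nat.nth (fun n => E n = true) i)).2
  refine ⟨fun n α δ E => E n = true ∧ ∃ E', agree (n+1) E E' ∧ agree (n+1) α (f (h E')).1 ∧
    agree (n+1) δ (f (h E')).2, ?_, ?_⟩
  · rintro n α δ E α' δ' E' h1 h2 h3 ⟨h4, E1, h5, h6, h7⟩
    refine ⟨?_, E1, h3.symm.trans h5, h1.symm.trans h6, h2.symm.trans h7⟩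
    rw [← h3 n (Nat.lt_succ_self n)]; exact h4
  · intro α δ
    constructor
    · rintro ⟨ε, hε⟩
      obtain ⟨σ, hσ, hσε⟩ := extraction_forall_of_frequently
        (P := fun i k => (Nat.unpair k).2 = ε i) (fun i => by
          rw [Filter.frequently_atTop]
          intro a
          exact ⟨Nat.pair a (ε i), Nat.left_le_pair _ _, by simp⟩)
      have hh : h (rg σ) = ε := by
        funext i
        simp only [h, nth_rg hσ, hσε]
      refine ⟨rg σ, ?_⟩
      rw [Filter.frequently_atTop]
      intro a
      refine ⟨σ a, hσ.le_apply, rg_iff.2 ⟨a, rfl⟩, rg σ, fun i _ => rfl, ?_, ?_⟩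
      · rw [hh, hε]; exact fun i _ => rfl
      · rw [hh, hε]; exact fun i _ => rfl
    · rintro ⟨E, hE⟩
      have hinf : {i | E i = true}.Infinite := by
        rw [← Nat.frequently_atTop_iff_infinite]
        exact hE.mono fun n hn => hn.1
      obtain ⟨φ, hφ, hR⟩ := extraction_of_frequently_atTop hE
      choose h0 E' h1 h2 h3 using hR
      have hlim : Tendsto (fun m => h (E' m)) atTop (𝓝 (h E)) := by
        rw [tendsto_pi_nhds]
        intro i
        apply tendsto_const_nhds.congr'
        filter_upwards [eventually_ge_atTop (Nat.nth (fun n => E n = true) i)] with m hm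
        simp only [h]
        rw [nth_agree hinf ((h1 m).mono (Nat.succ_le_succ (hm.trans hφ.le_apply)))]
      have hlim2 : Tendsto (fun m => f (h (E' m))) atTop (𝓝 (f (h E))) :=
        (hf.tendsto _).comp hlim
      have hlim3 : Tendsto (fun m => f (h (E' m))) atTop (𝓝 (α, δ)) := by
        rw [nhds_prod_eq]
        apply Tendsto.prodMk
        · rw [tendsto_pi_nhds]
          intro i
          apply tendsto_const_nhds.congr'
          filter_upwards [eventually_ge_atTop i] with m hm
          exact h2 m i (Nat.lt_succ_of_le (hm.trans hφ.le_apply))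
        · rw [tendsto_pi_nhds]
          intro i
          apply tendsto_const_nhds.congr'
          filter_upwards [eventually_ge_atTop i] with m hm
          exact h3 m i (Nat.lt_succ_of_le (hm.trans hφ.le_apply))
      exact ⟨h E, tendsto_nhds_unique hlim2 hlim3⟩

lemma exists_s : ∃ s : ℕ → ℕ → Bool, ∀ j δ, ∃ᶠ k in atTop, agree j (s k) δ := by
  refine ⟨fun k => TopologicalSpace.denseSeq (ℕ → Bool) (Nat.unpair k).2, fun j δ => ?_⟩
  have hop : IsOpen {x : ℕ → Bool | agree j x δ} := by
    have : {x : ℕ → Bool | agree j x δ} = ⋂ i ∈ Finset.range j, (fun x : ℕ → Bool => x i) ⁻¹' {δ i} := by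
      ext x; simp [agree]
    rw [this]
    exact isOpen_biInter_finset fun i _ => (isOpen_discrete _).preimage (continuous_apply i)
  obtain ⟨x, hx, m, rfl⟩ := (TopologicalSpace.denseRange_denseSeq (ℕ → Bool)).inter_open_nonempty _ hop
    ⟨δ, fun i _ => rfl⟩
  rw [Filter.frequently_atTop]
  intro a
  exact ⟨Nat.pair a m, Nat.left_le_pair _ _, by simpa using hx⟩

/-- Interleaving of three sequences. -/
def join3 (δ E B : ℕ → Bool) : ℕ → Bool := fun m =>
  if m % 3 = 0 then δ (m / 3) else if m % 3 = 1 then E (m / 3) else B (m / 3)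

/-- The clopen condition. -/
def CC (s : ℕ → ℕ → Bool) (R : ℕ → (ℕ → Bool) → (ℕ → Bool) → (ℕ → Bool) → Prop)
    (k : ℕ) (α δ E B : ℕ → Bool) : Prop :=
  B k = true ∧ (Nat.count (fun n => B n = true) k = 0 ∨
    (agree (Nat.count (fun n => B n = true) k) (s k) δ ∧
      ∃ n, Nat.count (fun n => B n = true) k ≤ n ∧ n ≤ k ∧ R n α δ E))

lemma CC_agree {s : ℕ → ℕ → Bool} {R : ℕ → (ℕ → Bool) → (ℕ → Bool) → (ℕ → Bool) → Prop}
    (hR : ∀ n α δ E α' δ' E', agree (n+1) α α' → agree (n+1) δ δ' → agree (n+1) E E' →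
        R n α δ E → R n α' δ' E') {k : ℕ} {α δ E B α' δ' E' B' : ℕ → Bool}
    (h1 : agree (k+1) α α') (h2 : agree (k+1) δ δ') (h3 : agree (k+1) E E')
    (h4 : agree (k+1) B B') (h : CC s R k α δ E B) : CC s R k α' δ' E' B' := by
  obtain ⟨ha, hb⟩ := h
  refine ⟨by rw [← h4 k (Nat.lt_succ_self k)]; exact ha, ?_⟩
  rw [← count_agree (h4.mono (Nat.le_succ _))]
  rcases hb with hb | ⟨hb, n, hn1, hn2, hn3⟩
  · exact Or.inl hb
  · refine Or.inr ⟨hb.trans (h2.mono ((hn1.trans hn2).trans (Nat.le_succ _))), n, hn1, hn2, ?_⟩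
    exact hR n _ _ _ _ _ _ (h1.mono (by omega)) (h2.mono (by omega)) (h3.mono (by omega)) hn3

lemma CC_main {s : ℕ → ℕ → Bool} (hs : ∀ j δ, ∃ᶠ k in atTop, agree j (s k) δ)
    {R : ℕ → (ℕ → Bool) → (ℕ → Bool) → (ℕ → Bool) → Prop}
    {A : Set ((ℕ → Bool) × (ℕ → Bool))}
    (hA : ∀ α δ, (α, δ) ∈ A ↔ ∃ E, ∃ᶠ n in atTop, R n α δ E) (α : ℕ → Bool) :
    (∃ δ, (α, δ) ∉ A) ↔ ∃ γ : ℕ → ℕ, ∀ δ E B, ∀ᶠ i in atTop, ¬ CC s R (γ i) α δ E B := by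
  constructor
  · rintro ⟨δ', hδ'⟩
    obtain ⟨γ, hγ, hγs⟩ := extraction_forall_of_frequently
      (P := fun i k => agree i (s k) δ') (fun i => hs i δ')
    refine ⟨γ, fun δ E B => ?_⟩
    by_contra hcon
    rw [Filter.not_eventually] at hcon
    simp only [not_not] at hcon
    apply hδ'
    have hinf : {n | B n = true}.Infinite := by
      rw [← Nat.frequently_atTop_iff_infinite]
      exact hγ.tendsto_atTop.frequently (hcon.mono fun i hi => hi.1)
    have key : ∀ N, ∃ i, N ≤ i ∧ N < Nat.count (fun n => B n = true) (γ i) ∧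
        CC s R (γ i) α δ E B := by
      intro N
      obtain ⟨i, hi1, hi2⟩ := Filter.frequently_atTop.1 hcon
        (max N (Nat.nth (fun n => B n = true) (N+1)))
      refine ⟨i, (le_max_left _ _).trans hi1, ?_, hi2⟩
      have h1 : Nat.nth (fun n => B n = true) (N+1) ≤ γ i :=
        ((le_max_right _ _).trans hi1).trans hγ.le_apply
      have h2 := Nat.count_monotone (fun n => B n = true) h1
      rw [Nat.count_nth_of_infinite (p := fun n => B n = true) hinf] at h2
      omega
    have heq : δ = δ' := by
      funext n
      obtain ⟨i, h1, h2, h3, h4 | ⟨h4, -⟩⟩ := key (n+1)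
      · omega
      · rw [← h4 n (by omega)]
        exact hγs i n (by omega)
    subst heq
    rw [hA]
    refine ⟨E, ?_⟩
    rw [Filter.frequently_atTop]
    intro N
    obtain ⟨i, h1, h2, h3, h4 | ⟨h4, n, h5, h6, h7⟩⟩ := key N
    · omega
    · exact ⟨n, by omega, h7⟩
  · rintro ⟨γ, hγ⟩
    by_contra hcon
    push Not at hcon
    by_cases hk : ∃ k, ∃ᶠ i in atTop, γ i = k
    · obtain ⟨k, hk⟩ := hk
      obtain ⟨i, hi1, hi2⟩ := (hk.and_eventually
        (hγ (fun _ => false) (fun _ => false) (fun n => decide (n = k)))).exists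
      apply hi2
      refine ⟨by simp [hi1], Or.inl ?_⟩
      rw [Nat.count_eq_card_filter_range, Finset.card_eq_zero, Finset.filter_eq_empty_iff]
      intro n hn
      simp only [Finset.mem_range] at hn
      simp only [decide_eq_true_eq]
      omega
    · push Not at hk
      have ht : Tendsto γ atTop atTop := by
        rw [tendsto_atTop]
        intro b
        have : ∀ᶠ i in atTop, ∀ k ∈ Finset.range b, γ i ≠ k := by
          rw [Filter.eventually_all_finset]
          exact fun k _ => hk k
        filter_upwards [this] with i hi
        by_contra hlt
        exact hi (γ i) (Finset.mem_range.2 (by omega)) rfl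
      obtain ⟨φ, hφ, hγφ⟩ := strictMono_subseq_of_tendsto_atTop ht
      obtain ⟨δ, φ1, hφ1, hδ⟩ := CompactSpace.tendsto_subseq (fun i => s (γ (φ i)))
      obtain ⟨E, hE⟩ := (hA α δ).1 (hcon δ)
      have hmono : StrictMono (fun i => γ (φ (φ1 i))) := hγφ.comp hφ1
      obtain ⟨ι, hι, hιP⟩ := extraction_forall_of_eventually
        (P := fun j i => agree j (s (γ (φ (φ1 i)))) δ ∧
          ∃ n, j ≤ n ∧ n ≤ γ (φ (φ1 i)) ∧ R n α δ E) (by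
        intro j
        apply Filter.Eventually.and
        · have : ∀ᶠ i in atTop, ∀ m ∈ Finset.range j, s (γ (φ (φ1 i))) m = δ m := by
            rw [Filter.eventually_all_finset]
            intro m _
            have := (tendsto_pi_nhds.1 hδ m)
            rw [nhds_discrete, tendsto_pure] at this
            exact this
          filter_upwards [this] with i hi m hm
          exact hi m (Finset.mem_range.2 hm)
        · obtain ⟨n, hn, hRn⟩ := Filter.frequently_atTop.1 hE j
          filter_upwards [eventually_ge_atTop n] with i hi
          exact ⟨n, hn, hi.trans hmono.le_apply, hRn⟩)
      have hθ : StrictMono (fun i => φ (φ1 (ι i))) := hφ.comp (hφ1.comp hι)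
      have hb : StrictMono (fun i => γ (φ (φ1 (ι i)))) := hmono.comp hι
      obtain ⟨j, hj⟩ := (hθ.tendsto_atTop.eventually
        (hγ δ E (rg (fun i => γ (φ (φ1 (ι i))))))).exists
      apply hj
      have hc := count_rg hb j
      refine ⟨rg_iff.2 ⟨j, rfl⟩, Or.inr ?_⟩
      rw [hc]
      exact hιP j

lemma join3_0 (δ E B : ℕ → Bool) : (fun n => join3 δ E B (3*n)) = δ := by
  funext n; simp [join3]
lemma join3_1 (δ E B : ℕ → Bool) : (fun n => join3 δ E B (3*n+1)) = E := by
  funext n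
  have h1 : (3*n+1) % 3 = 1 := by omega
  have h2 : (3*n+1) / 3 = n := by omega
  simp [join3, h1, h2]
lemma join3_2 (δ E B : ℕ → Bool) : (fun n => join3 δ E B (3*n+2)) = B := by
  funext n
  have h1 : (3*n+2) % 3 = 2 := by omega
  have h2 : (3*n+2) / 3 = n := by omega
  simp [join3, h1, h2]

/-- Averages of `φ` over extensions by `n` bits. -/
noncomputable def avg (φ : (ℕ → Bool) → ℝ) : ℕ → List Bool → ℝ
  | 0, t => φ (fun i => t.getD i false)
  | n+1, t => (avg φ n (t ++ [false]) + avg φ n (t ++ [true])) / 2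

lemma avg_mem {φ : (ℕ → Bool) → ℝ} (hφ : ∀ x, φ x ∈ Set.Icc (0:ℝ) 1) (n : ℕ) (t : List Bool) :
    avg φ n t ∈ Set.Icc (0:ℝ) 1 := by
  induction n generalizing t with
  | zero => exact hφ _
  | succ n ih =>
    have h1 := ih (t ++ [false])
    have h2 := ih (t ++ [true])
    simp only [avg, Set.mem_Icc] at *
    constructor <;> linarith [h1.1, h1.2, h2.1, h2.2]

/-- The martingale of a function depending on the first `L` coordinates. -/
noncomputable def mart (φ : (ℕ → Bool) → ℝ) (L : ℕ) (t : List Bool) : ℝ :=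
  avg φ (L - t.length) t

lemma mart_is {φ : (ℕ → Bool) → ℝ} (hφ : ∀ x, φ x ∈ Set.Icc (0:ℝ) 1) {L : ℕ}
    (hL : ∀ x y, agree L x y → φ x = φ y) : IsMartingale (mart φ L) := by
  refine ⟨fun s => avg_mem hφ _ _, fun s => ?_⟩
  by_cases h : s.length < L
  · obtain ⟨n, hn⟩ : ∃ n, L - s.length = n + 1 := ⟨L - s.length - 1, by omega⟩
    have h2 : L - (s.length + 1) = n := by omega
    simp [mart, hn, h2, avg]
  · have h1 : L - s.length = 0 := by omega
    have h2 : L - (s.length + 1) = 0 := by omega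
    have h3 : ∀ b, φ (fun i => s.getD i false) = φ (fun i => (s ++ [b]).getD i false) := by
      intro b
      apply hL
      intro i hi
      simp only
      rw [List.getD_append _ _ _ _ (by omega)]
    simp only [mart, List.length_append, List.length_singleton, h1, h2, avg]
    rw [← h3, ← h3]
    ring

lemma mart_seg {φ : (ℕ → Bool) → ℝ} {L : ℕ}
    (hL : ∀ x y, agree L x y → φ x = φ y) (β : ℕ → Bool) {l : ℕ} (hl : L ≤ l) :
    mart φ L (seg β l) = φ β := by
  have h1 : L - l = 0 := by omega
  simp only [mart, seg, List.length_ofFn, h1, avg]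
  apply hL
  intro i hi
  have : i < l := by omega
  simp [List.getD, this]

lemma mart_osc {φ : (ℕ → Bool) → ℝ} {L : ℕ}
    (hL : ∀ x y, agree L x y → φ x = φ y) (β : ℕ → Bool) : osc (mart φ L) β = 0 := by
  unfold osc
  apply le_antisymm
  · refine (ciInf_le ⟨0, ?_⟩ L).trans ?_
    · rintro _ ⟨N, rfl⟩
      exact Real.iSup_nonneg fun p => Real.iSup_nonneg fun q => abs_nonneg _
    · refine Real.iSup_le (fun p => Real.iSup_le (fun q => ?_) le_rfl) le_rfl
      rw [mart_seg hL β p.2, mart_seg hL β q.2]; simp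
  · exact Real.iInf_nonneg fun N => Real.iSup_nonneg fun p => Real.iSup_nonneg fun q => abs_nonneg _

lemma mart_psi {φ : (ℕ → Bool) → ℝ} {L : ℕ}
    (hL : ∀ x y, agree L x y → φ x = φ y) (β : ℕ → Bool) : psi (mart φ L) β = φ β := by
  apply Tendsto.limUnder_eq
  apply tendsto_const_nhds.congr'
  filter_upwards [eventually_ge_atTop L] with l hl
  exact (mart_seg hL β hl).symm

/-- The graph embedding of Baire space into Cantor space. -/
def gr (ε : ℕ → ℕ) : ℕ → Bool := fun n => decide (ε (Nat.unpair n).1 = (Nat.unpair n).2)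

lemma gr_cont : Continuous gr := by
  refine continuous_pi fun n => ?_
  exact (continuous_of_discreteTopology (f := fun m : ℕ => decide (m = (Nat.unpair n).2))).comp
    (continuous_apply (Nat.unpair n).1)

lemma gr_inj : Function.Injective gr := by
  intro x y h
  funext i
  have := congrFun h (Nat.pair i (x i))
  simp [gr] at this
  exact this.symm

open Classical in
lemma part2 (Q : Set (ℕ → Bool))
    (hQ : ∃ D : Set ((ℕ → Bool) × (ℕ → ℕ)), IsCoanalytic D ∧ Q = Prod.fst '' D) :
    ∃ g : (ℕ → Bool) → (ℕ → Mart), Continuous g ∧ Q = g ⁻¹' Ssub := by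
  obtain ⟨D, hD, rfl⟩ := hQ
  let A : Set ((ℕ → Bool) × (ℕ → Bool)) :=
    (Prod.snd ⁻¹' (Set.range gr)ᶜ) ∪ (fun p : (ℕ → Bool) × (ℕ → ℕ) => (p.1, gr p.2)) '' Dᶜ
  have hAan : AnalyticSet A := by
    have h1 : AnalyticSet (Prod.snd ⁻¹' (Set.range gr)ᶜ : Set ((ℕ → Bool) × (ℕ → Bool))) := by
      apply MeasurableSet.analyticSet
      apply measurable_snd
      exact ((gr_cont.measurableEmbedding gr_inj).measurableSet_range).compl
    have h2 : AnalyticSet ((fun p : (ℕ → Bool) × (ℕ → ℕ) => (p.1, gr p.2)) '' Dᶜ) :=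
      AnalyticSet.image_of_continuous hD
        (continuous_fst.prodMk (gr_cont.comp continuous_snd))
    have h3 := AnalyticSet.iUnion (s := fun b : Bool => cond b
      (Prod.snd ⁻¹' (Set.range gr)ᶜ : Set ((ℕ → Bool) × (ℕ → Bool)))
      ((fun p : (ℕ → Bool) × (ℕ → ℕ) => (p.1, gr p.2)) '' Dᶜ)) (by
        rintro (_ | _)
        · exact h2
        · exact h1)
    rw [← Set.union_eq_iUnion] at h3
    exact h3
  have hAQ : ∀ α, α ∈ Prod.fst '' D ↔ ∃ δ, (α, δ) ∉ A := by
    intro α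
    constructor
    · rintro ⟨⟨a, ε⟩, h, rfl⟩
      refine ⟨gr ε, ?_⟩
      rintro (h1 | ⟨⟨b, ε'⟩, h2, h3⟩)
      · exact h1 ⟨ε, rfl⟩
      · simp only [Prod.mk.injEq] at h3
        obtain ⟨rfl, h4⟩ := h3
        rw [gr_inj h4] at h2
        exact h2 h
    · rintro ⟨δ, hδ⟩
      by_cases hr : δ ∈ Set.range gr
      · obtain ⟨ε, rfl⟩ := hr
        refine ⟨(α, ε), ?_, rfl⟩
        by_contra hn
        exact hδ (Or.inr ⟨(α, ε), hn, rfl⟩)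
      · exact absurd (Or.inl hr) hδ
  obtain ⟨R, hR, hRA⟩ := analytic_R A hAan
  obtain ⟨s, hs⟩ := exists_s
  let C : ℕ → (ℕ → Bool) → (ℕ → Bool) → Prop := fun k α β =>
    CC s R k α (fun n => β (3*n)) (fun n => β (3*n+1)) (fun n => β (3*n+2))
  have hC : ∀ k α β α' β', agree (3*k+3) α α' → agree (3*k+3) β β' → C k α β → C k α' β' := by
    intro k α β α' β' h1 h2 h
    exact CC_agree hR (h1.mono (by omega)) (fun i hi => h2 _ (by omega))
      (fun i hi => h2 _ (by omega)) (fun i hi => h2 _ (by omega)) h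
  let φ : ℕ → (ℕ → Bool) → (ℕ → Bool) → ℝ := fun k α β => if C k α β then 1 else 0
  have hφ01 : ∀ k α β, φ k α β ∈ Set.Icc (0:ℝ) 1 := by
    intro k α β
    simp only [φ]
    split_ifs <;> simp
  have hφL : ∀ k α β β', agree (3*k+3) β β' → φ k α β = φ k α β' := by
    intro k α β β' h
    have : C k α β ↔ C k α β' :=
      ⟨hC k α β α β' (fun _ _ => rfl) h, hC k α β' α β (fun _ _ => rfl) h.symm⟩
    simp only [φ, this]
  have hφα : ∀ k α α', agree (3*k+3) α α' → φ k α = φ k α' := by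
    intro k α α' h
    funext β
    have : C k α β ↔ C k α' β :=
      ⟨hC k α β α' β h (fun _ _ => rfl), hC k α' β α β h.symm (fun _ _ => rfl)⟩
    simp only [φ, this]
  refine ⟨fun α k => ⟨mart (φ k α) (3*k+3), mart_is (hφ01 k α) (hφL k α)⟩, ?_, ?_⟩
  · refine continuous_pi fun k => Continuous.subtype_mk (continuous_pi fun t => ?_) _
    apply IsLocallyConstant.continuous
    rw [IsLocallyConstant.iff_eventually_eq]
    intro α
    have : ∀ᶠ α' in 𝓝 α, ∀ i ∈ Finset.range (3*k+3), α' i = α i := by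
      rw [Filter.eventually_all_finset]
      intro i _
      have h0 : Tendsto (fun x : ℕ → Bool => x i) (𝓝 α) (𝓝 (α i)) :=
        (continuous_apply i).tendsto α
      rw [nhds_discrete Bool, tendsto_pure] at h0
      exact h0
    filter_upwards [this] with α' hα'
    rw [hφα k α' α fun i hi => hα' i (Finset.mem_range.2 hi)]
  · ext α
    rw [hAQ α, CC_main hs hRA α]
    simp only [Set.mem_preimage, Ssub, Pconv, Set.mem_ofPred_eq]
    have h1 : ∀ k β, osc (mart (φ k α) (3*k+3)) β = 0 := fun k β => mart_osc (hφL k α) β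
    have h2 : ∀ k β, psi (mart (φ k α) (3*k+3)) β = φ k α β := fun k β => mart_psi (hφL k α) β
    simp only [h1, h2, implies_true, true_and]
    have h3 : ∀ (γ : ℕ → ℕ) β, Tendsto (fun i => φ (γ i) α β) atTop (𝓝 0) ↔
        ∀ᶠ i in atTop, ¬ C (γ i) α β := by
      intro γ β
      constructor
      · intro h
        filter_upwards [h.eventually (gt_mem_nhds (zero_lt_one))] with i hi hc
        simp [φ, hc] at hi
      · intro h
        apply tendsto_const_nhds.congr'
        filter_upwards [h] with i hi
        simp [φ, hi]
    simp only [h3]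
    refine exists_congr fun γ => ⟨fun h β => h _ _ _, fun h δ E B => ?_⟩
    have := h (join3 δ E B)
    simp only [C, join3_0, join3_1, join3_2] at this
    exact this

/-- `𝓢` is `Σ¹₂`-complete: it is the projection of a coanalytic
set, and every `Σ¹₂` subset of `2^ω` is the preimage of `𝓢` under some
continuous `g : 2^ω → 𝓜^ℕ`. -/
theorem Ssub_sigma12_complete :
    (∃ D : Set ((ℕ → Mart) × (ℕ → ℕ)), IsCoanalytic D ∧ Ssub = Prod.fst '' D) ∧
    ∀ Q : Set (ℕ → Bool),
      (∃ D : Set ((ℕ → Bool) × (ℕ → ℕ)), IsCoanalytic D ∧ Q = Prod.fst '' D) →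
      ∃ g : (ℕ → Bool) → (ℕ → Mart), Continuous g ∧ Q = g ⁻¹' Ssub := by
  exact ⟨part1, part2⟩
end
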